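/- arXiv:1401.7598 — 6 statements merged into one kernel-verified Lean document; each statement's English description precedes it below -/
import Mathlib

section
/- (Mann's theorem) If A and B are sets of nonnegative integers each containing 0, then σ(A+B) ≥ min(1, σ(A) + σ(B)). -/
open Pointwise Filter

/-- The counting function of a set of nonnegative integers: the number of
positive elements of `A` that are at most `n`. -/
noncomputable def countingFn (A : Set ℕ) (n : ℕ) : ℕ := (A ∩ Set.Icc 1 n).ncard

/-- The Shnirel'man density `σ(A) = inf_{n ≥ 1} A(n)/n`. -/
noncomputable def shnirelmanDensity (A : Set ℕ) : ℝ :=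
  ⨅ n : {n : ℕ // 0 < n}, (countingFn A (n : ℕ) : ℝ) / ((n : ℕ) : ℝ)

/-- The lower asymptotic density `d_L(A) = liminf_{n → ∞} A(n)/n`. -/
noncomputable def lowerDensity (A : Set ℕ) : ℝ :=
  liminf (fun n : ℕ => (countingFn A n : ℝ) / (n : ℝ)) atTop

/-- `A` is an additive basis of order `h`: every nonnegative integer is the
sum of exactly `h` elements of `A` (with repetitions allowed). -/
def IsBasisOfOrder (A : Set ℕ) (h : ℕ) : Prop :=
  ∀ n : ℕ, ∃ c : Fin h → ℕ, (∀ i, c i ∈ A) ∧ ∑ i, c i = n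

/-- `A` is an asymptotic basis of order `h`: every sufficiently large integer
is the sum of exactly `h` elements of `A` (with repetitions allowed). -/
def IsAsymptoticBasisOfOrder (A : Set ℕ) (h : ℕ) : Prop :=
  ∀ᶠ n : ℕ in atTop, ∃ c : Fin h → ℕ, (∀ i, c i ∈ A) ∧ ∑ i, c i = n

/-- A minimal asymptotic basis of order `h` is an asymptotic basis of order `h`
no proper subset of which is an asymptotic basis of order `h`. -/
def IsMinimalAsymptoticBasisOfOrder (A : Set ℕ) (h : ℕ) : Prop :=
  IsAsymptoticBasisOfOrder A h ∧
    ∀ B : Set ℕ, B ⊂ A → ¬ IsAsymptoticBasisOfOrder B h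

/-- A maximal asymptotic nonbasis of order `h` is a set that is not an
asymptotic basis of order `h`, but such that adjoining any element outside it
produces an asymptotic basis of order `h`. -/
def IsMaximalAsymptoticNonbasisOfOrder (A : Set ℕ) (h : ℕ) : Prop :=
  ¬ IsAsymptoticBasisOfOrder A h ∧
    ∀ b : ℕ, b ∉ A → IsAsymptoticBasisOfOrder (A ∪ {b}) h

lemma countingFn_add_countingFn_le {A B : Set ℕ} {m : ℕ} (hA : 0 ∈ A) (hB : 0 ∈ B)
    (hm : m ∉ A + B) : countingFn A m + countingFn B m ≤ m - 1 := by
  have hmA : m ∉ A := fun h => hm ⟨m, h, 0, hB, by simp⟩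
  have hmB : m ∉ B := fun h => hm ⟨0, hA, m, h, by simp⟩
  have hinj : Set.InjOn (fun b => m - b) (B ∩ Set.Icc 1 m) := by
    rintro x ⟨-, hx⟩ y ⟨-, hy⟩ hxy
    simp only [Set.mem_Icc] at *
    omega
  have hdisj : Disjoint (A ∩ Set.Icc 1 m) ((fun b => m - b) '' (B ∩ Set.Icc 1 m)) := by
    rw [Set.disjoint_left]
    rintro _ ⟨hx, -⟩ ⟨b, ⟨hb, hb'⟩, rfl⟩
    exact hm ⟨_, hx, b, hb, Nat.sub_add_cancel hb'.2⟩
  rw [countingFn, countingFn, ← hinj.ncard_image,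
    ← Set.ncard_union_eq hdisj (Set.toFinite _) (Set.toFinite _)]
  calc _ ≤ (Set.Icc 1 (m - 1)).ncard := by
        refine Set.ncard_le_ncard ?_ (Set.toFinite _)
        rintro x (⟨hx, hx'⟩ | ⟨b, ⟨hb, hb'⟩, rfl⟩)
        · have : x ≠ m := fun h => hmA (h ▸ hx)
          simp only [Set.mem_Icc] at *
          omega
        · have : b ≠ m := fun h => hmB (h ▸ hb)
          simp only [Set.mem_Icc] at *
          omega
    _ = m - 1 := by simp

lemma countingFn_add_ncard_Ioc (A : Set ℕ) {k n : ℕ} (hk : k ≤ n) :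
    countingFn A k + (A ∩ Set.Ioc k n).ncard = countingFn A n := by
  rw [countingFn, countingFn, ← Set.ncard_union_eq _ (Set.toFinite _) (Set.toFinite _),
    ← Set.inter_union_distrib_left]
  · congr 2
    ext x
    simp only [Set.mem_union, Set.mem_Icc, Set.mem_Ioc]
    omega
  · rw [Set.disjoint_left]
    rintro x ⟨-, hx⟩ ⟨-, hx'⟩
    simp only [Set.mem_Icc, Set.mem_Ioc] at *
    omega

/-- An element `b` of `B` obstructs the normality of `A + B` on `[0, n]` if `a + b + n` is, for
some `a ∈ A`, a sum of two numbers at most `n` outside `A + B`. -/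
def IsObstruction (A B : Set ℕ) (n b : ℕ) : Prop :=
  b ∈ B ∧ ∃ a ∈ A, ∃ f ≤ n, ∃ g ≤ n, f ∉ A + B ∧ g ∉ A + B ∧ a + b + n = f + g

/-- The numbers at most `n` outside `A + B` occurring in a representation that makes `b` an
obstruction. -/
def obstructionGaps (A B : Set ℕ) (n b : ℕ) : Set ℕ :=
  {f | f ≤ n ∧ f ∉ A + B ∧ ∃ a ∈ A, ∃ g ≤ n, g ∉ A + B ∧ a + b + n = f + g}

/-- The new summands which, adjoined to `B`, fill the gaps `obstructionGaps A B n b`. -/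
def gapSummands (A B : Set ℕ) (n b : ℕ) : Set ℕ :=
  {x | ∃ f ∈ obstructionGaps A B n b, x + f = b + n}

section Extension

variable {A B : Set ℕ} {n b : ℕ}

lemma lt_of_mem_obstructionGaps (hb : b ∈ B) {f : ℕ} (hf : f ∈ obstructionGaps A B n b) :
    f < n := by
  obtain ⟨hfn, -, a, ha, g, -, hg, h⟩ := hf
  refine lt_of_le_of_ne hfn ?_
  rintro rfl
  exact hg ⟨a, ha, b, hb, by simp only; omega⟩

lemma lt_of_mem_gapSummands (hb : b ∈ B) {x : ℕ} (hx : x ∈ gapSummands A B n b) : b < x := by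
  obtain ⟨f, hf, h⟩ := hx
  have := lt_of_mem_obstructionGaps hb hf
  omega

lemma disjoint_gapSummands : Disjoint B (gapSummands A B n b) := by
  rw [Set.disjoint_left]
  rintro x hx ⟨f, ⟨-, -, a, ha, g, -, hg, h⟩, hf⟩
  exact hg ⟨a, ha, x, hx, by simp only; omega⟩

lemma mem_add_union_gapSummands_iff {x : ℕ} (hx : x ≤ n) :
    x ∈ A + (B ∪ gapSummands A B n b) ↔ x ∈ A + B ∨ x ∈ obstructionGaps A B n b := by
  rw [Set.add_union, Set.mem_union]
  constructor
  · rintro (h | ⟨a, ha, y, ⟨f, ⟨hfn, hf, -⟩, hyf⟩, rfl⟩)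
    · exact .inl h
    · by_cases hmem : a + y ∈ A + B
      · exact .inl hmem
      · exact .inr ⟨hx, hmem, a, ha, f, hfn, hf, by simp only; omega⟩
  · rintro (h | ⟨hxn, hxAB, a, ha, g, hgn, hg, h⟩)
    · exact .inl h
    · exact .inr ⟨a, ha, b + n - g, ⟨g, ⟨hgn, hg, a, ha, x, hxn, hxAB, by omega⟩, by omega⟩,
        by simp only; omega⟩

/-- The gaps in `(n - m, n]` filled by the extension are at most as many as the new summands in
`[1, m]`. -/
lemma ncard_obstructionGaps_le {m : ℕ} (hb : b ∈ B)
    (hmin : ∀ x, IsObstruction A B n x → b ≤ x) (hmn : m ≤ n)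
    (hm : m ∉ A + (B ∪ gapSummands A B n b)) (hsmall : ∀ c < m, c ≤ b → c ∈ A + B) :
    (obstructionGaps A B n b ∩ Set.Ioc (n - m) n).ncard ≤ countingFn (gapSummands A B n b) m := by
  rw [mem_add_union_gapSummands_iff hmn, not_or] at hm
  refine Set.ncard_le_ncard_of_injOn (fun f => b + n - f) ?_ ?_ (Set.toFinite _)
  · rintro f ⟨hf, hf'⟩
    have hfn := lt_of_mem_obstructionGaps hb hf
    simp only [Set.mem_Ioc] at hf'
    refine ⟨⟨f, hf, by omega⟩, ?_⟩
    simp only [Set.mem_Icc]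
    refine ⟨by omega, ?_⟩
    by_contra! hlt
    obtain ⟨a, ha, y, hy, hay⟩ := hsmall (m + f - n) (by omega) (by omega)
    simp only at hay
    have hle := hmin y ⟨hy, a, ha, m, hmn, f, hf.1, hm.1, hf.2.1, by omega⟩
    exact hm.2 ⟨hmn, hm.1, a, ha, f, hf.1, hf.2.1, by omega⟩
  · rintro x ⟨hx, -⟩ y ⟨hy, -⟩ hxy
    have := hx.1
    have := hy.1
    simp only at hxy
    omega

end Extension

lemma exists_le_ncard_Ioc_of_forall_not_isObstruction {A B : Set ℕ} {n : ℕ} (hA : 0 ∈ A)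
    (hB : 0 ∈ B) (hn : n ∉ A + B) (hnormal : ∀ b, ¬ IsObstruction A B n b) :
    ∃ m ≤ n, m ∉ A + B ∧ (∀ c < m, c ∈ A + B) ∧
      countingFn A m + countingFn B m ≤ ((A + B) ∩ Set.Ioc (n - m) n).ncard := by
  classical
  have hex : ∃ m, m ∉ A + B := ⟨n, hn⟩
  obtain ⟨m, hm, hlt⟩ : ∃ m, m ∉ A + B ∧ ∀ c < m, c ∈ A + B :=
    ⟨Nat.find hex, Nat.find_spec hex, fun c hc => not_not.1 (Nat.find_min hex hc)⟩
  have hmn : m ≤ n := not_lt.1 fun h => hn (hlt n h)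
  refine ⟨m, hmn, hm, hlt, (countingFn_add_countingFn_le hA hB hm).trans ?_⟩
  calc m - 1 = (Set.Ioo (n - m) n).ncard := by
        rw [Set.ncard_eq_toFinset_card', Set.toFinset_Ioo, Nat.card_Ioo]
        omega
    _ ≤ _ := by
        refine Set.ncard_le_ncard (fun f hf => ⟨?_, hf.1, hf.2.le⟩) (Set.toFinite _)
        simp only [Set.mem_Ioo] at hf
        by_contra hfC
        obtain ⟨a, ha, b, hb, hab⟩ := hlt (m + f - n) (by omega)
        simp only at hab
        exact hnormal b ⟨hb, a, ha, m, hmn, f, hf.2.le, hm, hfC, by omega⟩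

/-- The fundamental lemma of Artin and Scherk. The third clause of the conclusion is what allows an
induction on the number of gaps of `A + B`. -/
lemma exists_countingFn_add_le_ncard_Ioc {A B : Set ℕ} {n : ℕ} (hA : 0 ∈ A) (hB : 0 ∈ B)
    (hn : n ∉ A + B) :
    ∃ m ≤ n, m ∉ A + B ∧
      (∀ β, (∀ x, IsObstruction A B n x → β ≤ x) → ∀ c < m, c ≤ β → c ∈ A + B) ∧
      countingFn A m + countingFn B m ≤ ((A + B) ∩ Set.Ioc (n - m) n).ncard := by
  classical
  induction hk : ((A + B)ᶜ ∩ Set.Iic n).ncard using Nat.strong_induction_on generalizing B with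
  | _ k ih =>
  by_cases hex : ∃ b, IsObstruction A B n b
  swap
  · obtain ⟨m, hmn, hm, hlt, hcard⟩ :=
      exists_le_ncard_Ioc_of_forall_not_isObstruction hA hB hn (not_exists.1 hex)
    exact ⟨m, hmn, hm, fun _ _ c hc _ => hlt c hc, hcard⟩
  obtain ⟨b, hob, hmin⟩ : ∃ b, IsObstruction A B n b ∧ ∀ x, IsObstruction A B n x → b ≤ x :=
    ⟨Nat.find hex, Nat.find_spec hex, fun x hx => Nat.find_min' hex hx⟩
  have hb : b ∈ B := hob.1
  set B' := B ∪ gapSummands A B n b with hB'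
  have hsub : A + B ⊆ A + B' := Set.add_subset_add_left Set.subset_union_left
  have hn' : n ∉ A + B' := by
    rw [mem_add_union_gapSummands_iff le_rfl, not_or]
    exact ⟨hn, fun h => (lt_of_mem_obstructionGaps hb h).false⟩
  have hdecr : ((A + B')ᶜ ∩ Set.Iic n).ncard < k := by
    rw [← hk]
    refine Set.ncard_lt_ncard ?_ (Set.toFinite _)
    refine (Set.ssubset_iff_of_subset
      (Set.inter_subset_inter_left _ (Set.compl_subset_compl.2 hsub))).2 ?_
    obtain ⟨-, a, ha, f, hf, g, hg, hfC, hgC, h⟩ := hob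
    exact ⟨f, ⟨hfC, hf⟩, fun h' => h'.1
      ((mem_add_union_gapSummands_iff hf).2 (.inr ⟨hf, hfC, a, ha, g, hg, hgC, h⟩))⟩
  have hmin' : ∀ x, IsObstruction A B' n x → b ≤ x := by
    rintro x ⟨hx | hx, a, ha, f, hf, g, hg, hfC, hgC, h⟩
    · exact hmin x ⟨hx, a, ha, f, hf, g, hg, fun h => hfC (hsub h), fun h => hgC (hsub h), h⟩
    · exact (lt_of_mem_gapSummands hb hx).le
  obtain ⟨m, hmn, hm, hlt, hcard⟩ := ih _ hdecr (.inl hB) hn' rfl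
  have hsmall : ∀ c < m, c ≤ b → c ∈ A + B := by
    intro c hcm hcb
    obtain ⟨a, ha, y, hy | hy, rfl⟩ := hlt b hmin' c hcm hcb
    · exact ⟨a, ha, y, hy, rfl⟩
    · have := lt_of_mem_gapSummands hb hy
      simp only at hcb
      omega
  refine ⟨m, hmn, fun h => hm (hsub h), fun β hβ c hcm hcβ => hsmall c hcm (hcβ.trans (hβ b hob)),
    ?_⟩
  have hgaps := ncard_obstructionGaps_le hb hmin hmn hm hsmall
  have hB'card : countingFn B' m = countingFn B m + countingFn (gapSummands A B n b) m := by
    rw [countingFn, hB', Set.union_inter_distrib_right, Set.ncard_union_eq _ (Set.toFinite _)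
      (Set.toFinite _), countingFn, countingFn]
    exact disjoint_gapSummands.mono Set.inter_subset_left Set.inter_subset_left
  have hCcard : ((A + B') ∩ Set.Ioc (n - m) n).ncard ≤ ((A + B) ∩ Set.Ioc (n - m) n).ncard +
      (obstructionGaps A B n b ∩ Set.Ioc (n - m) n).ncard := by
    refine (Set.ncard_le_ncard ?_ (Set.toFinite _)).trans (Set.ncard_union_le _ _)
    rintro x ⟨hx, hx'⟩
    exact ((mem_add_union_gapSummands_iff hx'.2).1 hx).imp (⟨·, hx'⟩) (⟨·, hx'⟩)
  omega

lemma shnirelmanDensity_mul_le (A : Set ℕ) (n : ℕ) :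
    shnirelmanDensity A * n ≤ countingFn A n := by
  rcases n.eq_zero_or_pos with rfl | hn
  · simp
  · have hbdd : BddBelow (Set.range fun n : {n : ℕ // 0 < n} =>
        (countingFn A (n : ℕ) : ℝ) / ((n : ℕ) : ℝ)) :=
      ⟨0, by rintro _ ⟨x, rfl⟩; positivity⟩
    exact (le_div_iff₀ (by exact_mod_cast hn)).1 (ciInf_le hbdd ⟨n, hn⟩)

lemma mul_le_countingFn_add {A B : Set ℕ} (hA : 0 ∈ A) (hB : 0 ∈ B) {γ : ℝ} (hγ : γ ≤ 1)
    (h : ∀ m : ℕ, γ * m ≤ countingFn A m + countingFn B m) (n : ℕ) :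
    γ * n ≤ countingFn (A + B) n := by
  induction n using Nat.strong_induction_on with
  | _ n ih =>
  rcases n.eq_zero_or_pos with rfl | hpos
  · simp
  suffices H : ∃ m ≤ n, 0 < m ∧ γ * m ≤ ((A + B) ∩ Set.Ioc (n - m) n).ncard by
    obtain ⟨m, hmn, hm, hle⟩ := H
    have hprev := ih (n - m) (by omega)
    rw [← countingFn_add_ncard_Ioc (A + B) (Nat.sub_le n m)]
    push_cast [Nat.cast_sub hmn] at hprev ⊢
    linarith
  by_cases hn : n ∈ A + B
  · refine ⟨1, hpos, one_pos, ?_⟩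
    have hone : 1 ≤ ((A + B) ∩ Set.Ioc (n - 1) n).ncard :=
      (Set.ncard_pos (Set.toFinite _)).2 ⟨n, hn, by simp only [Set.mem_Ioc]; omega⟩
    have : (1 : ℝ) ≤ ((A + B) ∩ Set.Ioc (n - 1) n).ncard := by exact_mod_cast hone
    simpa using hγ.trans this
  · obtain ⟨m, hmn, hm, -, hcard⟩ := exists_countingFn_add_le_ncard_Ioc hA hB hn
    refine ⟨m, hmn, Nat.pos_of_ne_zero ?_, (h m).trans (by exact_mod_cast hcard)⟩
    rintro rfl
    exact hm ⟨0, hA, 0, hB, rfl⟩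

theorem mann_theorem (A B : Set ℕ) (hA : 0 ∈ A) (hB : 0 ∈ B) :
    shnirelmanDensity (A + B) ≥
      min 1 (shnirelmanDensity A + shnirelmanDensity B) := by
  have : Nonempty {n : ℕ // 0 < n} := ⟨⟨1, one_pos⟩⟩
  refine le_ciInf fun ⟨n, hn⟩ => (le_div_iff₀ (by exact_mod_cast hn)).2 ?_
  refine mul_le_countingFn_add hA hB (min_le_left _ _) (fun m => ?_) n
  calc min 1 (shnirelmanDensity A + shnirelmanDensity B) * m
      ≤ (shnirelmanDensity A + shnirelmanDensity B) * m := by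
        gcongr
        exact min_le_right _ _
    _ ≤ countingFn A m + countingFn B m := by
        rw [add_mul]
        exact add_le_add (shnirelmanDensity_mul_le A m) (shnirelmanDensity_mul_le B m)
end

section
/- (Dyson's theorem) If h ≥ 1 and A_1, ..., A_h are sets of nonnegative integers each containing 0, then σ(A_1 + A_2 + ... + A_h) ≥ min(1, σ(A_1) + σ(A_2) + ... + σ(A_h)). -/
open Pointwise Filter

lemma finite_inter_Icc (A : Set ℕ) (n : ℕ) : (A ∩ Set.Icc 1 n).Finite :=
  (Set.finite_Icc 1 n).inter_of_right A

lemma countingFn_le_of_imp {A B : Set ℕ} {m n : ℕ}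
    (h : ∀ x ∈ A, 1 ≤ x → x ≤ m → x ∈ B ∧ x ≤ n) : countingFn A m ≤ countingFn B n := by
  refine Set.ncard_le_ncard ?_ (finite_inter_Icc B n)
  rintro x ⟨hxA, hx1, hxm⟩
  exact ⟨(h x hxA hx1 hxm).1, hx1, (h x hxA hx1 hxm).2⟩

lemma countingFn_eq_zero {A : Set ℕ} {n : ℕ} (h : ∀ x ∈ A, 1 ≤ x → n < x) :
    countingFn A n = 0 := by
  have : A ∩ Set.Icc 1 n = ∅ := by
    ext x
    simp only [Set.mem_inter_iff, Set.mem_Icc, Set.mem_empty_iff_false, iff_false]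
    rintro ⟨hxA, hx1, hxn⟩
    exact absurd (h x hxA hx1) (by omega)
  rw [countingFn, this, Set.ncard_empty]

/-- If a translate of `A` beyond `c` stays in `A` up to `m`, it contributes to the count. -/
lemma countingFn_add_shift_le {A : Set ℕ} {c m : ℕ} (hcm : c + 1 ≤ m) (h0 : 0 ∈ A)
    (h : ∀ a ∈ A, a + (c + 1) ≤ m → a + (c + 1) ∈ A) :
    countingFn A c + 1 + countingFn A (m - (c + 1)) ≤ countingFn A m := by
  set S := A ∩ Set.Icc 1 (m - (c + 1)) with hS
  have hSfin : S.Finite := finite_inter_Icc A _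
  have h0S : 0 ∉ S := fun h => absurd h.2.1 (by omega)
  have hcard : ((· + (c + 1)) '' insert 0 S).ncard = countingFn A (m - (c + 1)) + 1 := by
    rw [Set.ncard_image_of_injective _ (add_left_injective _),
      Set.ncard_insert_of_notMem h0S hSfin, countingFn]
  have hdisj : Disjoint (A ∩ Set.Icc 1 c) ((· + (c + 1)) '' insert 0 S) := by
    rw [Set.disjoint_left]
    rintro x ⟨-, -, hxc⟩ ⟨y, -, rfl⟩
    dsimp only at hxc
    omega
  have hunion := Set.ncard_union_eq hdisj (finite_inter_Icc A c) ((hSfin.insert 0).image _)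
  have hle : ((A ∩ Set.Icc 1 c) ∪ ((· + (c + 1)) '' insert 0 S)).ncard ≤ countingFn A m := by
    refine Set.ncard_le_ncard ?_ (finite_inter_Icc A m)
    rintro x (⟨hxA, hx1, hxc⟩ | ⟨y, rfl | ⟨hyA, hy1, hym⟩, rfl⟩)
    · exact ⟨hxA, hx1, by omega⟩
    · exact ⟨h 0 h0 (by omega), by dsimp only; omega, by dsimp only; omega⟩
    · exact ⟨h y hyA (by omega), by dsimp only; omega, by dsimp only; omega⟩
  rw [hunion, hcard] at hle
  change countingFn A c + _ ≤ _ at hle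
  omega

/-- Counting estimate for the Dyson transform: the elements `d ∈ B` removed from `B` because
`d + e ∉ A` reappear in the enlarged set `A'` as `d + e`. -/
lemma countingFn_transform {A B D A' B' : Set ℕ} {e m t : ℕ} (htm : t ≤ m)
    (hAA' : A ⊆ A') (hBD : ∀ b ∈ B, b ∈ B' ∨ b ∈ D)
    (hD : ∀ d ∈ D, d + e ∈ A' ∧ d + e ∉ A)
    (ht : ∀ d ∈ D, d ≤ t → d + e ≤ m) :
    countingFn A m + countingFn B t ≤ countingFn A' m + countingFn B' m := by
  have hB : countingFn B t ≤ countingFn B' t + countingFn D t := by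
    refine (Set.ncard_le_ncard ?_ ((finite_inter_Icc B' t).union (finite_inter_Icc D t))).trans
      (Set.ncard_union_le _ _)
    rintro x ⟨hxB, hx⟩
    exact (hBD x hxB).imp (fun h => ⟨h, hx⟩) (fun h => ⟨h, hx⟩)
  have hB' : countingFn B' t ≤ countingFn B' m :=
    countingFn_le_of_imp fun x hx _ hxt => ⟨hx, hxt.trans htm⟩
  have hcard : ((· + e) '' (D ∩ Set.Icc 1 t)).ncard = countingFn D t :=
    Set.ncard_image_of_injective _ (add_left_injective _)
  have hdisj : Disjoint (A ∩ Set.Icc 1 m) ((· + e) '' (D ∩ Set.Icc 1 t)) := by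
    rw [Set.disjoint_left]
    rintro x ⟨hxA, -⟩ ⟨y, ⟨hyD, -⟩, rfl⟩
    exact (hD y hyD).2 hxA
  have hunion := Set.ncard_union_eq hdisj (finite_inter_Icc A m) ((finite_inter_Icc D t).image _)
  have hle : ((A ∩ Set.Icc 1 m) ∪ ((· + e) '' (D ∩ Set.Icc 1 t))).ncard ≤ countingFn A' m := by
    refine Set.ncard_le_ncard ?_ (finite_inter_Icc A' m)
    rintro x (⟨hxA, hx⟩ | ⟨y, ⟨hyD, hy1, hyt⟩, rfl⟩)
    · exact ⟨hAA' hxA, hx⟩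
    · exact ⟨(hD y hyD).1, by dsimp only; omega, ht y hyD hyt⟩
  rw [hunion, hcard] at hle
  change countingFn A m + _ ≤ _ at hle
  omega

/-- The finite form of Mann's theorem. -/
theorem mul_le_countingFn_of_add_mem {γ : ℝ} (hγ : γ ≤ 1) (n : ℕ) (A B C : Set ℕ)
    (hA : 0 ∈ A) (hB : 0 ∈ B)
    (hAB : ∀ m ≤ n, γ * m ≤ countingFn A m + countingFn B m)
    (hC : ∀ a ∈ A, ∀ b ∈ B, a + b ≤ n → a + b ∈ C) :
    γ * n ≤ countingFn C n := by
  induction n using Nat.strong_induction_on generalizing A B C with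
  | _ n ihn =>
  induction hk : countingFn B n using Nat.strong_induction_on generalizing A B C with
  | _ k ihk =>
  subst hk
  by_cases hex : ∃ e, e ∈ A ∧ ∃ b ∈ B, b + e ≤ n ∧ b + e ∉ A
  · classical
    obtain ⟨heA, b₀, hb₀B, hb₀n, hb₀A⟩ := Nat.find_spec hex
    have hmin : ∀ a ∈ A, a < Nat.find hex → ∀ b ∈ B, a + b ≤ n → a + b ∈ A := by
      intro a ha hae b hb hab
      by_contra hcon
      exact Nat.find_min hex hae ⟨ha, b, hb, by omega, by rwa [add_comm]⟩
    generalize Nat.find hex = e at *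
    set D : Set ℕ := {b | b ∈ B ∧ b + e ≤ n ∧ b + e ∉ A} with hDdef
    set A' : Set ℕ := {x | x ∈ A ∨ ∃ b ∈ B, x = b + e} with hA'def
    set B' : Set ℕ := {b | b ∈ B ∧ (b + e ≤ n → b + e ∈ A)} with hB'def
    have hAA' : A ⊆ A' := fun x hx => Or.inl hx
    have hBD : ∀ b ∈ B, b ∈ B' ∨ b ∈ D := by
      intro b hb
      by_cases h : b + e ≤ n → b + e ∈ A
      · exact Or.inl ⟨hb, h⟩
      · push Not at h
        exact Or.inr ⟨hb, h⟩
    have hD : ∀ d ∈ D, d + e ∈ A' ∧ d + e ∉ A := fun d hd => ⟨Or.inr ⟨d, hd.1, rfl⟩, hd.2.2⟩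
    refine ihk (countingFn B' n) ?_ A' B' C (Or.inl hA) ⟨hB, fun _ => by simpa using heA⟩
      ?_ ?_ rfl
    · refine Set.ncard_lt_ncard ⟨fun x hx => ⟨hx.1.1, hx.2⟩, fun hsub => ?_⟩
        (finite_inter_Icc B n)
      have hb₀ : b₀ ≠ 0 := by
        rintro rfl
        exact hb₀A (by simpa using heA)
      exact hb₀A ((hsub ⟨hb₀B, by omega, by omega⟩).1.2 hb₀n)
    · intro m hm
      by_cases hbad : ∃ b, b ∈ D ∧ b ≤ m ∧ m < b + e
      · obtain ⟨hbD, hbm, hmb⟩ := Nat.find_spec hbad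
        have hbmin : ∀ d ∈ D, d < Nat.find hbad → d + e ≤ m := by
          intro d hd hdb
          by_contra hcon
          exact Nat.find_min hbad hdb ⟨hd, by omega, by omega⟩
        generalize Nat.find hbad = b at *
        obtain _ | c := b
        · exact absurd heA (by simpa using hbD.2.2)
        have h1 := countingFn_transform (t := c) (by omega) hAA' hBD hD
          (fun d hd hdc => hbmin d hd (by omega))
        have h2 := countingFn_add_shift_le hbm hA
          (fun a ha ham => hmin a ha (by omega) _ hbD.1 (by omega))
        have h3 := ihn (m - (c + 1)) (by omega) A B A hA hB
          (fun i hi => hAB i (by omega))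
          (fun a ha b hb hab => hmin a ha (by omega) b hb (by omega))
        have h4 := hAB c (by omega)
        have h5 : ((m - (c + 1) : ℕ) : ℝ) = m - (c + 1) := by push_cast [hbm]; ring
        rw [h5] at h3
        have h1' : (countingFn A m + countingFn B c : ℝ) ≤
            countingFn A' m + countingFn B' m := by exact_mod_cast h1
        have h2' : (countingFn A c + 1 + countingFn A (m - (c + 1)) : ℝ) ≤ countingFn A m := by
          exact_mod_cast h2
        linarith
      · push Not at hbad
        have h1 := countingFn_transform (t := m) le_rfl hAA' hBD hD hbad
        have h1' : (countingFn A m + countingFn B m : ℝ) ≤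
            countingFn A' m + countingFn B' m := by exact_mod_cast h1
        exact (hAB m hm).trans h1'
    · rintro a (ha | ⟨b', hb', rfl⟩) b ⟨hb, hbe⟩ hab
      · exact hC a ha b hb hab
      · have := hC (b + e) (hbe (by omega)) b' hb' (by omega)
        rwa [show b' + e + b = b + e + b' by ring]
  · push Not at hex
    have hclosed : ∀ a ∈ A, ∀ b ∈ B, a + b ≤ n → a + b ∈ A := fun a ha b hb hab => by
      rw [add_comm]
      exact hex a ha b hb (by omega)
    have hAC : countingFn A n ≤ countingFn C n :=
      countingFn_le_of_imp fun x hx _ hxn => ⟨hC x hx 0 hB hxn, hxn⟩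
    refine le_trans ?_ (Nat.cast_le.mpr hAC)
    by_cases hpos : ∃ b, b ∈ B ∧ 1 ≤ b ∧ b ≤ n
    · classical
      obtain ⟨hbB, hb1, hbn⟩ := Nat.find_spec hpos
      have hbmin : ∀ x ∈ B, 1 ≤ x → Nat.find hpos ≤ x := by
        intro x hx hx1
        by_contra hcon
        exact Nat.find_min hpos (not_le.mp hcon) ⟨hx, hx1, by omega⟩
      generalize Nat.find hpos = b at *
      obtain ⟨c, rfl⟩ := Nat.exists_eq_add_of_le' hb1
      have h2 := countingFn_add_shift_le hbn hA (fun a ha ham => hclosed a ha _ hbB ham)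
      have h3 := ihn (n - (c + 1)) (by omega) A B A hA hB
        (fun i hi => hAB i (by omega))
        (fun a ha b hb hab => hclosed a ha b hb (by omega))
      have h4 := hAB c (by omega)
      rw [countingFn_eq_zero (A := B) (n := c) (fun x hx hx1 => hbmin x hx hx1)] at h4
      have h5 : ((n - (c + 1) : ℕ) : ℝ) = n - (c + 1) := by push_cast [hbn]; ring
      rw [h5] at h3
      have h2' : (countingFn A c + 1 + countingFn A (n - (c + 1)) : ℝ) ≤ countingFn A n := by
        exact_mod_cast h2
      push_cast at h4
      linarith
    · push Not at hpos
      have h := hAB n le_rfl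
      rw [countingFn_eq_zero (A := B) (n := n) hpos] at h
      simpa using h

lemma shnirelmanDensity_nonneg (A : Set ℕ) : 0 ≤ shnirelmanDensity A :=
  Real.iInf_nonneg fun _ => by positivity

/-- Mann's theorem. -/
theorem min_le_shnirelmanDensity_add {A B : Set ℕ} (hA : 0 ∈ A) (hB : 0 ∈ B) :
    min 1 (shnirelmanDensity A + shnirelmanDensity B) ≤ shnirelmanDensity (A + B) := by
  have : Nonempty {n : ℕ // 0 < n} := ⟨⟨1, one_pos⟩⟩
  refine le_ciInf fun ⟨n, hn⟩ => (le_div_iff₀ (by exact_mod_cast hn)).mpr ?_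
  refine mul_le_countingFn_of_add_mem (min_le_left _ _) n A B (A + B) hA hB (fun m _ => ?_)
    (fun a ha b hb _ => Set.add_mem_add ha hb)
  calc min 1 (shnirelmanDensity A + shnirelmanDensity B) * m
      ≤ (shnirelmanDensity A + shnirelmanDensity B) * m := by gcongr; exact min_le_right _ _
    _ ≤ countingFn A m + countingFn B m := by
      rw [add_mul]
      exact add_le_add (shnirelmanDensity_mul_le A m) (shnirelmanDensity_mul_le B m)

lemma zero_mem_sum_and_min_le_shnirelmanDensity_sum {ι : Type*} (s : Finset ι) (A : ι → Set ℕ)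
    (hA : ∀ i, 0 ∈ A i) :
    0 ∈ ∑ i ∈ s, A i ∧
      min 1 (∑ i ∈ s, shnirelmanDensity (A i)) ≤ shnirelmanDensity (∑ i ∈ s, A i) := by
  classical
  induction s using Finset.induction_on with
  | empty => simpa using shnirelmanDensity_nonneg _
  | insert i s hi ih =>
    rw [Finset.sum_insert hi, Finset.sum_insert hi]
    refine ⟨by simpa using Set.add_mem_add (hA i) ih.1, ?_⟩
    refine le_trans ?_ (min_le_shnirelmanDensity_add (hA i) ih.1)
    have h0 := shnirelmanDensity_nonneg (A i)
    refine le_min (min_le_left _ _) ?_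
    rcases min_le_iff.mp ih.2 with h | h
    · exact (min_le_left _ _).trans (by linarith)
    · exact (min_le_right _ _).trans (by linarith)

theorem dyson_theorem (h : ℕ) (hh : 1 ≤ h) (A : Fin h → Set ℕ)
    (hA : ∀ i, 0 ∈ A i) :
    shnirelmanDensity (∑ i, A i) ≥
      min 1 (∑ i, shnirelmanDensity (A i)) :=
  (zero_mem_sum_and_min_le_shnirelmanDensity_sum Finset.univ A hA).2
end

section
/- (Härtter) For every integer h ≥ 2, there exist uncountably many minimal asymptotic bases of order h; that is, the collection of sets A of nonnegative integers that are minimal asymptotic bases of order h is uncountable. -/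
open Pointwise Filter

/-- The positive integers all of whose binary digits `1` sit at positions of one colour. -/
def monochromaticSums {h : ℕ} (col : ℕ → Fin h) : Set ℕ :=
  {a | a ≠ 0 ∧ ∃ k, ∀ p, a.testBit p = true → col p = k}

theorem exists_testBit_iff (M : ℕ) (P : ℕ → Prop) :
    ∃ n : ℕ, ∀ p, n.testBit p = true ↔ p < M ∧ P p := by
  classical
  refine ⟨Nat.ofBits (fun i : Fin M => decide (P i)), fun p => ?_⟩
  by_cases hp : p < M
  · simp [Nat.testBit_ofBits_lt _ _ hp, hp]
  · simp [Nat.testBit_ofBits_ge _ _ (not_lt.mp hp), hp]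

/-- If no binary position below `P` is used twice, the lower parts add up without carry. -/
theorem sum_mod_two_pow_lt {ι : Type*} [Fintype ι] (b : ι → ℕ) (P : ℕ)
    (hb : ∀ p < P, ∑ j, ((b j).testBit p).toNat ≤ 1) : ∑ j, b j % 2 ^ P < 2 ^ P := by
  induction P with
  | zero => simp [Nat.mod_one]
  | succ P ih =>
    have h1 := ih fun p hp => hb p (by omega)
    have h2 := hb P (by omega)
    have h3 : ∑ j, b j % 2 ^ (P + 1) = ∑ j, b j % 2 ^ P + 2 ^ P * ∑ j, ((b j).testBit P).toNat := by
      rw [Finset.mul_sum, ← Finset.sum_add_distrib]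
      refine Finset.sum_congr rfl fun j _ => ?_
      rw [Nat.mod_pow_succ, Nat.toNat_testBit]
    rw [h3, pow_succ]
    nlinarith [Nat.mul_le_mul_left (2 ^ P) h2]

theorem toNat_testBit_sum {ι : Type*} [Fintype ι] (b : ι → ℕ) (P : ℕ)
    (hb : ∀ p < P, ∑ j, ((b j).testBit p).toNat ≤ 1) :
    ((∑ j, b j).testBit P).toNat = (∑ j, ((b j).testBit P).toNat) % 2 := by
  have h1 := sum_mod_two_pow_lt b P hb
  have h2 : ∑ j, b j = ∑ j, b j % 2 ^ P + 2 ^ P * ∑ j, b j / 2 ^ P := by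
    rw [Finset.mul_sum, ← Finset.sum_add_distrib]
    exact Finset.sum_congr rfl fun j _ => (Nat.mod_add_div _ _).symm
  rw [Nat.toNat_testBit, h2, Nat.add_mul_div_left _ _ (by positivity), Nat.div_eq_of_lt h1,
    zero_add, Finset.sum_nat_mod]
  simp only [Nat.toNat_testBit]

theorem testBit_sum_iff {ι : Type*} [Fintype ι] (b : ι → ℕ)
    (hb : ∀ p, ∀ i j, (b i).testBit p = true → (b j).testBit p = true → i = j) (P : ℕ) :
    (∑ j, b j).testBit P = true ↔ ∃ j, (b j).testBit P = true := by
  classical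
  have key : ∀ p, ∑ j, ((b j).testBit p).toNat ≤ 1 := by
    intro p
    have h1 : ∑ j, ((b j).testBit p).toNat =
        (Finset.univ.filter fun j => (b j).testBit p = true).card := by
      rw [Finset.card_filter]
      exact Finset.sum_congr rfl fun j _ => by cases (b j).testBit p <;> simp
    rw [h1, Finset.card_le_one]
    simpa using fun i hi j hj => hb p i j hi hj
  have h2 := toNat_testBit_sum b P fun p _ => key p
  rw [Nat.mod_eq_of_lt (by have := key P; omega)] at h2
  constructor
  · intro h
    by_contra! hn
    simp [h, hn] at h2
  · rintro ⟨j, hj⟩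
    have h3 := Finset.single_le_sum (f := fun j => ((b j).testBit P).toNat)
      (fun _ _ => Nat.zero_le _) (Finset.mem_univ j)
    by_contra hn
    simp only [Bool.not_eq_true] at hn
    rw [← h2, hn, hj] at h3
    exact absurd h3 (by decide)

section Basis

variable {h : ℕ} {col : ℕ → Fin h}

theorem two_pow_mem_monochromaticSums (col : ℕ → Fin h) (e : ℕ) :
    2 ^ e ∈ monochromaticSums col := by
  refine ⟨by positivity, col e, fun p hp => ?_⟩
  rw [Nat.testBit_two_pow] at hp
  rw [of_decide_eq_true hp]

theorem exists_add_of_mem_monochromaticSums {x : ℕ} (hx : x ∈ monochromaticSums col)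
    (h1 : 1 < x) : ∃ y ∈ monochromaticSums col, ∃ z ∈ monochromaticSums col, x = y + z := by
  obtain ⟨h0, k, hk⟩ := hx
  set e := Nat.log 2 x
  have hle : 2 ^ e ≤ x := Nat.pow_log_le_self 2 h0
  have hlt : x < 2 ^ (e + 1) := Nat.lt_pow_succ_log_self (by norm_num) x
  have hx : x = 2 ^ e + x % 2 ^ e := by
    rw [Nat.mod_eq_sub_mod hle, Nat.mod_eq_of_lt (by rw [pow_succ] at hlt; omega)]
    omega
  by_cases hr : x % 2 ^ e = 0
  · obtain ⟨d, hd⟩ : ∃ d, e = d + 1 := by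
      refine Nat.exists_eq_succ_of_ne_zero fun he => ?_
      rw [he] at hx hr
      simp at hx
      omega
    refine ⟨2 ^ d, two_pow_mem_monochromaticSums col d, 2 ^ d,
      two_pow_mem_monochromaticSums col d, ?_⟩
    rw [hx, hr, hd, pow_succ]
    ring
  · refine ⟨2 ^ e, two_pow_mem_monochromaticSums col e, x % 2 ^ e, ⟨hr, k, fun p hp => ?_⟩, hx⟩
    rw [Nat.testBit_mod_two_pow] at hp
    simp only [Bool.and_eq_true] at hp
    exact hk p hp.2

theorem exists_multiset_card_succ {n : ℕ} {s : Multiset ℕ}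
    (hs : ∀ x ∈ s, x ∈ monochromaticSums col) (hsum : s.sum = n) (hn : s.card < n) :
    ∃ t : Multiset ℕ, t.card = s.card + 1 ∧ (∀ x ∈ t, x ∈ monochromaticSums col) ∧ t.sum = n := by
  obtain ⟨x, hx, h1⟩ : ∃ x ∈ s, 1 < x := by
    by_contra! hc
    have := Multiset.sum_le_card_nsmul s 1 hc
    simp at this
    omega
  obtain ⟨y, hy, z, hz, rfl⟩ := exists_add_of_mem_monochromaticSums (hs x hx) h1
  obtain ⟨u, rfl⟩ := Multiset.exists_cons_of_mem hx
  refine ⟨y ::ₘ z ::ₘ u, by simp, ?_, ?_⟩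
  · intro w hw
    simp only [Multiset.mem_cons] at hw
    rcases hw with rfl | rfl | hw
    · exact hy
    · exact hz
    · exact hs w (by simp [hw])
  · rw [← hsum]
    simp [add_assoc]

theorem exists_multiset_card_le (col : ℕ → Fin h) (n : ℕ) :
    ∃ s : Multiset ℕ, s.card ≤ h ∧ (∀ x ∈ s, x ∈ monochromaticSums col) ∧ s.sum = n := by
  classical
  choose b hb using fun k : Fin h =>
    exists_testBit_iff n (fun p => n.testBit p = true ∧ col p = k)
  have hsum : ∑ k, b k = n := by
    refine Nat.eq_of_testBit_eq fun p => Bool.eq_iff_iff.mpr ?_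
    rw [testBit_sum_iff b]
    · constructor
      · rintro ⟨k, hk⟩
        exact ((hb k p).1 hk).2.1
      · intro hp
        exact ⟨col p, (hb _ p).2 ⟨p.lt_two_pow_self.trans_le (Nat.ge_two_pow_of_testBit hp), hp, rfl⟩⟩
    · intro p i j hi hj
      exact ((hb i p).1 hi).2.2.symm.trans ((hb j p).1 hj).2.2
  refine ⟨((Finset.univ.filter fun k => b k ≠ 0).val.map b), ?_, ?_, ?_⟩
  · rw [Multiset.card_map, Finset.card_val]
    exact (Finset.card_le_univ _).trans_eq (Fintype.card_fin h)
  · intro x hx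
    simp only [Multiset.mem_map, Finset.mem_val, Finset.mem_filter] at hx
    obtain ⟨k, ⟨-, hk⟩, rfl⟩ := hx
    exact ⟨hk, k, fun p hp => ((hb k p).1 hp).2.2⟩
  · rw [← hsum]
    exact Finset.sum_filter_ne_zero Finset.univ

theorem isAsymptoticBasisOfOrder_monochromaticSums (col : ℕ → Fin h) :
    IsAsymptoticBasisOfOrder (monochromaticSums col) h := by
  filter_upwards [eventually_ge_atTop h] with n hn
  obtain ⟨s, hsc, hs, hsum⟩ := exists_multiset_card_le col n
  have key : ∀ m, s.card ≤ m → m ≤ h → ∃ t : Multiset ℕ, t.card = m ∧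
      (∀ x ∈ t, x ∈ monochromaticSums col) ∧ t.sum = n := by
    intro m hm
    induction m, hm using Nat.le_induction with
    | base => exact fun _ => ⟨s, rfl, hs, hsum⟩
    | succ m _ ih =>
      intro hmh
      obtain ⟨t, rfl, ht, hts⟩ := ih (by omega)
      exact exists_multiset_card_succ ht hts (by omega)
  obtain ⟨t, htc, ht, hts⟩ := key h hsc le_rfl
  induction t using Quotient.inductionOn with
  | h l =>
    simp only [Multiset.quot_mk_to_coe, Multiset.coe_card, Multiset.mem_coe,
      Multiset.sum_coe] at htc ht hts
    subst htc
    exact ⟨l.get, fun i => ht _ (List.get_mem l i), by simpa using hts⟩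

end Basis

section Minimal

variable {h : ℕ} {col : ℕ → Fin h}

/-- A block of `h` consecutive digits `1` cannot arise from carries among `h` summands. -/
theorem exists_testBit_of_block {h t : ℕ} (c : Fin h → ℕ)
    (hn : ∀ p, t ≤ p → p < t + h → (∑ j, c j).testBit p = true) (hh : 2 ≤ h) :
    ∃ j p, t ≤ p ∧ p < t + h ∧ (c j).testBit p = true := by
  by_contra! hc
  have h1 : ∀ j, c j % 2 ^ (t + h) < 2 ^ t := by
    intro j
    have : c j % 2 ^ (t + h) = c j % 2 ^ t := by
      refine Nat.eq_of_testBit_eq fun p => ?_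
      rw [Nat.testBit_mod_two_pow, Nat.testBit_mod_two_pow]
      by_cases h1 : p < t
      · simp [h1, show p < t + h by omega]
      · by_cases h2 : p < t + h
        · simp [h1, h2, hc j p (by omega) h2]
        · simp [h1, h2]
    rw [this]
    exact Nat.mod_lt _ (by positivity)
  have h2 : (∑ j, c j) % 2 ^ (t + h) < h * 2 ^ t := by
    rw [Finset.sum_nat_mod]
    refine (Nat.mod_le _ _).trans_lt ?_
    have : (Finset.univ : Finset (Fin h)).Nonempty := ⟨⟨0, by omega⟩, Finset.mem_univ _⟩
    simpa using Finset.sum_lt_sum_of_nonempty this fun j _ => h1 j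
  have h3 : (∑ j, c j) % 2 ^ (t + h) / 2 ^ t = 2 ^ h - 1 := by
    rw [pow_add, Nat.mod_mul_right_div_self]
    refine Nat.eq_of_testBit_eq fun p => ?_
    rw [Nat.testBit_mod_two_pow, Nat.testBit_two_pow_sub_one, Nat.testBit_div_two_pow]
    by_cases hp : p < h
    · simp [hp, hn (p + t) (by omega) (by omega)]
    · simp [hp]
  have h4 := Nat.div_lt_of_lt_mul (mul_comm h (2 ^ t) ▸ h2)
  have h5 := h.lt_two_pow_self
  omega

/-- The hypothesis says that no colour other than `i` is missed. -/
theorem bijective_or_forall_ne {κ : Fin h → Fin h} {i : Fin h}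
    (hκ : ∀ k, k ≠ i → ∃ j, κ j = k) :
    κ.Bijective ∨ ((∀ j, κ j ≠ i) ∧ ∀ k, (Finset.univ.filter fun j => κ j = k).card ≤ 2) := by
  classical
  by_cases hi : ∃ j, κ j = i
  · left
    refine Finite.surjective_iff_bijective.1 fun k => ?_
    by_cases hk : k = i
    · exact hk ▸ hi
    · exact hκ k hk
  · right
    push Not at hi
    refine ⟨hi, fun k => ?_⟩
    by_cases hk : k = i
    · subst hk
      simp [hi]
    have h1 : ∑ k ∈ Finset.univ.erase i, (Finset.univ.filter fun j => κ j = k).card = h := by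
      rw [← Finset.card_eq_sum_card_fiberwise (fun j _ => by simpa using hi j)]
      simp
    rw [← Finset.add_sum_erase _ _ (Finset.mem_erase.2 ⟨hk, Finset.mem_univ k⟩)] at h1
    have h2 : ((Finset.univ.erase i).erase k).card ≤
        ∑ k ∈ (Finset.univ.erase i).erase k, (Finset.univ.filter fun j => κ j = k).card := by
      rw [Finset.card_eq_sum_ones]
      refine Finset.sum_le_sum fun l hl => Finset.card_pos.2 ?_
      obtain ⟨j, hj⟩ := hκ l (by simp at hl; exact hl.2)
      exact ⟨j, by simp [hj]⟩
    rw [Finset.card_erase_of_mem (by simp [hk]), Finset.card_erase_of_mem (by simp)] at h2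
    simp only [Finset.card_univ, Fintype.card_fin] at h2
    omega

theorem sum_toNat_testBit_le_card {c : Fin h → ℕ} {κ : Fin h → Fin h}
    (hc : ∀ j p, (c j).testBit p = true → col p = κ j) (p : ℕ) :
    ∑ j, ((c j).testBit p).toNat ≤ (Finset.univ.filter fun j => κ j = col p).card := by
  classical
  rw [Finset.card_filter]
  refine Finset.sum_le_sum fun j _ => ?_
  cases hb : (c j).testBit p
  · simp
  · simp [hc j p hb]

/-- If `∑ j, c j` has the digits of `a` at the colour `i` of `a`, and digits `1` at all other
positions below `M`, then `a` is one of the `c j`. -/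
theorem exists_eq_of_sum {a M : ℕ} {i : Fin h} {c : Fin h → ℕ} {κ : Fin h → Fin h}
    (hc : ∀ j p, (c j).testBit p = true → col p = κ j) (ha0 : a ≠ 0)
    (ha : ∀ p, a.testBit p = true → col p = i) (haM : ∀ p, a.testBit p = true → p < M)
    (hn : ∀ p, (∑ j, c j).testBit p = true ↔ p < M ∧ (col p ≠ i ∨ a.testBit p = true))
    (hκ : ∀ k, k ≠ i → ∃ j, κ j = k) : ∃ j, c j = a := by
  classical
  rcases bijective_or_forall_ne hκ with hbij | ⟨hne, hcard⟩
  · obtain ⟨j, rfl⟩ := hbij.2 i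
    have hd := testBit_sum_iff c
      fun p i j hi hj => hbij.1 ((hc i p hi).symm.trans (hc j p hj))
    refine ⟨j, Nat.eq_of_testBit_eq fun p => Bool.eq_iff_iff.mpr ⟨fun hp => ?_, fun hp => ?_⟩⟩
    · rcases ((hn p).1 ((hd p).2 ⟨j, hp⟩)).2 with h1 | h1
      · exact absurd (hc j p hp) h1
      · exact h1
    · obtain ⟨l, hl⟩ := (hd p).1 ((hn p).2 ⟨haM p hp, Or.inr hp⟩)
      rwa [hbij.1 ((ha p hp).symm.trans (hc l p hl))]
  · exfalso
    obtain ⟨f, hf⟩ := Nat.exists_testBit_of_ne_zero ha0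
    have hzero : ∀ p, col p = i → ∑ j, ((c j).testBit p).toNat = 0 := by
      intro p hp
      refine Finset.sum_eq_zero fun j _ => ?_
      cases hb : (c j).testBit p
      · rfl
      · exact absurd ((hc j p hb).symm.trans hp) (hne j)
    have hle : ∀ p, p < M → ∑ j, ((c j).testBit p).toNat ≤ 1 := by
      intro p
      induction p using Nat.strong_induction_on with
      | _ p ih =>
        intro hp
        by_cases hpi : col p = i
        · rw [hzero p hpi]
          exact Nat.zero_le 1
        · have h1 := toNat_testBit_sum c p fun q hq => ih q hq (hq.trans hp)
          rw [(hn p).2 ⟨hp, Or.inl hpi⟩, Bool.toNat_true] at h1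
          have h2 := (sum_toNat_testBit_le_card hc p).trans (hcard (col p))
          omega
    have h1 := toNat_testBit_sum c f fun q hq => hle q (hq.trans (haM f hf))
    rw [(hn f).2 ⟨haM f hf, Or.inr hf⟩, hzero f (ha f hf)] at h1
    simp at h1

theorem isMinimalAsymptoticBasisOfOrder_monochromaticSums (hh : 2 ≤ h)
    (hblock : ∀ k, ∃ t, ∀ p, t ≤ p → p < t + h → col p = k)
    (hinf : ∀ k N, ∃ p, N ≤ p ∧ col p ≠ k) :
    IsMinimalAsymptoticBasisOfOrder (monochromaticSums col) h := by
  refine ⟨isAsymptoticBasisOfOrder_monochromaticSums col, fun B hB hbasis => ?_⟩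
  obtain ⟨hBA, a, ⟨ha0, i, ha⟩, haB⟩ := Set.ssubset_iff_exists.1 hB
  obtain ⟨N, hN⟩ := eventually_atTop.1 hbasis
  choose t ht using hblock
  obtain ⟨q, hqN, hq⟩ := hinf i N
  set M := a + q + 1 + ∑ k, (t k + h)
  have hM : ∀ k, t k + h ≤ M := fun k =>
    (Finset.single_le_sum (f := fun k => t k + h) (fun _ _ => Nat.zero_le _)
      (Finset.mem_univ k)).trans (Nat.le_add_left _ _)
  obtain ⟨n, hn⟩ := exists_testBit_iff M (fun p => col p ≠ i ∨ a.testBit p = true)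
  have hnN : N ≤ n := hqN.trans <| q.lt_two_pow_self.le.trans <| Nat.ge_two_pow_of_testBit <|
    (hn q).2 ⟨by omega, Or.inl hq⟩
  obtain ⟨c, hcB, rfl⟩ := hN n hnN
  choose hc0 κ hκ using fun j => hBA (hcB j)
  obtain ⟨j, hj⟩ := exists_eq_of_sum hκ ha0 ha
    (fun p hp => by
      have := p.lt_two_pow_self.trans_le (Nat.ge_two_pow_of_testBit hp)
      omega) hn
    (fun k hk => by
      obtain ⟨j, p, h1, h2, h3⟩ := exists_testBit_of_block (t := t k) c (fun p h1 h2 =>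
        (hn p).2 ⟨h2.trans_le (hM k), Or.inl (by rw [ht k p h1 h2]; exact hk)⟩) hh
      exact ⟨j, (hκ j p h3).symm.trans (ht k p h1 h2)⟩)
  exact haB (hj ▸ hcB j)

end Minimal

/-- The colouring with blocks of length `h` of each colour below `h * h`, encoding `S` in
the colours `0` and `1` beyond. -/
noncomputable def encodingColouring {h : ℕ} (hh : 2 ≤ h) (S : Set ℕ) (p : ℕ) : Fin h :=
  open Classical in
  if hp : p < h * h then ⟨p / h, Nat.div_lt_of_lt_mul hp⟩
  else if ((p - h * h) % 2 = 0 ↔ (p - h * h) / 2 ∈ S) then ⟨1, by omega⟩ else ⟨0, by omega⟩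

theorem isMinimal_encodingColouring {h : ℕ} (hh : 2 ≤ h) (S : Set ℕ) :
    IsMinimalAsymptoticBasisOfOrder (monochromaticSums (encodingColouring hh S)) h := by
  refine isMinimalAsymptoticBasisOfOrder_monochromaticSums hh (fun k => ?_) (fun k N => ?_)
  · refine ⟨h * k, fun p h1 h2 => ?_⟩
    have hp : p < h * h := by nlinarith [k.2]
    simp only [encodingColouring, hp, dite_true]
    ext
    exact Nat.div_eq_of_lt_le (by linarith) (by linarith)
  · by_contra! hc
    have h1 := hc (h * h + 2 * N) (by omega)
    have h2 := hc (h * h + (2 * N + 1)) (by omega)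
    rw [← h2] at h1
    have h3 : (2 * N + 1) / 2 = N := by omega
    by_cases hS : N ∈ S <;> simp [encodingColouring, hS, h3] at h1

theorem mem_iff_mem_monochromaticSums {h : ℕ} (hh : 2 ≤ h) (S : Set ℕ) (x : ℕ) :
    x ∈ S ↔ 2 ^ (h * h + 2 * x) + 2 ^ h ∈ monochromaticSums (encodingColouring hh S) := by
  have hlt : h < h * h := by nlinarith
  have hbit : ∀ p, (2 ^ (h * h + 2 * x) + 2 ^ h).testBit p = true ↔ p = h * h + 2 * x ∨ p = h := by
    intro p
    have hpow : 2 ^ h < 2 ^ (h * h + 2 * x) := Nat.pow_lt_pow_right (by norm_num) (by omega)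
    have := testBit_sum_iff ![2 ^ (h * h + 2 * x), 2 ^ h] (fun p i j hi hj => by
      revert hi hj
      fin_cases i <;> fin_cases j <;> simp [Nat.testBit_two_pow] <;> omega) p
    simp only [Fin.sum_univ_two, Fin.exists_fin_two, Matrix.cons_val_zero, Matrix.cons_val_one,
      Nat.testBit_two_pow, decide_eq_true_eq] at this
    rw [this, eq_comm, @eq_comm _ h]
  have hcol : encodingColouring hh S h = ⟨1, by omega⟩ := by
    rw [encodingColouring, dif_pos hlt]
    exact Fin.ext (Nat.div_self (by omega))
  have hcol' : x ∈ S ↔ encodingColouring hh S (h * h + 2 * x) = ⟨1, by omega⟩ := by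
    by_cases hS : x ∈ S <;> simp [encodingColouring, hS]
  rw [hcol']
  constructor
  · refine fun hx => ⟨by positivity, ⟨1, by omega⟩, fun p hp => ?_⟩
    rcases (hbit p).1 hp with rfl | rfl
    · exact hx
    · exact hcol
  · rintro ⟨-, k, hk⟩
    rw [hk _ ((hbit _).2 (Or.inl rfl)), ← hk _ ((hbit _).2 (Or.inr rfl)), hcol]

theorem hartter_uncountably_many_minimal_bases (h : ℕ) (hh : 2 ≤ h) :
    ¬ {A : Set ℕ | IsMinimalAsymptoticBasisOfOrder A h}.Countable := by
  intro hcount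
  let f : Set ℕ → Set ℕ := fun S => monochromaticSums (encodingColouring hh S)
  have hinj : f.Injective := fun S T hST => Set.ext fun x => by
    rw [mem_iff_mem_monochromaticSums hh S, mem_iff_mem_monochromaticSums hh T]
    exact Set.ext_iff.1 hST _
  have huniv : (Set.univ : Set (Set ℕ)).Countable :=
    (hcount.preimage_of_injOn hinj.injOn).mono fun S _ => isMinimal_encodingColouring hh S
  obtain ⟨g, hg⟩ := (Set.countable_univ_iff.1 huniv).exists_injective_nat
  exact Function.cantor_injective g hg
end

section
/- (Nathanson–Sárközy) If h ≥ 2 and A is a minimal asymptotic basis of order h, then the lower asymptotic density of A satisfies d_L(A) ≤ 1/h. -/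
open Pointwise Filter

section
open scoped Classical

/-- The `p < m` whose translation maps the part of `A` below `m - p` into `A`. -/
noncomputable def translators (A : Set ℕ) (m : ℕ) : Finset ℕ :=
  (Finset.range m).filter fun p => ∀ a ∈ A, p + a < m → p + a ∈ A

/-- The nonelements of `A` lying in a residue class modulo `N` that meets `A`. -/
def holes (A : Set ℕ) (N : ℕ) : Set ℕ := {w | w ∉ A ∧ ∃ a ∈ A, a ≡ w [MOD N]}

/-- The number of elements of `S` that are less than `m`. -/
noncomputable def countBelow (S : Set ℕ) (m : ℕ) : ℕ :=
  ((Finset.range m).filter (· ∈ S)).card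

lemma countBelow_le (S : Set ℕ) (m : ℕ) : countBelow S m ≤ m := by
  simpa [countBelow] using Finset.card_filter_le (Finset.range m) (· ∈ S)

lemma countBelow_add_card_Ico (S : Set ℕ) {b m : ℕ} (h : b ≤ m) :
    countBelow S b + ((Finset.Ico b m).filter (· ∈ S)).card = countBelow S m := by
  unfold countBelow
  rw [← Finset.card_union_of_disjoint, ← Finset.filter_union]
  · congr 2
    ext x
    simp
    omega
  · rw [Finset.disjoint_left]
    intro x hx hy
    simp at hx hy
    omega

lemma exists_small_representatives (A : Set ℕ) {N : ℕ} (hN : 0 < N) :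
    ∃ K, ∀ a ∈ A, ∃ a' ∈ A, a' < K ∧ a' ≡ a [MOD N] := by
  have key : ∀ s, ∃ K, ∀ a ∈ A, a % N < s → ∃ a' ∈ A, a' < K ∧ a' ≡ a [MOD N] := by
    intro s
    induction s with
    | zero => exact ⟨0, by simp⟩
    | succ s ih =>
      obtain ⟨K, hK⟩ := ih
      by_cases h : ∃ a₀ ∈ A, a₀ % N = s
      · obtain ⟨a₀, h₀, h₁⟩ := h
        refine ⟨max K (a₀ + 1), fun a ha has => ?_⟩
        rcases Nat.lt_succ_iff_lt_or_eq.mp has with hs | hs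
        · obtain ⟨a', h1, h2, h3⟩ := hK a ha hs
          exact ⟨a', h1, lt_of_lt_of_le h2 (le_max_left _ _), h3⟩
        · exact ⟨a₀, h₀, by omega, by rw [Nat.ModEq, h₁, hs]⟩
      · refine ⟨K, fun a ha has => hK a ha ?_⟩
        rcases Nat.lt_succ_iff_lt_or_eq.mp has with hs | hs
        · exact hs
        · exact absurd ⟨a, ha, hs⟩ h
  obtain ⟨K, hK⟩ := key N
  exact ⟨K, fun a ha => hK a ha (Nat.mod_lt _ hN)⟩

variable {A : Set ℕ} {N K m : ℕ}

lemma sub_mem_holes (hN : 0 < N) (hK : ∀ a ∈ A, ∃ a' ∈ A, a' < K ∧ a' ≡ a [MOD N])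
    {p w : ℕ} (hp : p ∈ translators A m) (hpK : p + K ≤ m) (hw : w ∈ holes A N)
    (hpw : p ≤ w) (hwm : w < m) : w - p ∈ holes A N := by
  obtain ⟨-, hp⟩ := Finset.mem_filter.mp hp
  refine ⟨fun h => hw.1 ?_, ?_⟩
  · have := hp _ h (by omega)
    rwa [Nat.add_sub_cancel' hpw] at this
  · have key : ∀ i : ℕ, ∃ a ∈ A, a ≡ w + i * p [MOD N] := by
      intro i
      induction i with
      | zero => simpa using hw.2
      | succ i ih =>
        obtain ⟨a, ha, hai⟩ := ih
        obtain ⟨a', ha', hlt, haa⟩ := hK a ha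
        refine ⟨p + a', hp a' ha' (by omega), ?_⟩
        have := (haa.trans hai).add_left p
        convert this using 1
        ring
    obtain ⟨a, ha, h⟩ := key (N - 1)
    refine ⟨a, ha, h.trans ?_⟩
    obtain ⟨n, rfl⟩ : ∃ n, N = n + 1 := ⟨N - 1, by omega⟩
    obtain ⟨x, rfl⟩ := Nat.exists_eq_add_of_le hpw
    have : p + x + (n + 1 - 1) * p = (p + x - p) + (n + 1) * p := by
      simp
      ring
    rw [this]
    simp [Nat.ModEq]

/-- The `y` in `[b, m - d)` that are not in `H` although `y + d` is. -/
noncomputable def exceptions (H : Set ℕ) (b m d : ℕ) : Finset ℕ :=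
  (Finset.Ico b m).filter fun y => y + d < m ∧ y + d ∈ H ∧ y ∉ H

lemma card_exceptions_le (hN : 0 < N) (hK : ∀ a ∈ A, ∃ a' ∈ A, a' < K ∧ a' ≡ a [MOD N])
    {b d : ℕ} (hb : b ∈ translators A m) (hbd : b + d ∈ translators A m)
    (hbK : b + d + K ≤ m) :
    (exceptions (holes A N) b m d).card + countBelow (holes A N) m
      ≤ countBelow (holes A N) (m - b) + countBelow (holes A N) b := by
  set H := holes A N
  rw [← countBelow_add_card_Ico H (show b ≤ m by omega)]
  suffices h : (exceptions H b m d).card + ((Finset.Ico b m).filter (· ∈ H)).card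
      ≤ countBelow H (m - b) by omega
  rw [← Finset.card_union_of_disjoint]
  · refine Finset.card_le_card_of_injOn (· - b) ?_ ?_
    · intro y hy
      simp only [exceptions, Finset.coe_union, Finset.coe_filter, Set.mem_union,
        Set.mem_ofPred_eq, Finset.mem_Ico] at hy
      simp only [Finset.coe_filter, Set.mem_ofPred_eq, Finset.mem_range]
      rcases hy with ⟨⟨h1, h2⟩, h3, h4, -⟩ | ⟨⟨h1, h2⟩, h3⟩
      · refine ⟨by omega, ?_⟩
        have := sub_mem_holes hN hK hbd hbK h4 (by omega) h3
        convert this using 1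
        omega
      · exact ⟨by omega, sub_mem_holes hN hK hb (by omega) h3 h1 h2⟩
    · intro x hx y hy hxy
      simp [exceptions] at hx hy hxy
      omega
  · rw [Finset.disjoint_left]
    intro y hy hy'
    exact (Finset.mem_filter.mp hy).2.2.2 (Finset.mem_filter.mp hy').2

lemma exists_step_into {H : Set ℕ} {y d : ℕ} (hy : y ∉ H) :
    ∀ k, y + k * d ∈ H → ∃ i < k, y + i * d ∉ H ∧ y + (i + 1) * d ∈ H := by
  intro k
  induction k with
  | zero => intro h; simp at h; exact absurd h hy
  | succ k ih =>
    intro h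
    by_cases hk : y + k * d ∈ H
    · obtain ⟨i, hi, h'⟩ := ih hk
      exact ⟨i, by omega, h'⟩
    · exact ⟨k, by omega, hk, h⟩

lemma card_exceptions_mul_le (H : Set ℕ) (b m d k : ℕ) :
    (exceptions H b m (k * d)).card ≤ k * (exceptions H b m d).card := by
  have hsub : exceptions H b m (k * d) ⊆
      (Finset.range k).biUnion fun i => (exceptions H b m d).image (· - i * d) := by
    intro y hy
    simp only [exceptions, Finset.mem_filter, Finset.mem_Ico] at hy
    obtain ⟨⟨h1, h2⟩, h3, h4, h5⟩ := hy
    obtain ⟨i, hi, h6, h7⟩ := exists_step_into h5 k h4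
    have hle : (i + 1) * d ≤ k * d := Nat.mul_le_mul_right _ hi
    have : (i + 1) * d = i * d + d := by ring
    simp only [Finset.mem_biUnion, Finset.mem_range, Finset.mem_image, exceptions,
      Finset.mem_filter, Finset.mem_Ico]
    refine ⟨i, hi, y + i * d, ⟨⟨by omega, by omega⟩, by omega, ?_, h6⟩, by omega⟩
    rw [add_assoc, ← this]
    exact h7
  calc _ ≤ _ := Finset.card_le_card hsub
    _ ≤ ∑ i ∈ Finset.range k, ((exceptions H b m d).image (· - i * d)).card :=
        Finset.card_biUnion_le
    _ ≤ ∑ _i ∈ Finset.range k, (exceptions H b m d).card :=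
        Finset.sum_le_sum fun i _ => Finset.card_image_le
    _ = _ := by simp

/-- The largest element of `Q` that is at most `z`. -/
def floorIn (Q : Finset ℕ) (z : ℕ) : ℕ := (Q.filter (· ≤ z)).sup id

lemma floorIn_le (Q : Finset ℕ) (z : ℕ) : floorIn Q z ≤ z :=
  Finset.sup_le fun _ hq => (Finset.mem_filter.mp hq).2

lemma le_floorIn {Q : Finset ℕ} {q z : ℕ} (hq : q ∈ Q) (hz : q ≤ z) : q ≤ floorIn Q z :=
  Finset.le_sup (f := id) (Finset.mem_filter.mpr ⟨hq, hz⟩)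

lemma floorIn_mem {Q : Finset ℕ} {q z : ℕ} (hq : q ∈ Q) (hz : q ≤ z) : floorIn Q z ∈ Q := by
  obtain ⟨x, hx, h⟩ := Finset.exists_mem_eq_sup (Q.filter (· ≤ z))
    ⟨q, Finset.mem_filter.mpr ⟨hq, hz⟩⟩ id
  rw [floorIn, h]
  exact (Finset.mem_filter.mp hx).1

lemma exists_exception (hK : ∀ a ∈ A, ∃ a' ∈ A, a' < K ∧ a' ≡ a [MOD N]) (hN : 0 < N)
    {b q w : ℕ} (hq : q ∈ translators A m) (hbq : b ≤ q) (hw : w ∈ holes A N)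
    (hqw : q + K ≤ w) (hwm : w < m) :
    ∃ y ∈ exceptions (holes A N) b m N, q ≤ y ∧ y < w := by
  obtain ⟨-, a, ha, hmod⟩ := sub_mem_holes hN hK hq (by omega) hw (by omega) hwm
  obtain ⟨a', ha', hlt, haa⟩ := hK a ha
  have hqa : q + a' ∉ holes A N := fun h =>
    h.1 ((Finset.mem_filter.mp hq).2 a' ha' (by omega))
  have hdvd : N ∣ w - q - a' := (Nat.modEq_iff_dvd' (by omega)).mp (haa.trans hmod)
  obtain ⟨k, hk⟩ := hdvd
  have hwk : q + a' + k * N = w := by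
    rw [mul_comm, ← hk]
    omega
  obtain ⟨i, hi, h1, h2⟩ := exists_step_into hqa k (by rwa [hwk])
  have hle : (i + 1) * N ≤ k * N := Nat.mul_le_mul_right _ hi
  have hs : (i + 1) * N = i * N + N := by ring
  rw [hs] at h2
  refine ⟨q + a' + i * N, ?_, by omega, by omega⟩
  simp only [exceptions, Finset.mem_filter, Finset.mem_Ico]
  exact ⟨⟨by omega, by omega⟩, by omega, by rwa [add_assoc], h1⟩

lemma countBelow_le_of_gaps (hK : ∀ a ∈ A, ∃ a' ∈ A, a' < K ∧ a' ≡ a [MOD N]) (hN : 0 < N)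
    {b : ℕ} {Q : Finset ℕ} (hb : b ∈ Q)
    (hQ : ∀ q ∈ Q, q ∈ translators A m ∧ q + K < m ∧ b ≤ q) {t C : ℝ} (ht : 0 ≤ t) (hC : 0 ≤ C)
    (hω : ∀ n, (countBelow (holes A N) n : ℝ) ≤ t * n + C) :
    (countBelow (holes A N) m : ℝ) ≤ countBelow (holes A N) b + K + t * (m - b - Q.card)
      + (K + 1) * (exceptions (holes A N) b m N).card * (t * K + C + t) := by
  set H := holes A N
  set E := exceptions H b m N
  set Z := (Finset.Ico b (m - K)).filter fun z => z + K ∈ H with hZ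
  set bad := Z.image (floorIn Q)
  set gap : ℕ → Finset ℕ := fun q => (Finset.Ico b (m - K)).filter fun z => floorIn Q z = q with hgap
  have hbQ := hQ b hb
  have hbadQ : bad ⊆ Q := by
    intro q hq
    obtain ⟨z, hz, rfl⟩ := Finset.mem_image.mp hq
    exact floorIn_mem hb (Finset.mem_Ico.mp (Finset.mem_filter.mp hz).1).1
  have hbad_card : bad.card ≤ (K + 1) * E.card := by
    have : bad ⊆ ((Finset.range (K + 1)) ×ˢ E).image fun p => floorIn Q (p.2 - p.1) := by
      intro q hq
      have hqQ := hQ q (hbadQ hq)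
      obtain ⟨z, hz, rfl⟩ := Finset.mem_image.mp hq
      simp only [hZ, Finset.mem_filter, Finset.mem_Ico] at hz
      have hle := floorIn_le Q z
      obtain ⟨y, hy, h1, h2⟩ := exists_exception hK hN hqQ.1 hqQ.2.2 hz.2 (by omega) (by omega)
      simp only [Finset.mem_image, Finset.mem_product, Finset.mem_range, Prod.exists]
      by_cases hyz : y ≤ z
      · refine ⟨0, y, ⟨by omega, hy⟩, le_antisymm ?_ ?_⟩
        · exact le_floorIn (floorIn_mem hb (by omega)) ((floorIn_le _ _).trans (by omega))
        · exact le_floorIn (hbadQ hq) (by omega)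
      · exact ⟨y - z, y, ⟨by omega, hy⟩, by congr 1; omega⟩
    calc bad.card ≤ _ := Finset.card_le_card this
      _ ≤ _ := Finset.card_image_le
      _ = _ := by simp
  have hsplit : countBelow H m ≤ countBelow H b + K + Z.card := by
    rw [← countBelow_add_card_Ico H (show b ≤ m by omega)]
    have h1 : (Finset.Ico b m).filter (· ∈ H) ⊆ Finset.Ico b (b + K) ∪ Z.image (· + K) := by
      intro w hw
      simp only [Finset.mem_filter, Finset.mem_Ico] at hw
      simp only [hZ, Finset.mem_union, Finset.mem_image, Finset.mem_filter, Finset.mem_Ico]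
      by_cases h : w < b + K
      · exact Or.inl ⟨hw.1.1, h⟩
      · refine Or.inr ⟨w - K, ⟨⟨by omega, by omega⟩, ?_⟩, by omega⟩
        rw [Nat.sub_add_cancel (by omega)]
        exact hw.2
    have h2 := (Finset.card_le_card h1).trans (Finset.card_union_le _ _)
    have h3 := Finset.card_image_le (s := Z) (f := (· + K))
    simp at h2 h3
    omega
  have hfib : ∀ q ∈ bad, (((Z.filter fun z => floorIn Q z = q).card : ℕ) : ℝ)
      ≤ t * (gap q).card + (t * K + C) := by
    intro q hq
    have hqQ := hQ q (hbadQ hq)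
    have h1 : (Z.filter fun z => floorIn Q z = q).card ≤ countBelow H ((gap q).card + K) := by
      refine Finset.card_le_card_of_injOn (fun z => z + K - q) ?_ ?_
      · intro z hz
        simp only [hZ, Finset.coe_filter, Set.mem_ofPred_eq, Finset.mem_filter,
          Finset.mem_Ico] at hz
        have hle := floorIn_le Q z
        have h2 : Finset.Icc q z ⊆ gap q := by
          intro x hx
          simp only [Finset.mem_Icc] at hx
          simp only [hgap, Finset.mem_filter, Finset.mem_Ico]
          refine ⟨⟨by omega, by omega⟩, le_antisymm ?_ (le_floorIn (hbadQ hq) hx.1)⟩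
          conv_rhs => rw [← hz.2]
          exact le_floorIn (floorIn_mem (hbadQ hq) hx.1) ((floorIn_le _ _).trans hx.2)
        have h3 := Finset.card_le_card h2
        simp only [Nat.card_Icc] at h3
        simp only [Finset.coe_filter, Set.mem_ofPred_eq, Finset.mem_range]
        exact ⟨by omega, sub_mem_holes hN hK hqQ.1 (by omega) hz.1.2 (by omega) (by omega)⟩
      · intro x hx y hy hxy
        simp only [Finset.coe_filter, Set.mem_ofPred_eq] at hx hy hxy
        have := floorIn_le Q x
        have := floorIn_le Q y
        omega
    have h2 := hω ((gap q).card + K)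
    have h3 : ((Z.filter fun z => floorIn Q z = q).card : ℝ)
      ≤ countBelow H ((gap q).card + K) := by exact_mod_cast h1
    push_cast at h2
    linarith
  have hZcard : (Z.card : ℝ) ≤ t * ∑ q ∈ bad, ((gap q).card : ℝ) + bad.card * (t * K + C) := by
    rw [Finset.card_eq_sum_card_fiberwise (f := floorIn Q) (t := bad)
      (fun z hz => Finset.mem_image_of_mem _ hz)]
    push_cast
    refine (Finset.sum_le_sum hfib).trans (le_of_eq ?_)
    rw [Finset.sum_add_distrib, ← Finset.mul_sum]
    simp only [Finset.sum_const, nsmul_eq_mul]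
  have hgaps : ∑ q ∈ bad, (gap q).card + Q.card ≤ m - K - b + bad.card := by
    have h1 : ∑ q ∈ Q, (gap q).card = m - K - b := by
      rw [← Nat.card_Ico b (m - K)]
      exact (Finset.card_eq_sum_card_fiberwise
        fun z hz => floorIn_mem hb (by simpa using (Finset.mem_Ico.mp hz).1)).symm
    have h2 : (Q \ bad).card ≤ ∑ q ∈ Q \ bad, (gap q).card := by
      rw [Finset.card_eq_sum_ones]
      refine Finset.sum_le_sum fun q hq => Finset.card_pos.mpr ⟨q, ?_⟩
      have hq := (Finset.mem_sdiff.mp hq).1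
      have := hQ q hq
      simp only [hgap, Finset.mem_filter, Finset.mem_Ico]
      exact ⟨⟨this.2.2, by omega⟩, le_antisymm (floorIn_le _ _) (le_floorIn hq le_rfl)⟩
    have h3 := Finset.sum_sdiff hbadQ (f := fun q => (gap q).card)
    have h4 := Finset.card_sdiff_add_card_eq_card hbadQ
    omega
  have hgaps' : ∑ q ∈ bad, ((gap q).card : ℝ) ≤ m - b - Q.card + bad.card := by
    have h1 : ∑ q ∈ bad, (gap q).card + Q.card + b ≤ m + bad.card := by omega
    have h2 : ((∑ q ∈ bad, (gap q).card : ℕ) : ℝ) + Q.card + b ≤ m + bad.card := by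
      exact_mod_cast h1
    push_cast at h2
    linarith
  have hsplit' : (countBelow H m : ℝ) ≤ countBelow H b + K + Z.card := by exact_mod_cast hsplit
  have hbad' : (bad.card : ℝ) ≤ (K + 1) * E.card := by exact_mod_cast hbad_card
  have hΛ : 0 ≤ t * K + C + t := by positivity
  have e1 := mul_le_mul_of_nonneg_left hgaps' ht
  have e2 := mul_le_mul_of_nonneg_right hbad' hΛ
  linarith

lemma exists_close_pair {S : Finset ℕ} {m G s : ℕ} (hS : S ⊆ Finset.range m) (hG : 0 < G)
    (hcard : m / G + 1 + s < S.card) :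
    ∃ b ∈ S, ∃ d, 0 < d ∧ d < G ∧ b + d ∈ S ∧ s ≤ (S.filter (b ≤ ·)).card := by
  set T := S.filter fun p => s ≤ (S.filter (p ≤ ·)).card
  have h1 : (S \ T).card ≤ s := by
    rcases (S \ T).eq_empty_or_nonempty with h | h
    · simp [h]
    · have hmin := Finset.mem_sdiff.mp (Finset.min'_mem _ h)
      set p := Finset.min' _ h
      have hlt : (S.filter (p ≤ ·)).card < s := by
        by_contra hle
        exact hmin.2 (Finset.mem_filter.mpr ⟨hmin.1, not_lt.mp hle⟩)
      refine le_trans (Finset.card_le_card ?_) hlt.le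
      intro q hq
      exact Finset.mem_filter.mpr ⟨(Finset.mem_sdiff.mp hq).1, Finset.min'_le _ _ hq⟩
  have hTS : T ⊆ S := Finset.filter_subset _ S
  have h2 := Finset.card_sdiff_add_card_eq_card hTS
  have hmaps : ∀ p ∈ T, p / G ∈ Finset.range (m / G + 1) := by
    intro p hp
    have := Finset.mem_range.mp (hS (Finset.mem_filter.mp hp).1)
    exact Finset.mem_range.mpr (Nat.lt_succ_of_le (Nat.div_le_div_right this.le))
  have hlt : (Finset.range (m / G + 1)).card < T.card := by
    rw [Finset.card_range]
    omega
  have hwlog : ∀ x ∈ T, ∀ y ∈ T, x < y → x / G = y / G →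
      ∃ b ∈ S, ∃ d, 0 < d ∧ d < G ∧ b + d ∈ S ∧ s ≤ (S.filter (b ≤ ·)).card := by
    intro x hx y hy hxy h
    have hx' := Finset.mem_filter.mp hx
    refine ⟨x, hx'.1, y - x, by omega, ?_, ?_, hx'.2⟩
    · have e1 := Nat.div_add_mod x G
      have e2 := Nat.div_add_mod y G
      have e3 := Nat.mod_lt y hG
      rw [← h] at e2
      omega
    · rw [Nat.add_sub_cancel' hxy.le]
      exact (Finset.mem_filter.mp hy).1
  obtain ⟨x, hx, y, hy, hne, h⟩ := Finset.exists_ne_map_eq_of_card_lt_of_maps_to hlt hmaps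
  rcases lt_or_gt_of_ne hne with hxy | hxy
  · exact hwlog x hx y hy hxy h
  · exact hwlog y hy x hx hxy h.symm

lemma exists_split {G : ℕ} {δ : ℝ} (hK : ∀ a ∈ A, ∃ a' ∈ A, a' < K ∧ a' ≡ a [MOD G.factorial])
    (hδ : 0 < δ) (hG : 8 ≤ δ * G) (hm : δ * m ≤ (translators A m).card)
    (hm_large : 2 * (K + 2 : ℝ) < δ * m) :
    ∃ b ≤ m, ∃ E : ℕ, E + countBelow (holes A G.factorial) m
        ≤ countBelow (holes A G.factorial) (m - b) + countBelow (holes A G.factorial) b ∧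
      ∀ t C : ℝ, 0 ≤ t → 0 ≤ C →
        (∀ n, (countBelow (holes A G.factorial) n : ℝ) ≤ t * n + C) →
        (countBelow (holes A G.factorial) m : ℝ) ≤ countBelow (holes A G.factorial) b + K
          + t * (m - b - δ * m / 4) + (K + 1) * (G.factorial * E) * (t * K + C + t) := by
  have hG0 : 0 < G := by
    rcases Nat.eq_zero_or_pos G with h | h
    · subst h
      norm_num at hG
    · exact h
  have hN := G.factorial_pos
  set P := (translators A m).filter fun p => p + K < m with hP
  have hPm : P ⊆ Finset.range m := fun p hp =>
    (Finset.mem_filter.mp (Finset.mem_filter.mp hp).1).1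
  have hPcard : (translators A m).card ≤ P.card + K := by
    have h1 : translators A m ⊆ P ∪ Finset.Ico (m - K) m := by
      intro p hp
      have := Finset.mem_range.mp (Finset.mem_filter.mp hp).1
      simp only [hP, Finset.mem_union, Finset.mem_filter, Finset.mem_Ico]
      by_cases h : p + K < m
      · exact Or.inl ⟨hp, h⟩
      · exact Or.inr (by omega)
    have h2 := (Finset.card_le_card h1).trans (Finset.card_union_le _ _)
    rw [Nat.card_Ico] at h2
    omega
  have hPcard' : ((translators A m).card : ℝ) ≤ P.card + K := by exact_mod_cast hPcard
  have hceil := Nat.ceil_lt_add_one (show 0 ≤ δ * m / 4 by positivity)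
  have hdiv : ((m / G : ℕ) : ℝ) ≤ δ * m / 8 := by
    refine Nat.cast_div_le.trans ?_
    have : (0 : ℝ) < G := by exact_mod_cast hG0
    rw [div_le_iff₀ this]
    nlinarith [(Nat.cast_nonneg m : (0 : ℝ) ≤ m)]
  have hcard : m / G + 1 + ⌈δ * m / 4⌉₊ < P.card := by
    have : ((m / G + 1 + ⌈δ * m / 4⌉₊ : ℕ) : ℝ) < P.card := by
      push_cast
      linarith
    exact_mod_cast this
  obtain ⟨b, hb, d, hd, hdG, hbd, hs⟩ := exists_close_pair hPm hG0 hcard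
  have hb' := Finset.mem_filter.mp hb
  have hbd' := Finset.mem_filter.mp hbd
  refine ⟨b, by omega, (exceptions (holes A G.factorial) b m d).card,
    card_exceptions_le hN hK hb'.1 hbd'.1 hbd'.2.le, fun t C ht hC hω => ?_⟩
  obtain ⟨k, hk⟩ := Nat.dvd_factorial hd hdG.le
  have hkN : k ≤ G.factorial := by
    rw [hk]
    exact Nat.le_mul_of_pos_left k hd
  have hE : (exceptions (holes A G.factorial) b m G.factorial).card
      ≤ G.factorial * (exceptions (holes A G.factorial) b m d).card := by
    have := card_exceptions_mul_le (holes A G.factorial) b m d k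
    rw [mul_comm k d, ← hk] at this
    exact this.trans (Nat.mul_le_mul_right _ hkN)
  have hE' : ((exceptions (holes A G.factorial) b m G.factorial).card : ℝ)
      ≤ G.factorial * (exceptions (holes A G.factorial) b m d).card := by exact_mod_cast hE
  have hmain := countBelow_le_of_gaps (Q := P.filter (b ≤ ·)) hK hN
    (Finset.mem_filter.mpr ⟨hb, le_rfl⟩) (fun q hq => by
      have h1 := Finset.mem_filter.mp hq
      have h2 := Finset.mem_filter.mp h1.1
      exact ⟨h2.1, h2.2, h1.2⟩) ht hC hω
  have hs' : δ * m / 4 ≤ ((P.filter (b ≤ ·)).card : ℝ) :=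
    (Nat.le_ceil _).trans (by exact_mod_cast hs)
  refine hmain.trans ?_
  gcongr

lemma countBelow_holes_le {G : ℕ} {δ : ℝ} {M : ℕ} (hδ : 0 < δ) (hG : 8 ≤ δ * G)
    (hM : ∀ m ≥ M, δ * m ≤ (translators A m).card) {η : ℝ} (hη : 0 < η) :
    ∃ C : ℝ, ∀ n, (countBelow (holes A G.factorial) n : ℝ) ≤ η * n + C := by
  obtain ⟨K, hK⟩ := exists_small_representatives A G.factorial_pos
  set ω := countBelow (holes A G.factorial)
  set T : Set ℝ := {t | 0 ≤ t ∧ ∃ C : ℝ, 0 ≤ C ∧ ∀ n, (ω n : ℝ) ≤ t * n + C}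
  have hωle : ∀ n, (ω n : ℝ) ≤ n := fun n => by exact_mod_cast countBelow_le _ n
  have hT1 : (1 : ℝ) ∈ T := ⟨zero_le_one, 0, le_rfl, fun n => by simpa using hωle n⟩
  have hTbdd : BddBelow T := ⟨0, fun t ht => ht.1⟩
  have hθ0 : 0 ≤ sInf T := le_csInf ⟨1, hT1⟩ fun t ht => ht.1
  have hup : ∀ η > 0, ∃ C : ℝ, 0 ≤ C ∧ ∀ n, (ω n : ℝ) ≤ (sInf T + η) * n + C := by
    intro η hη
    obtain ⟨t, ⟨ht0, C, hC, h⟩, ht⟩ := exists_lt_of_csInf_lt ⟨1, hT1⟩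
      (show sInf T < sInf T + η by linarith)
    refine ⟨C, hC, fun n => (h n).trans ?_⟩
    gcongr
  rcases hθ0.eq_or_lt with hθ | hθ
  · obtain ⟨C, -, h⟩ := hup η hη
    rw [← hθ, zero_add] at h
    exact ⟨C, h⟩
  exfalso
  set θ := sInf T
  obtain ⟨C₁, hC₁, h₁⟩ := hup (θ * δ / 16) (by positivity)
  set t := θ + θ * δ / 16 with ht
  have ht0 : 0 ≤ t := by positivity
  set Λ := (K + 1) * G.factorial * (t * K + C₁ + t) with hΛ
  have hΛ0 : 0 ≤ Λ := by positivity
  obtain ⟨η, hη, hη1, hη2, hη3⟩ :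
      ∃ η > 0, η ≤ θ * δ / 16 ∧ η < θ ∧ 2 * η * Λ ≤ θ * δ / 16 := by
    refine ⟨min (min (θ * δ / 16) (θ / 2)) (θ * δ / (32 * (Λ + 1))), by positivity, ?_, ?_, ?_⟩
    · exact (min_le_left _ _).trans (min_le_left _ _)
    · have := (min_le_left (min (θ * δ / 16) (θ / 2)) (θ * δ / (32 * (Λ + 1)))).trans
        (min_le_right _ _)
      linarith
    · have h1 := min_le_right (min (θ * δ / 16) (θ / 2)) (θ * δ / (32 * (Λ + 1)))
      rw [le_div_iff₀ (by positivity)] at h1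
      have h2 : 0 < min (min (θ * δ / 16) (θ / 2)) (θ * δ / (32 * (Λ + 1))) := by positivity
      linarith
  obtain ⟨C₂, hC₂, h₂⟩ := hup η hη
  set R := C₂ + K + 2 * C₂ * Λ with hR
  have hR0 : 0 ≤ R := by positivity
  obtain ⟨m, hm⟩ : ∃ m : ℕ,
      (θ - η) * m + (M + 16 * R / (θ * δ) + 2 * (K + 2) / δ) < ω m := by
    by_contra! h
    have : θ - η ∈ T := ⟨by linarith, _, by positivity, h⟩
    have := csInf_le hTbdd this
    linarith
  have hpos : 0 ≤ (θ - η) * m := mul_nonneg (by linarith) (Nat.cast_nonneg m)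
  have hmle := hωle m
  have hR1 : 0 ≤ 16 * R / (θ * δ) := by positivity
  have hK1 : 0 ≤ 2 * (K + 2) / δ := by positivity
  have hM0 : (0 : ℝ) ≤ M := Nat.cast_nonneg M
  have hmM : M ≤ m := by
    have : (M : ℝ) ≤ m := by linarith
    exact_mod_cast this
  have hmR : 16 * R < m * (θ * δ) := by
    rw [← div_lt_iff₀ (by positivity)]
    linarith
  have hmK : 2 * (K + 2) < δ * m := by
    rw [mul_comm δ, ← div_lt_iff₀ hδ]
    linarith
  obtain ⟨b, hbm, E, hE, hmain⟩ := exists_split hK hδ hG (hM m hmM) hmK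
  replace hmain := hmain t C₁ ht0 hC₁ h₁
  have hE' : (E : ℝ) + ω m ≤ ω (m - b) + ω b := by exact_mod_cast hE
  have h3 := h₂ (m - b)
  have h4 := h₂ b
  rw [Nat.cast_sub hbm] at h3
  have hE2 : (E : ℝ) ≤ 2 * η * m + 2 * C₂ := by linarith
  have h5 := mul_le_mul_of_nonneg_right hE2 hΛ0
  have h6 : (K + 1) * (G.factorial * E) * (t * K + C₁ + t) = E * Λ := by rw [hΛ]; ring
  rw [h6] at hmain
  have h7 := mul_le_mul_of_nonneg_right hη3 (Nat.cast_nonneg m : (0 : ℝ) ≤ m)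
  have h8 : (θ + η) * b ≤ t * b := by gcongr; linarith
  have h9 := mul_le_mul_of_nonneg_right hη1 (Nat.cast_nonneg m : (0 : ℝ) ≤ m)
  have h10 : θ * (δ * m) ≤ t * (δ * m) := by gcongr; linarith [show 0 ≤ θ * δ / 16 by positivity]
  nlinarith

/-- If a positive proportion of the integers below every large `m` are translators, then `A` agrees
with a union of residue classes beyond some point. -/
lemma exists_forall_modEq_mem {G : ℕ} {δ : ℝ} {M : ℕ} (hδ : 0 < δ) (hG : 8 ≤ δ * G)
    (hM : ∀ m ≥ M, δ * m ≤ (translators A m).card) :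
    ∃ n₀, ∀ a ∈ A, ∀ n ≥ n₀, a ≡ n [MOD G.factorial] → n ∈ A := by
  obtain ⟨K, hK⟩ := exists_small_representatives A G.factorial_pos
  obtain ⟨C, hC⟩ := countBelow_holes_le hδ hG hM (half_pos hδ)
  obtain ⟨n₁, hn₁⟩ := exists_nat_gt (2 * (C + K + 1) / δ)
  refine ⟨max M n₁, fun a ha n hn hmod => ?_⟩
  by_contra hnA
  have hn_hole : n ∈ holes A G.factorial := ⟨hnA, a, ha, hmod⟩
  have hcard : (translators A (n + 1)).card ≤ countBelow (holes A G.factorial) (n + 1) + K := by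
    have hsub : translators A (n + 1) ⊆
        (((Finset.range (n + 1)).filter (· ∈ holes A G.factorial)).image (n - ·))
          ∪ Finset.Ico (n + 1 - K) (n + 1) := by
      intro p hp
      have hpn := Finset.mem_range.mp (Finset.mem_filter.mp hp).1
      simp only [Finset.mem_union, Finset.mem_image, Finset.mem_filter, Finset.mem_range,
        Finset.mem_Ico]
      by_cases h : p + K ≤ n + 1
      · exact Or.inl ⟨n - p, ⟨by omega, sub_mem_holes G.factorial_pos hK hp h hn_hole (by omega)
          (by omega)⟩, by omega⟩
      · exact Or.inr (by omega)
    have h1 := (Finset.card_le_card hsub).trans (Finset.card_union_le _ _)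
    have h2 := Finset.card_image_le
      (s := (Finset.range (n + 1)).filter (· ∈ holes A G.factorial)) (f := (n - ·))
    rw [Nat.card_Ico] at h1
    unfold countBelow
    omega
  have h1 := hM (n + 1) (by omega)
  have h2 : ((translators A (n + 1)).card : ℝ)
      ≤ countBelow (holes A G.factorial) (n + 1) + K := by exact_mod_cast hcard
  have h3 := hC (n + 1)
  rw [div_lt_iff₀ hδ] at hn₁
  have h4 : (n₁ : ℝ) ≤ n := by exact_mod_cast (le_max_right _ _).trans hn
  have h5 := mul_le_mul_of_nonneg_right h4 hδ.le
  push_cast at h1 h3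
  linarith

section Dyson

variable {k : ℕ} [NeZero k]

/-- Iterated Dyson transforms of `A` with `B 0, …, B (k - 1)` in turn, the `t`-th of them being
based at `t / k` and involving `B (t % k)`. -/
def dysonState (A : Set ℕ) (B : Fin k → Set ℕ) : ℕ → Set ℕ × (Fin k → Set ℕ)
  | 0 => (A, B)
  | t + 1 =>
    ((dysonState A B t).1 ∪ {x | t / k ∈ (dysonState A B t).1 ∧
        ∃ b ∈ (dysonState A B t).2 (Fin.ofNat k t), b + t / k = x},
      fun j => {b | b ∈ (dysonState A B t).2 j ∧
        (j = Fin.ofNat k t → t / k ∈ (dysonState A B t).1 → b + t / k ∈ (dysonState A B t).1)})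

variable {A : Set ℕ} {B : Fin k → Set ℕ}

lemma monotone_dysonState_fst : Monotone fun t => (dysonState A B t).1 :=
  monotone_nat_of_le_succ fun _ _ hx => Or.inl hx

lemma zero_mem_dysonState_snd (hB : ∀ j, 0 ∈ B j) (t : ℕ) (j : Fin k) :
    0 ∈ (dysonState A B t).2 j := by
  induction t with
  | zero => exact hB j
  | succ t ih => exact ⟨ih, fun _ h => by rwa [zero_add]⟩

lemma exists_sum_eq_of_mem_dysonState {t x : ℕ} {c : Fin k → ℕ} (hx : x ∈ (dysonState A B t).1)
    (hc : ∀ i, c i ∈ (dysonState A B t).2 i) :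
    ∃ a ∈ A, ∃ c' : Fin k → ℕ, (∀ i, c' i ∈ B i) ∧ a + ∑ i, c' i = x + ∑ i, c i := by
  induction t generalizing x c with
  | zero => exact ⟨x, hx, c, hc, rfl⟩
  | succ t ih =>
    rcases hx with hx | ⟨he, b, hb, rfl⟩
    · exact ih hx fun i => (hc i).1
    · set j := Fin.ofNat k t
      obtain ⟨a, ha, c', hc', h⟩ := ih (c := Function.update c j b) ((hc j).2 rfl he) (fun i => by
        by_cases hij : i = j
        · subst hij
          simpa using hb
        · simpa [hij] using (hc i).1)
      refine ⟨a, ha, c', hc', h.trans ?_⟩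
      rw [Finset.sum_update_of_mem (Finset.mem_univ j),
        ← Finset.add_sum_erase _ c (Finset.mem_univ j), Finset.sdiff_singleton_eq_erase]
      ring

/-- The `b < m` in `B j` that have not been discarded at any of the first `t` transforms that moved
them to a position below `m`. -/
noncomputable def survivors (A : Set ℕ) (B : Fin k → Set ℕ) (m t : ℕ) (j : Fin k) : Finset ℕ :=
  (Finset.range m).filter fun b =>
    b ∈ B j ∧ ∀ s < t, b + s / k < m → b ∈ (dysonState A B (s + 1)).2 j

lemma mem_dysonState_of_mem_survivors {m t b : ℕ} {j : Fin k} (hb : b ∈ survivors A B m t j)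
    (hbm : b + t / k < m) : b ∈ (dysonState A B t).2 j := by
  obtain ⟨-, hb₀, h⟩ := Finset.mem_filter.mp hb
  cases t with
  | zero => exact hb₀
  | succ t =>
    exact h t t.lt_succ_self
      (lt_of_le_of_lt (Nat.add_le_add_left (Nat.div_le_div_right t.le_succ) b) hbm)

lemma mem_survivors_succ {m t b : ℕ} {j : Fin k} (hb : b ∈ survivors A B m t j)
    (h : b + t / k < m → b ∈ (dysonState A B (t + 1)).2 j) : b ∈ survivors A B m (t + 1) j := by
  obtain ⟨h0, hb₀, h1⟩ := Finset.mem_filter.mp hb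
  refine Finset.mem_filter.mpr ⟨h0, hb₀, fun s hs hsm => ?_⟩
  rcases Nat.lt_succ_iff_lt_or_eq.mp hs with hs | rfl
  · exact h1 s hs hsm
  · exact h hsm

lemma card_survivors_le_of_ne {m t : ℕ} {j : Fin k} (hj : j ≠ Fin.ofNat k t) :
    (survivors A B m t j).card ≤ (survivors A B m (t + 1) j).card :=
  Finset.card_le_card fun _ hb => mem_survivors_succ hb fun hbm =>
    ⟨mem_dysonState_of_mem_survivors hb hbm, fun h => absurd h hj⟩

lemma countBelow_add_card_survivors_le (m t : ℕ) :
    countBelow (dysonState A B t).1 m + (survivors A B m t (Fin.ofNat k t)).card ≤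
      countBelow (dysonState A B (t + 1)).1 m
        + (survivors A B m (t + 1) (Fin.ofNat k t)).card := by
  set j := Fin.ofNat k t
  set F := (Finset.range m).filter (· ∈ (dysonState A B t).1)
  set F' := (Finset.range m).filter (· ∈ (dysonState A B (t + 1)).1)
  have hFF : F ⊆ F' := fun x hx => Finset.mem_filter.mpr
    ⟨(Finset.mem_filter.mp hx).1, Or.inl (Finset.mem_filter.mp hx).2⟩
  have h1 : (survivors A B m t j \ survivors A B m (t + 1) j).card ≤ (F' \ F).card := by
    refine Finset.card_le_card_of_injOn (· + t / k) ?_ fun x _ y _ hxy => Nat.add_right_cancel hxy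
    intro b hb
    obtain ⟨hb, hb'⟩ := Finset.mem_sdiff.mp hb
    have hbm : b + t / k < m := by
      by_contra h
      exact hb' (mem_survivors_succ hb fun h' => absurd h' h)
    have hbB := mem_dysonState_of_mem_survivors hb hbm
    have hkill : ¬ (t / k ∈ (dysonState A B t).1 → b + t / k ∈ (dysonState A B t).1) :=
      fun h => hb' (mem_survivors_succ hb fun _ => ⟨hbB, fun _ => h⟩)
    push Not at hkill
    refine Finset.mem_sdiff.mpr ⟨Finset.mem_filter.mpr ⟨Finset.mem_range.mpr hbm, ?_⟩, ?_⟩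
    · exact Or.inr ⟨hkill.1, b, hbB, rfl⟩
    · exact fun h => hkill.2 (Finset.mem_filter.mp h).2
  have h2 := Finset.card_sdiff_add_card_eq_card hFF
  have h3 := Finset.card_le_card_sdiff_add_card (s := survivors A B m t j)
    (t := survivors A B m (t + 1) j)
  change F.card + _ ≤ F'.card + _
  omega

lemma countBelow_add_sum_le (m t : ℕ) :
    countBelow A m + ∑ j, countBelow (B j) m ≤
      countBelow (dysonState A B t).1 m + ∑ j, (survivors A B m t j).card := by
  induction t with
  | zero =>
    simp only [survivors, countBelow, dysonState, Nat.not_lt_zero, IsEmpty.forall_iff,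
      implies_true, and_true]
    exact le_of_eq (by congr!)
  | succ t ih =>
    refine ih.trans ?_
    have h1 := countBelow_add_card_survivors_le (A := A) (B := B) m t
    rw [← Finset.add_sum_erase _ _ (Finset.mem_univ (Fin.ofNat k t)),
      ← Finset.add_sum_erase _ _ (Finset.mem_univ (Fin.ofNat k t)), ← add_assoc, ← add_assoc]
    exact add_le_add h1 (Finset.sum_le_sum fun j hj =>
      card_survivors_le_of_ne (Finset.ne_of_mem_erase hj))

lemma mem_dysonState_mul {t a : ℕ} (ha : a ∈ (dysonState A B t).1) :
    a ∈ (dysonState A B (a * k)).1 := by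
  induction t with
  | zero => exact monotone_dysonState_fst (Nat.zero_le _) ha
  | succ t ih =>
    rcases ha with ha | ⟨he, b, hb, rfl⟩
    · exact ih ha
    · rcases Nat.eq_zero_or_pos b with rfl | hb0
      · rw [zero_add] at ih ⊢
        exact ih he
      · refine monotone_dysonState_fst (a := t + 1) ?_ (Or.inr ⟨he, b, hb, rfl⟩)
        exact (Nat.div_lt_iff_lt_mul (NeZero.pos k)).mp (Nat.lt_add_of_pos_left hb0)

lemma survivors_subset_translators (m : ℕ) (j : Fin k) :
    survivors A B m (m * k) j ⊆ translators (⋃ t, (dysonState A B t).1) m := by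
  intro b hb
  obtain ⟨hbm, -, h⟩ := Finset.mem_filter.mp hb
  refine Finset.mem_filter.mpr ⟨hbm, fun a ha hbam => ?_⟩
  obtain ⟨t, ht⟩ := Set.mem_iUnion.mp ha
  have hk := NeZero.pos k
  have hdiv : (a * k + j) / k = a := by
    rw [mul_comm, Nat.mul_add_div hk, Nat.div_eq_of_lt j.isLt, add_zero]
  have hmod : j = Fin.ofNat k (a * k + j) := by
    ext
    simp [Nat.mod_eq_of_lt j.isLt]
  have hlt : a * k + j < m * k := by
    have : (a + 1) * k ≤ m * k := Nat.mul_le_mul_right k (by omega)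
    have := j.isLt
    linarith
  have hb' := (h _ hlt (by rwa [hdiv])).2 hmod
  rw [hdiv] at hb'
  exact Set.mem_iUnion.mpr
    ⟨_, hb' (monotone_dysonState_fst (Nat.le_add_right _ _) (mem_dysonState_mul ht))⟩

/-- If `A` and the `B j` contain `0` and together have lower density exceeding `1`, then the sumset
of all of them contains every large multiple of some positive integer, which depends only on the
excess and on the number of summands. -/
lemma exists_sum_eq_of_dvd {G M : ℕ} {ε : ℝ} (hA : 0 ∈ A) (hB : ∀ j, 0 ∈ B j) (hε : 0 < ε)
    (hG : 8 * k ≤ ε * G)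
    (hM : ∀ m ≥ M, (1 + ε) * m ≤ countBelow A m + ∑ j, (countBelow (B j) m : ℝ)) :
    ∃ n₀, ∀ n ≥ n₀, G.factorial ∣ n →
      ∃ a ∈ A, ∃ c : Fin k → ℕ, (∀ i, c i ∈ B i) ∧ a + ∑ i, c i = n := by
  have hk : (0 : ℝ) < k := by exact_mod_cast NeZero.pos k
  have htrans : ∀ m ≥ M,
      ε / k * m ≤ (translators (⋃ t, (dysonState A B t).1) m).card := by
    intro m hm
    have h1 := countBelow_add_sum_le (A := A) (B := B) m (m * k)
    have h2 := countBelow_le (dysonState A B (m * k)).1 m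
    have h3 : ∑ j, (survivors A B m (m * k) j).card
        ≤ k * (translators (⋃ t, (dysonState A B t).1) m).card := by
      refine (Finset.sum_le_sum fun j _ =>
        Finset.card_le_card (survivors_subset_translators m j)).trans ?_
      simp
    have h4 : (countBelow A m : ℝ) + ∑ j, (countBelow (B j) m : ℝ)
        ≤ m + k * (translators (⋃ t, (dysonState A B t).1) m).card := by
      exact_mod_cast h1.trans (add_le_add h2 h3)
    have h5 := hM m hm
    rw [div_mul_eq_mul_div, div_le_iff₀ hk]
    linarith
  obtain ⟨n₀, hn₀⟩ := exists_forall_modEq_mem (div_pos hε hk)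
    (by rwa [div_mul_eq_mul_div, le_div_iff₀ hk]) htrans
  refine ⟨n₀, fun n hn hdvd => ?_⟩
  obtain ⟨t, ht⟩ := Set.mem_iUnion.mp (hn₀ 0 (Set.mem_iUnion.mpr ⟨0, hA⟩) n hn
    ((Nat.modEq_zero_iff_dvd.mpr hdvd).symm))
  obtain ⟨a, ha, c, hc, h⟩ := exists_sum_eq_of_mem_dysonState (c := fun _ => 0) ht
    fun i => zero_mem_dysonState_snd hB t i
  exact ⟨a, ha, c, hc, by simpa using h⟩

end Dyson

lemma countingFn_le_countBelow_add (B : Set ℕ) (b m : ℕ) :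
    countingFn B m ≤ countBelow {x | x + b ∈ B} m + b + 1 := by
  set F := (Finset.range m).filter (· ∈ {x | x + b ∈ B}) with hF
  have hsub : B ∩ Set.Icc 1 m ⊆ ((F.image (· + b) ∪ Finset.range b ∪ {m} : Finset ℕ) : Set ℕ) := by
    rintro x ⟨hx, h1, h2⟩
    simp only [Finset.coe_union, Set.mem_union, Finset.mem_coe, Finset.mem_image,
      Finset.mem_range, Finset.mem_singleton, hF, Finset.mem_filter, Set.mem_ofPred_eq]
    by_cases hxb : x < b
    · exact Or.inl (Or.inr hxb)
    · by_cases hxm : x = m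
      · exact Or.inr hxm
      · exact Or.inl (Or.inl ⟨x - b, ⟨by omega, by rwa [Nat.sub_add_cancel (by omega)]⟩,
          by omega⟩)
  have h1 := Set.ncard_le_ncard hsub (Finset.finite_toSet _)
  rw [Set.ncard_coe_finset] at h1
  have h2 := Finset.card_union_le (F.image (· + b) ∪ Finset.range b) {m}
  have h3 := Finset.card_union_le (F.image (· + b)) (Finset.range b)
  have h4 := Finset.card_image_le (s := F) (f := (· + b))
  rw [Finset.card_singleton] at h2
  rw [Finset.card_range] at h3
  change _ ≤ F.card + b + 1
  unfold countingFn
  omega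

lemma countingFn_le_diff_singleton_add_one (A : Set ℕ) (a n : ℕ) :
    countingFn A n ≤ countingFn (A \ {a}) n + 1 := by
  unfold countingFn
  have h := Set.pred_ncard_le_ncard_sdiff_singleton (A ∩ Set.Icc 1 n) a
  have heq : (A ∩ Set.Icc 1 n) \ {a} = A \ {a} ∩ Set.Icc 1 n := by
    ext x
    simp only [Set.mem_sdiff, Set.mem_inter_iff]
    tauto
  rw [heq] at h
  omega

lemma exists_sum_eq_of_modEq {k : ℕ} [NeZero k] {B : Set ℕ} {G M : ℕ} {c ε D : ℝ} (hε : 0 < ε)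
    (hc : (k + 1) * c = 1 + 2 * ε) (hG : 8 * k ≤ ε * G)
    (hM : ∀ n ≥ M, c * n ≤ countingFn B n + D) {b : Fin (k + 1) → ℕ} (hb : ∀ i, b i ∈ B) :
    ∃ n₀, ∀ n ≥ n₀, ∑ i, b i ≡ n [MOD G.factorial] →
      ∃ c : Fin (k + 1) → ℕ, (∀ i, c i ∈ B) ∧ ∑ i, c i = n := by
  obtain ⟨M', hM'⟩ := exists_nat_gt ((∑ i, (b i + 1 + D : ℝ)) / ε)
  have hcount : ∀ m ≥ max M M', (1 + ε) * (m : ℝ) ≤ countBelow {x | x + b 0 ∈ B} m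
      + ∑ j : Fin k, (countBelow {x | x + b j.succ ∈ B} m : ℝ) := by
    intro m hm
    rw [← Fin.sum_univ_succ (fun i => (countBelow {x | x + b i ∈ B} m : ℝ))]
    have h1 : ∑ i : Fin (k + 1), (c * m - (b i + 1 + D))
        ≤ ∑ i, (countBelow {x | x + b i ∈ B} m : ℝ) := by
      refine Finset.sum_le_sum fun i _ => ?_
      have h2 := hM m ((le_max_left _ _).trans hm)
      have h3 : (countingFn B m : ℝ) ≤ countBelow {x | x + b i ∈ B} m + b i + 1 := by
        exact_mod_cast countingFn_le_countBelow_add B (b i) m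
      linarith
    rw [Finset.sum_sub_distrib, Finset.sum_const, Finset.card_univ, Fintype.card_fin,
      nsmul_eq_mul, ← mul_assoc] at h1
    push_cast at h1
    rw [hc] at h1
    rw [div_lt_iff₀ hε] at hM'
    have h4 : (M' : ℝ) * ε ≤ m * ε :=
      mul_le_mul_of_nonneg_right (by exact_mod_cast (le_max_right _ _).trans hm) hε.le
    linarith
  obtain ⟨n₀, hn₀⟩ := exists_sum_eq_of_dvd (A := {x | x + b 0 ∈ B})
    (B := fun j : Fin k => {x | x + b j.succ ∈ B}) (by simpa using hb 0)
    (fun j => by simpa using hb j.succ) hε hG hcount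
  refine ⟨n₀ + ∑ i, b i, fun n hn hmod => ?_⟩
  obtain ⟨a, ha, d, hd, h⟩ := hn₀ (n - ∑ i, b i) (by omega)
    ((Nat.modEq_iff_dvd' (by omega)).mp hmod)
  refine ⟨Fin.cons (a + b 0) fun j => d j + b j.succ, fun i => ?_, ?_⟩
  · refine Fin.cases ?_ (fun j => ?_) i
    · exact ha
    · exact hd j
  · rw [Fin.sum_univ_succ] at hn h ⊢
    simp only [Fin.cons_zero, Fin.cons_succ, Finset.sum_add_distrib]
    omega

lemma infinite_of_lt_countingFn {A : Set ℕ} {c : ℝ} {M : ℕ} (hc : 0 < c)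
    (hM : ∀ n ≥ M, c * n ≤ countingFn A n) : A.Infinite := by
  intro hfin
  obtain ⟨n, hn⟩ := exists_nat_gt (A.ncard / c)
  have h1 := hM (max M n) (le_max_left _ _)
  have h2 : (countingFn A (max M n) : ℝ) ≤ A.ncard := by
    exact_mod_cast Set.ncard_le_ncard Set.inter_subset_left hfin
  rw [div_lt_iff₀ hc] at hn
  have h3 : (n : ℝ) ≤ (max M n : ℕ) := by exact_mod_cast le_max_right M n
  have h4 := mul_le_mul_of_nonneg_left h3 hc.le
  linarith

lemma exists_diff_singleton_isAsymptoticBasis {k : ℕ} [NeZero k] {A : Set ℕ} {c : ℝ} {M : ℕ}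
    (hA : IsAsymptoticBasisOfOrder A (k + 1)) (hc : 1 < (k + 1) * c)
    (hM : ∀ n ≥ M, c * n ≤ countingFn A n) :
    ∃ a ∈ A, IsAsymptoticBasisOfOrder (A \ {a}) (k + 1) := by
  have hε : 0 < ((k + 1) * c - 1) / 2 := by linarith
  obtain ⟨G, hG⟩ := exists_nat_ge (8 * k / (((k + 1) * c - 1) / 2))
  rw [div_le_iff₀' hε] at hG
  have hc0 : 0 < c := pos_of_mul_pos_right (zero_lt_one.trans hc) (by positivity)
  obtain ⟨a, ha, a', ha', hne, hmod⟩ :=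
    (infinite_of_lt_countingFn hc0 hM).exists_ne_map_eq_of_mapsTo (f := (· % G.factorial))
      (t := Set.Iio G.factorial) (fun x _ => Nat.mod_lt x G.factorial_pos) (Set.finite_Iio _)
  refine ⟨a, ha, ?_⟩
  have hM' : ∀ n ≥ M, c * n ≤ countingFn (A \ {a}) n + (1 : ℝ) := fun n hn =>
    (hM n hn).trans (by exact_mod_cast countingFn_le_diff_singleton_add_one A a n)
  obtain ⟨x₀, hx₀⟩ := eventually_atTop.mp hA
  have hres : ∀ r, ∃ n₀, ∀ n ≥ n₀, r ≡ n [MOD G.factorial] →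
      ∃ c : Fin (k + 1) → ℕ, (∀ i, c i ∈ A \ {a}) ∧ ∑ i, c i = n := by
    intro r
    obtain ⟨d, hd, hsum⟩ := hx₀ (r + x₀ * G.factorial)
      ((Nat.le_mul_of_pos_right x₀ G.factorial_pos).trans (Nat.le_add_left _ _))
    obtain ⟨n₀, hn₀⟩ := exists_sum_eq_of_modEq (B := A \ {a})
      (b := fun i => if d i = a then a' else d i) hε (by ring) hG hM' (fun i => by
        by_cases h : d i = a
        · simpa [h] using ⟨ha', hne.symm⟩
        · simpa [h] using hd i)
    refine ⟨n₀, fun n hn hr => hn₀ n hn (Nat.ModEq.trans ?_ hr)⟩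
    have h1 : ∑ i, (if d i = a then a' else d i) ≡ ∑ i, d i [MOD G.factorial] := by
      refine Nat.ModEq.sum fun i _ => ?_
      split_ifs with h
      · rw [h]
        exact hmod.symm
      · rfl
    refine h1.trans ?_
    rw [hsum]
    simp [Nat.ModEq]
  choose n₀ hn₀ using hres
  refine eventually_atTop.mpr ⟨(Finset.range G.factorial).sup n₀, fun n hn => ?_⟩
  refine hn₀ (n % G.factorial) n ((Finset.le_sup (f := n₀) ?_).trans hn) (Nat.mod_modEq _ _)
  exact Finset.mem_range.mpr (Nat.mod_lt _ G.factorial_pos)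

end

theorem nathanson_sarkozy_density_bound (h : ℕ) (hh : 2 ≤ h) (A : Set ℕ)
    (hA : IsMinimalAsymptoticBasisOfOrder A h) :
    lowerDensity A ≤ 1 / (h : ℝ) := by
  by_contra! hlt
  obtain ⟨k, rfl⟩ : ∃ k, h = k + 1 := ⟨h - 1, by omega⟩
  have : NeZero k := ⟨by omega⟩
  obtain ⟨c, hc, hcA⟩ := exists_between hlt
  have hbdd : IsBoundedUnder (· ≥ ·) atTop fun n : ℕ => (countingFn A n : ℝ) / n :=
    isBoundedUnder_of ⟨0, fun n => by positivity⟩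
  obtain ⟨M, hM⟩ := eventually_atTop.mp (eventually_lt_of_lt_liminf hcA hbdd)
  rw [div_lt_iff₀' (by positivity)] at hc
  push_cast at hc
  obtain ⟨a, ha, hbasis⟩ := exists_diff_singleton_isAsymptoticBasis (M := max M 1) hA.1 hc
    fun n hn => by
      have hn0 : (0 : ℝ) < n := by exact_mod_cast (le_max_right M 1).trans hn
      exact ((lt_div_iff₀ hn0).mp (hM n ((le_max_left M 1).trans hn))).le
  exact hA.2 _ (Set.sdiff_singleton_ssubset.mpr ha) hbasis
end

section
/- (Erdős–Nathanson) For every integer h ≥ 2, there exists a minimal asymptotic basis A of order h whose asymptotic density exists and equals 1/h, i.e., lim_{n→∞} A(n)/n = 1/h. -/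
open Pointwise Filter

namespace ErdosNathanson

/-- The sparse sequence `0, b, b ^ 2, b ^ 3, …` with `b = 4 * (p + 1) + 1`. -/
def term (p i : ℕ) : ℕ := if i = 0 then 0 else (4 * (p + 1) + 1) ^ i

/-- The index of the sparse term to be protected at stage `k`. -/
def stageIndex (k : ℕ) : ℕ := if k % 2 = 0 then k + 1 else (Nat.unpair (k / 2)).1

/-- The quotient of the element congruent to `1` to be protected at stage `k`. -/
def stageTarget (p k : ℕ) : ℕ :=
  if k % 2 = 0 then (Nat.unpair (k / 2)).1 else (p + 1) * (4 * (p + 1) + 1) ^ (k + 1)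

/-- The integer that has a unique representation after stage `k`. -/
def critical (p k : ℕ) : ℕ := stageTarget p k + p * term p (stageIndex k)

/-- The integers whose removal destroys all representations of `critical p k` but one. -/
def obstruction (p k : ℕ) : Set ℕ :=
  {m | ∃ c : Fin p → ℕ, m + ∑ j, term p (c j) = critical p k ∧ c ≠ fun _ => stageIndex k}

/-- The integers removed before stage `k`. -/
def removedBefore (p : ℕ) : ℕ → Set ℕ
  | 0 => ∅
  | k + 1 => removedBefore p k ∪ {m | m ∈ obstruction p k ∧ stageTarget p k ∉ removedBefore p k}

/-- The integers removed at some stage. -/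
def removed (p : ℕ) : Set ℕ :=
  {m | ∃ k, m ∈ obstruction p k ∧ stageTarget p k ∉ removedBefore p k}

/-- The minimal asymptotic basis of order `p + 1`. -/
def basis (p : ℕ) : Set ℕ :=
  {a | (∃ m, m ∉ removed p ∧ a = 1 + (p + 1) * m) ∨ ∃ i, a = (p + 1) * term p i}

variable {p : ℕ}

lemma mem_removedBefore {k m : ℕ} : m ∈ removedBefore p k ↔
    ∃ j < k, m ∈ obstruction p j ∧ stageTarget p j ∉ removedBefore p j := by
  induction k with
  | zero => simp [removedBefore]
  | succ k ih =>
    simp only [removedBefore, Set.mem_union, Set.mem_ofPred_eq, ih]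
    constructor
    · rintro (⟨j, hj, h⟩ | h)
      · exact ⟨j, by omega, h⟩
      · exact ⟨k, by omega, h⟩
    · rintro ⟨j, hj, h⟩
      rcases Nat.lt_succ_iff_lt_or_eq.mp hj with h' | rfl
      · exact Or.inl ⟨j, h', h⟩
      · exact Or.inr h

lemma removedBefore_subset (k : ℕ) : removedBefore p k ⊆ removed p := by
  intro m hm
  obtain ⟨j, -, h⟩ := mem_removedBefore.mp hm
  exact ⟨j, h⟩

lemma term_zero : term p 0 = 0 := by simp [term]

lemma term_of_pos {i : ℕ} (hi : 0 < i) : term p i = (4 * (p + 1) + 1) ^ i := by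
  simp [term, hi.ne']

lemma term_le_pow (i : ℕ) : term p i ≤ (4 * (p + 1) + 1) ^ i := by
  unfold term; split_ifs <;> simp

lemma term_strictMono : StrictMono (term p) := by
  apply strictMono_nat_of_lt_succ
  intro n
  rw [term_of_pos n.succ_pos]
  calc term p n ≤ (4 * (p + 1) + 1) ^ n := term_le_pow n
    _ < _ := Nat.pow_lt_pow_right (by omega) (by omega)

lemma pow_succ_le_pow {j k : ℕ} (h : j < k) :
    (4 * (p + 1) + 1) ^ (j + 1) ≤ (4 * (p + 1) + 1) ^ k :=
  Nat.pow_le_pow_right (by omega) h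

lemma stageIndex_le (k : ℕ) : stageIndex k ≤ k + 1 := by
  unfold stageIndex
  have := Nat.unpair_left_le (k / 2)
  split_ifs <;> omega

lemma critical_le (k : ℕ) : critical p k ≤ 2 * (p + 1) * (4 * (p + 1) + 1) ^ (k + 1) := by
  have h1 : term p (stageIndex k) ≤ (4 * (p + 1) + 1) ^ (k + 1) :=
    (term_strictMono.monotone (stageIndex_le k)).trans (term_le_pow _)
  have h2 : stageTarget p k ≤ (p + 1) * (4 * (p + 1) + 1) ^ (k + 1) := by
    unfold stageTarget
    split_ifs
    · have := Nat.unpair_left_le (k / 2)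
      have : k + 1 < (4 * (p + 1) + 1) ^ (k + 1) := Nat.lt_pow_self (by omega)
      have := Nat.le_mul_of_pos_left ((4 * (p + 1) + 1) ^ (k + 1)) (show 0 < p + 1 by omega)
      omega
    · exact le_rfl
  unfold critical
  nlinarith

lemma index_le_of_sum_le {k : ℕ} {c : Fin p → ℕ}
    (h : ∑ j, term p (c j) ≤ critical p k) (j : Fin p) : c j ≤ k + 1 := by
  by_contra! hj
  have h1 : term p (k + 2) ≤ term p (c j) := term_strictMono.monotone hj
  have h2 : term p (c j) ≤ ∑ j, term p (c j) :=
    Finset.single_le_sum (f := fun j => term p (c j)) (fun _ _ => Nat.zero_le _)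
      (Finset.mem_univ j)
  have h3 := critical_le (p := p) k
  rw [term_of_pos (by omega), pow_succ] at h1
  have : 0 < (4 * (p + 1) + 1) ^ (k + 1) := by positivity
  nlinarith

lemma eq_const_of_sum_eq {c : Fin p → ℕ} {i : ℕ}
    (h : ∑ j, term p (c j) = p * term p i) : c = fun _ => i := by
  have hle : ∀ j, c j ≤ i := by
    intro j
    by_contra! hj
    have h1 : term p (i + 1) ≤ term p (c j) := term_strictMono.monotone hj
    have h2 : term p (c j) ≤ ∑ j, term p (c j) :=
      Finset.single_le_sum (f := fun j => term p (c j)) (fun _ _ => Nat.zero_le _)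
        (Finset.mem_univ j)
    rw [term_of_pos (by omega), pow_succ] at h1
    have h3 := term_le_pow (p := p) i
    have : 0 < (4 * (p + 1) + 1) ^ i := by positivity
    nlinarith
  have heq : ∑ j, term p (c j) = ∑ _j : Fin p, term p i := by simp [h]
  rw [Finset.sum_eq_sum_iff_of_le (fun j _ => term_strictMono.monotone (hle j))] at heq
  funext j
  exact term_strictMono.injective (heq j (Finset.mem_univ j))

lemma sum_term_modEq (c : Fin p → ℕ) :
    ∑ j, term p (c j) ≡ (Finset.univ.filter fun j => c j ≠ 0).card [MOD 4 * (p + 1)] := by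
  rw [Finset.card_filter]
  refine Nat.ModEq.sum fun j _ => ?_
  by_cases hj : c j = 0
  · simp [hj, term_zero, Nat.ModEq.refl]
  · rw [term_of_pos (by omega), if_pos hj]
    have : 4 * (p + 1) + 1 ≡ 1 [MOD 4 * (p + 1)] := by simp [Nat.ModEq]
    simpa using this.pow (c j)

lemma card_support_le (c : Fin p → ℕ) : (Finset.univ.filter fun j => c j ≠ 0).card ≤ p := by
  simpa using Finset.card_filter_le (Finset.univ : Finset (Fin p)) (fun j => c j ≠ 0)

lemma le_of_mem_obstruction {k m : ℕ} (h : m ∈ obstruction p k) : m ≤ critical p k := by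
  obtain ⟨c, hc, -⟩ := h
  omega

lemma pow_le_of_mem_obstruction {k m : ℕ} (h : m ∈ obstruction p k) :
    4 * (p + 1) * (4 * (p + 1) + 1) ^ k ≤ m := by
  obtain ⟨c, hc, hne⟩ := h
  have hle := index_le_of_sum_le (p := p) (k := k) (c := c) (by omega)
  have hterm : ∀ j, term p (c j) ≤ (4 * (p + 1) + 1) ^ (k + 1) := fun j =>
    (term_strictMono.monotone (hle j)).trans (term_le_pow _)
  by_cases hk : k % 2 = 0
  · have hidx : stageIndex k = k + 1 := by simp [stageIndex, hk]
    obtain ⟨j, hj⟩ := Function.ne_iff.mp hne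
    have hj' : c j ≤ k := by have := hle j; omega
    have h1 : term p (c j) ≤ (4 * (p + 1) + 1) ^ k :=
      (term_strictMono.monotone hj').trans (term_le_pow _)
    have h2 : ∑ i ∈ Finset.univ.erase j, term p (c i) ≤
        (p - 1) * (4 * (p + 1) + 1) ^ (k + 1) := by
      have := Finset.sum_le_card_nsmul (Finset.univ.erase j) (fun i => term p (c i)) _
        (fun i _ => hterm i)
      simpa using this
    have h3 := Finset.add_sum_erase Finset.univ (fun i => term p (c i)) (Finset.mem_univ j)
    have hp : 0 < p := j.pos
    obtain ⟨q, rfl⟩ : ∃ q, p = q + 1 := ⟨p - 1, by omega⟩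
    simp only [critical, hidx, term_of_pos (show 0 < k + 1 by omega)] at hc
    simp only [Nat.add_sub_cancel] at h2
    have h4 : (4 * (q + 1 + 1) + 1) ^ (k + 1) =
      (4 * (q + 1 + 1) + 1) ^ k * (4 * (q + 1 + 1) + 1) := pow_succ _ _
    nlinarith
  · have h2 : ∑ i, term p (c i) ≤ p * (4 * (p + 1) + 1) ^ (k + 1) := by
      have := Finset.sum_le_card_nsmul Finset.univ (fun i => term p (c i)) _
        (fun i _ => hterm i)
      simpa using this
    simp only [critical, stageTarget, hk, if_false] at hc
    have h3 : 0 ≤ p * term p (stageIndex k) := Nat.zero_le _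
    have h5 : 0 < (4 * (p + 1) + 1) ^ k := by positivity
    have h4 : (4 * (p + 1) + 1) ^ (k + 1) =
      (4 * (p + 1) + 1) ^ k * (4 * (p + 1) + 1) := pow_succ _ _
    nlinarith

lemma not_mem_removed_of_lt {m : ℕ} (h : m < 4 * (p + 1)) : m ∉ removed p := by
  rintro ⟨k, hk, -⟩
  have := pow_le_of_mem_obstruction hk
  have : 0 < (4 * (p + 1) + 1) ^ k := by positivity
  nlinarith

lemma stageTarget_not_mem_removed {k : ℕ} (h : stageTarget p k ∉ removedBefore p k) :
    stageTarget p k ∉ removed p := by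
  rintro ⟨j, hj, hg⟩
  rcases lt_trichotomy j k with hlt | rfl | hlt
  · exact h (mem_removedBefore.mpr ⟨j, hlt, hj, hg⟩)
  · obtain ⟨c, hc, hne⟩ := hj
    exact hne (eq_const_of_sum_eq (by unfold critical at hc; omega))
  · have h1 := pow_le_of_mem_obstruction hj
    have h2 := critical_le (p := p) k
    have h3 : stageTarget p k ≤ critical p k := Nat.le_add_right _ _
    have h4 := pow_succ_le_pow (p := p) hlt
    have : 0 < (4 * (p + 1) + 1) ^ j := by positivity
    nlinarith

/-- Two removed integers cannot differ by a small shift whose residue modulo `4 * (p + 1)`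
exceeds what sums of `p` sparse terms can account for. -/
lemma not_mem_removed_of_add {k m z : ℕ} {c : Fin p → ℕ}
    (hm : m + z ∈ obstruction p k) (hc : m + z + ∑ j, term p (c j) = critical p k)
    (hz : z < 2 * (p + 1) * (4 * (p + 1) + 1))
    (hres : p < ((Finset.univ.filter fun j => c j ≠ 0).card + z) % (4 * (p + 1))) :
    m ∉ removed p := by
  rintro ⟨j, hj, -⟩
  have hk1 := pow_le_of_mem_obstruction hm
  have hk2 := (le_of_mem_obstruction hm).trans (critical_le k)
  have hj1 := pow_le_of_mem_obstruction hj
  have hj2 := (le_of_mem_obstruction hj).trans (critical_le j)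
  rcases lt_trichotomy j k with hlt | rfl | hlt
  · have h4 := pow_succ_le_pow (p := p) hlt
    have h5 := pow_succ_le_pow (p := p) (show 0 < k by omega)
    simp only [zero_add, pow_one] at h5
    nlinarith
  · obtain ⟨c', hc', -⟩ := hj
    have heq : ∑ j, term p (c' j) = ∑ j, term p (c j) + z := by omega
    have h1 := sum_term_modEq c'
    rw [heq] at h1
    have h2 := ((sum_term_modEq c).add_right z).symm.trans h1
    have h3 := (Nat.mod_le _ (4 * (p + 1))).trans (card_support_le c')
    rw [Nat.ModEq] at h2
    omega
  · have h4 := pow_succ_le_pow (p := p) hlt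
    have : 0 < (4 * (p + 1) + 1) ^ j := by positivity
    nlinarith

/-- `n` is a sum of exactly `k` elements of `A`. -/
def IsSumOf (A : Set ℕ) (k n : ℕ) : Prop := ∃ c : Fin k → ℕ, (∀ i, c i ∈ A) ∧ ∑ i, c i = n

lemma IsSumOf.add {A : Set ℕ} {k l m n : ℕ} (hm : IsSumOf A k m) (hn : IsSumOf A l n) :
    IsSumOf A (k + l) (m + n) := by
  obtain ⟨c, hc, rfl⟩ := hm
  obtain ⟨d, hd, rfl⟩ := hn
  refine ⟨Fin.append c d, fun i => ?_, by simp [Fin.sum_univ_add]⟩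
  induction i using Fin.addCases with
  | left i => simpa using hc i
  | right i => simpa using hd i

lemma isSumOf_mul {A : Set ℕ} {a : ℕ} (ha : a ∈ A) (k : ℕ) : IsSumOf A k (k * a) :=
  ⟨fun _ => a, fun _ => ha, by simp⟩

lemma isSumOf_one {A : Set ℕ} {a : ℕ} (ha : a ∈ A) : IsSumOf A 1 a := by
  simpa using isSumOf_mul ha 1

lemma mul_term_mem_basis (i : ℕ) : (p + 1) * term p i ∈ basis p := Or.inr ⟨i, rfl⟩

lemma zero_mem_basis : 0 ∈ basis p := by simpa [term_zero] using mul_term_mem_basis (p := p) 0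

lemma one_add_mul_mem_basis {m : ℕ} (hm : m ∉ removed p) : 1 + (p + 1) * m ∈ basis p :=
  Or.inl ⟨m, hm, rfl⟩

lemma one_mem_basis : 1 ∈ basis p := by
  simpa using one_add_mul_mem_basis (p := p) (not_mem_removed_of_lt (m := 0) (by omega))

/-- Integers congruent to `1` are represented by one element congruent to `1`
and `p` sparse elements. -/
lemma isSumOf_one_add_mul (hp : 1 ≤ p) {m : ℕ} (hm : p * (4 * (p + 1) + 1) ≤ m) :
    IsSumOf (basis p) (1 + p) (1 + (p + 1) * m) := by
  by_cases hmem : m ∈ removed p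
  · obtain ⟨k, hk, hgood⟩ := hmem
    obtain ⟨c, hc, hne⟩ := id hk
    by_cases hcard : (Finset.univ.filter fun j => c j ≠ 0).card = 0
    · have hzero : ∀ j, c j = 0 := by simpa using hcard
      have hmk : m = critical p k := by simpa [hzero, term_zero] using hc
      have := (isSumOf_one (one_add_mul_mem_basis (stageTarget_not_mem_removed hgood))).add
        (isSumOf_mul (mul_term_mem_basis (p := p) (stageIndex k)) p)
      convert this using 1
      rw [hmk, critical]
      ring
    · obtain ⟨q, rfl⟩ := Nat.exists_eq_add_of_le' hm
      have hle := card_support_le c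
      have hq : q ∉ removed p := by
        refine not_mem_removed_of_add hk hc (by nlinarith) ?_
        have : (Finset.univ.filter fun j => c j ≠ 0).card + p * (4 * (p + 1) + 1) =
          (Finset.univ.filter fun j => c j ≠ 0).card + p + 4 * (p + 1) * p := by ring
        rw [this, Nat.add_mul_mod_self_left, Nat.mod_eq_of_lt (by omega)]
        omega
      have := (isSumOf_one (one_add_mul_mem_basis hq)).add
        (isSumOf_mul (mul_term_mem_basis (p := p) 1) p)
      convert this using 1
      rw [term_of_pos one_pos]
      ring
  · simpa using (isSumOf_one (one_add_mul_mem_basis hmem)).add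
      (isSumOf_mul (zero_mem_basis (p := p)) p)

/-- Integers not congruent to `1` are represented using at least two elements congruent
to `1`. -/
lemma isSumOf_add_mul {r s m : ℕ} (hrs : r + s + 2 = p + 1) (hm : p + 1 ≤ m) :
    IsSumOf (basis p) (p + 1) (r + 2 + (p + 1) * m) := by
  obtain ⟨x, y, hx, hy, hxy⟩ : ∃ x y, x ∉ removed p ∧ y ∉ removed p ∧ x + y = m := by
    by_cases hmem : m ∈ removed p
    · obtain ⟨k, hk, -⟩ := hmem
      obtain ⟨c, hc, hne⟩ := id hk
      obtain ⟨q, rfl⟩ := Nat.exists_eq_add_of_le' hm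
      have hle := card_support_le c
      refine ⟨q, p + 1, not_mem_removed_of_add hk hc (by nlinarith) ?_,
        not_mem_removed_of_lt (by omega), rfl⟩
      rw [Nat.mod_eq_of_lt (by omega)]
      omega
    · exact ⟨m, 0, hmem, not_mem_removed_of_lt (by omega), rfl⟩
  have := (((isSumOf_one (one_add_mul_mem_basis hx)).add
    (isSumOf_one (one_add_mul_mem_basis hy))).add (isSumOf_mul (one_mem_basis (p := p)) r)).add
    (isSumOf_mul (zero_mem_basis (p := p)) s)
  convert this using 1
  · omega
  · rw [← hxy]; ring

lemma isAsymptoticBasisOfOrder_basis (hp : 1 ≤ p) :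
    IsAsymptoticBasisOfOrder (basis p) (p + 1) := by
  filter_upwards [eventually_ge_atTop ((p + 1) * (p * (4 * (p + 1) + 1) + p + 3))] with n hn
  change IsSumOf (basis p) (p + 1) n
  have hdiv : p * (4 * (p + 1) + 1) + p + 3 ≤ n / (p + 1) :=
    (Nat.le_div_iff_mul_le (by omega)).mpr (by rwa [mul_comm])
  have hmod := Nat.mod_add_div n (p + 1)
  have hlt := Nat.mod_lt n (show 0 < p + 1 by omega)
  rcases Nat.lt_or_ge (n % (p + 1)) 2 with h | h
  · interval_cases hr : n % (p + 1)
    · have := isSumOf_add_mul (p := p) (r := p - 1) (s := 0) (m := n / (p + 1) - 1)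
        (by omega) (by omega)
      convert this using 1
      obtain ⟨q, hq⟩ : ∃ q, n / (p + 1) = q + 1 := ⟨n / (p + 1) - 1, by omega⟩
      rw [hq] at hmod ⊢
      rw [← hmod, Nat.add_sub_cancel, Nat.mul_add]
      omega
    · have := isSumOf_one_add_mul hp (m := n / (p + 1)) (by omega)
      rwa [hmod, add_comm 1 p] at this
  · have := isSumOf_add_mul (p := p) (r := n % (p + 1) - 2) (s := p + 1 - n % (p + 1))
      (m := n / (p + 1)) (by omega) (by omega)
    rwa [Nat.sub_add_cancel h, hmod] at this

/-- The representation of a critical integer is forced. -/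
lemma mem_of_sum_eq_critical (hp : 1 ≤ p) {k : ℕ} (hgood : stageTarget p k ∉ removedBefore p k)
    {a : Fin (p + 1) → ℕ} (ha : ∀ i, a i ∈ basis p)
    (hsum : ∑ i, a i = 1 + (p + 1) * critical p k) :
    (∃ i, a i = 1 + (p + 1) * stageTarget p k) ∧ ∃ i, a i = (p + 1) * term p (stageIndex k) := by
  have hres : ∀ i, a i % (p + 1) ≤ 1 := by
    intro i
    rcases ha i with ⟨m, -, hm⟩ | ⟨c, hc⟩
    · rw [hm, Nat.add_mul_mod_self_left]
      exact Nat.mod_le _ _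
    · simp [hc]
  have hle : ∑ i, a i % (p + 1) ≤ p + 1 := by
    simpa using Finset.sum_le_card_nsmul Finset.univ (fun i => a i % (p + 1)) 1 fun i _ => hres i
  have hmod : (∑ i, a i % (p + 1)) % (p + 1) = 1 := by
    rw [← Finset.sum_nat_mod, hsum, Nat.add_mul_mod_self_left, Nat.mod_eq_of_lt (by omega)]
  have hone : ∑ i, a i % (p + 1) = 1 := by
    rcases hle.lt_or_eq with h | h
    · rwa [Nat.mod_eq_of_lt h] at hmod
    · simp [h] at hmod
  obtain ⟨i₀, -, hi₀⟩ : ∃ i ∈ Finset.univ, a i % (p + 1) ≠ 0 :=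
    Finset.exists_ne_zero_of_sum_ne_zero (by omega)
  rw [Fin.sum_univ_succAbove _ i₀] at hone hsum
  have hrest : ∀ j, a (i₀.succAbove j) % (p + 1) = 0 := by
    have : ∑ j, a (i₀.succAbove j) % (p + 1) = 0 := by omega
    simpa using this
  have hterm : ∀ j, ∃ c, a (i₀.succAbove j) = (p + 1) * term p c := by
    intro j
    rcases ha (i₀.succAbove j) with ⟨m, -, hm⟩ | h
    · have := hrest j
      rw [hm, Nat.add_mul_mod_self_left, Nat.mod_eq_of_lt (by omega)] at this
      omega
    · exact h
  choose c hc using hterm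
  obtain ⟨m, hm, hmi⟩ : ∃ m, m ∉ removed p ∧ a i₀ = 1 + (p + 1) * m := by
    rcases ha i₀ with h | ⟨c, hc⟩
    · exact h
    · simp [hc] at hi₀
  simp only [hc, hmi, ← Finset.mul_sum] at hsum
  have hcrit : m + ∑ j, term p (c j) = critical p k := by
    have : (p + 1) * (m + ∑ j, term p (c j)) = (p + 1) * critical p k := by
      rw [mul_add]; omega
    exact Nat.eq_of_mul_eq_mul_left (by omega) this
  have hconst : c = fun _ => stageIndex k := by
    by_contra hne
    exact hm ⟨k, ⟨c, hcrit, hne⟩, hgood⟩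
  refine ⟨⟨i₀, ?_⟩, ⟨i₀.succAbove ⟨0, hp⟩, by rw [hc, hconst]⟩⟩
  have : m = stageTarget p k := by
    simp only [hconst, critical, Finset.sum_const, Finset.card_univ, Fintype.card_fin,
      smul_eq_mul] at hcrit
    omega
  rw [hmi, this]

lemma le_critical (hp : 1 ≤ p) (k : ℕ) : k ≤ critical p k := by
  have h : k + 1 < (4 * (p + 1) + 1) ^ (k + 1) := Nat.lt_pow_self (by omega)
  unfold critical
  by_cases hk : k % 2 = 0
  · rw [stageIndex, if_pos hk, term_of_pos (by omega)]
    nlinarith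
  · rw [stageTarget, if_neg hk]
    nlinarith

lemma stageTarget_not_mem_removedBefore_of_odd {k : ℕ} (hk : k % 2 ≠ 0) :
    stageTarget p k ∉ removedBefore p k := by
  intro h
  obtain ⟨j, hj, hmem, -⟩ := mem_removedBefore.mp h
  have h1 := (le_of_mem_obstruction hmem).trans (critical_le j)
  have h2 := pow_succ_le_pow (p := p) hj
  have h3 : 0 < (4 * (p + 1) + 1) ^ k := by positivity
  rw [stageTarget, if_neg hk, pow_succ] at h1
  have h4 := Nat.mul_le_mul_left (2 * (p + 1)) h2
  have h5 : 0 < (p + 1) * (4 * (p + 1) + 1) ^ k := by positivity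
  nlinarith

/-- Every element of the basis belongs to all representations of infinitely many integers. -/
lemma exists_critical (hp : 1 ≤ p) {a : ℕ} (ha : a ∈ basis p) (N : ℕ) :
    ∃ n ≥ N, ∀ c : Fin (p + 1) → ℕ, (∀ i, c i ∈ basis p) → ∑ i, c i = n → ∃ i, c i = a := by
  have key (k : ℕ) (hk : N ≤ k) : N ≤ 1 + (p + 1) * critical p k := by
    have := le_critical hp k
    nlinarith
  rcases ha with ⟨m, hm, rfl⟩ | ⟨i, rfl⟩
  · have hN := Nat.right_le_pair m N
    have ht : stageTarget p (2 * Nat.pair m N) = m := by simp [stageTarget]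
    refine ⟨_, key (2 * Nat.pair m N) (by omega), fun c hc hsum => ?_⟩
    have := (mem_of_sum_eq_critical hp (fun h => hm (removedBefore_subset _ (ht ▸ h))) hc hsum).1
    rwa [ht] at this
  · have hN := Nat.right_le_pair i N
    have ht : stageIndex (2 * Nat.pair i N + 1) = i := by
      have : (2 * Nat.pair i N + 1) / 2 = Nat.pair i N := by omega
      simp [stageIndex, this]
    refine ⟨_, key (2 * Nat.pair i N + 1) (by omega), fun c hc hsum => ?_⟩
    have := (mem_of_sum_eq_critical hp (stageTarget_not_mem_removedBefore_of_odd (by omega))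
      hc hsum).2
    rwa [ht] at this

lemma isMinimalAsymptoticBasisOfOrder_basis (hp : 1 ≤ p) :
    IsMinimalAsymptoticBasisOfOrder (basis p) (p + 1) := by
  refine ⟨isAsymptoticBasisOfOrder_basis hp, fun B hB hbasis => ?_⟩
  obtain ⟨hsub, a, ha, haB⟩ := Set.ssubset_iff_exists.mp hB
  obtain ⟨N, hN⟩ := eventually_atTop.mp hbasis
  obtain ⟨n, hn, hcrit⟩ := exists_critical hp ha N
  obtain ⟨c, hc, hsum⟩ := hN n hn
  obtain ⟨i, rfl⟩ := hcrit c (fun i => hsub (hc i)) hsum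
  exact haB (hc i)

/-- A finite set containing all integers up to `n` at which the basis differs from the
residue class of `1`. -/
def exceptional (p n : ℕ) : Finset ℕ :=
  (Finset.range (Nat.log 2 n + 2)).image (fun i => (p + 1) * term p i) ∪
    (Finset.range (Nat.log 2 n + 2) ×ˢ
      Fintype.piFinset fun _ : Fin p => Finset.range (Nat.log 2 n + 2)).image
        fun x => 1 + (p + 1) * (critical p x.1 - ∑ j, term p (x.2 j))

lemma card_exceptional_le (n : ℕ) :
    (exceptional p n).card ≤ (Nat.log 2 n + 2) + (Nat.log 2 n + 2) ^ (p + 1) := by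
  refine (Finset.card_union_le _ _).trans (add_le_add ?_ ?_)
  · exact Finset.card_image_le.trans (by simp)
  · refine Finset.card_image_le.trans ?_
    simp [Fintype.card_piFinset, pow_succ, mul_comm]

lemma le_log_of_pow_le {k n : ℕ} (h : (4 * (p + 1) + 1) ^ k ≤ n) : k ≤ Nat.log 2 n := by
  have h2 : 2 ^ k ≤ n := (Nat.pow_le_pow_left (by omega) k).trans h
  have h3 : 0 < 2 ^ k := by positivity
  exact Nat.le_log_of_pow_le (by omega) h2

lemma mul_term_mem_exceptional {i n : ℕ} (h : (p + 1) * term p i ≤ n) :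
    (p + 1) * term p i ∈ exceptional p n := by
  refine Finset.mem_union_left _ (Finset.mem_image_of_mem _ (Finset.mem_range.mpr ?_))
  rcases Nat.eq_zero_or_pos i with rfl | hi
  · omega
  · rw [term_of_pos hi] at h
    have := le_log_of_pow_le (p := p) (k := i) (n := n) (by nlinarith)
    omega

lemma one_add_mul_mem_exceptional {m n : ℕ} (hm : m ∈ removed p) (h : 1 + (p + 1) * m ≤ n) :
    1 + (p + 1) * m ∈ exceptional p n := by
  obtain ⟨k, hk, -⟩ := hm
  obtain ⟨c, hc, -⟩ := id hk
  have h1 := pow_le_of_mem_obstruction hk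
  have hkn : k ≤ Nat.log 2 n := le_log_of_pow_le (p := p) (by nlinarith)
  refine Finset.mem_union_right _ (Finset.mem_image.mpr ⟨(k, c), ?_, ?_⟩)
  · simp only [Finset.mem_product, Finset.mem_range, Fintype.mem_piFinset]
    refine ⟨by omega, fun j => ?_⟩
    have := index_le_of_sum_le (p := p) (k := k) (c := c) (by omega) j
    omega
  · rw [← hc, Nat.add_sub_cancel]

/-- The residue class of `1` modulo `p + 1`. -/
def residueOne (p : ℕ) : Set ℕ := Set.range fun m => 1 + (p + 1) * m

lemma countingFn_residueOne (n : ℕ) : countingFn (residueOne p) n = (n + p) / (p + 1) := by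
  have : residueOne p ∩ Set.Icc 1 n =
      ((Finset.range ((n + p) / (p + 1))).image fun m => 1 + (p + 1) * m : Finset ℕ) := by
    ext x
    simp only [residueOne, Set.mem_inter_iff, Set.mem_range, Set.mem_Icc, Finset.coe_image,
      Set.mem_image, Finset.coe_range, Set.mem_Iio]
    have hiff (m : ℕ) : m < (n + p) / (p + 1) ↔ 1 + (p + 1) * m ≤ n := by
      rw [← Nat.succ_le_iff, Nat.le_div_iff_mul_le (by omega), Nat.succ_mul, mul_comm]
      omega
    constructor
    · rintro ⟨⟨m, rfl⟩, -, hn⟩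
      exact ⟨m, (hiff m).mpr hn, rfl⟩
    · rintro ⟨m, hm, rfl⟩
      exact ⟨⟨m, rfl⟩, by omega, (hiff m).mp hm⟩
  rw [countingFn, this, Set.ncard_coe_finset, Finset.card_image_of_injective, Finset.card_range]
  intro x y hxy
  have : (p + 1) * x = (p + 1) * y := by simpa using hxy
  exact Nat.eq_of_mul_eq_mul_left (by omega) this

lemma countingFn_le_add {A B : Set ℕ} {n : ℕ} {s : Finset ℕ}
    (h : ∀ x ∈ A, x ≤ n → x ∈ B ∨ x ∈ s) : countingFn A n ≤ countingFn B n + s.card := by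
  have hsub : A ∩ Set.Icc 1 n ⊆ (B ∩ Set.Icc 1 n) ∪ (s : Set ℕ) := by
    rintro x ⟨hx, hxn⟩
    rcases h x hx hxn.2 with h | h
    · exact Or.inl ⟨h, hxn⟩
    · exact Or.inr h
  have hfin : ((B ∩ Set.Icc 1 n) ∪ (s : Set ℕ)).Finite :=
    ((Set.finite_Icc 1 n).subset Set.inter_subset_right).union s.finite_toSet
  refine (Set.ncard_le_ncard hsub hfin).trans ((Set.ncard_union_le _ _).trans ?_)
  rw [Set.ncard_coe_finset, countingFn]

lemma countingFn_basis_le (n : ℕ) :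
    countingFn (basis p) n ≤ countingFn (residueOne p) n + (exceptional p n).card := by
  refine countingFn_le_add ?_
  rintro x (⟨m, -, rfl⟩ | ⟨i, rfl⟩) hx
  · exact Or.inl ⟨m, rfl⟩
  · exact Or.inr (mul_term_mem_exceptional hx)

lemma countingFn_residueOne_le (n : ℕ) :
    countingFn (residueOne p) n ≤ countingFn (basis p) n + (exceptional p n).card := by
  refine countingFn_le_add ?_
  rintro x ⟨m, rfl⟩ hx
  by_cases hm : m ∈ removed p
  · exact Or.inr (one_add_mul_mem_exceptional hm hx)
  · exact Or.inl (one_add_mul_mem_basis hm)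

lemma tendsto_log_add_two_pow_div (k : ℕ) :
    Tendsto (fun n : ℕ => ((Nat.log 2 n + 2 : ℕ) : ℝ) ^ k / (n : ℝ)) atTop (nhds 0) := by
  have hlog : Tendsto (fun n : ℕ => Nat.log 2 n + 2) atTop atTop := by
    refine tendsto_atTop.mpr fun b => ?_
    filter_upwards [eventually_ge_atTop (2 ^ b)] with n hn
    exact (Nat.le_log_of_pow_le one_lt_two hn).trans (Nat.le_add_right _ _)
  have hlim := ((tendsto_pow_const_div_const_pow_of_one_lt k one_lt_two).comp hlog).const_mul 4
  rw [mul_zero] at hlim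
  refine squeeze_zero' (Eventually.of_forall fun n => by positivity) ?_ hlim
  filter_upwards [eventually_gt_atTop 0] with n hn
  have hn' : (0 : ℝ) < n := by exact_mod_cast hn
  have hpow : ((2 : ℝ) ^ Nat.log 2 n) ≤ n := by
    exact_mod_cast Nat.pow_log_le_self 2 hn.ne'
  calc ((Nat.log 2 n + 2 : ℕ) : ℝ) ^ k / (n : ℝ)
      ≤ ((Nat.log 2 n + 2 : ℕ) : ℝ) ^ k / 2 ^ Nat.log 2 n := by gcongr
    _ = 4 * (((Nat.log 2 n + 2 : ℕ) : ℝ) ^ k / 2 ^ (Nat.log 2 n + 2)) := by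
      rw [pow_add]
      field_simp
      norm_num

lemma tendsto_countingFn_basis_div :
    Tendsto (fun n : ℕ => (countingFn (basis p) n : ℝ) / (n : ℝ)) atTop
      (nhds (1 / ((p + 1 : ℕ) : ℝ))) := by
  have herr : Tendsto (fun n : ℕ => (1 + ((Nat.log 2 n + 2 : ℕ) : ℝ) ^ 1 +
      ((Nat.log 2 n + 2 : ℕ) : ℝ) ^ (p + 1)) / (n : ℝ)) atTop (nhds 0) := by
    simpa [add_div] using (tendsto_one_div_atTop_nhds_zero_nat.add
      (tendsto_log_add_two_pow_div 1)).add (tendsto_log_add_two_pow_div (p + 1))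
  rw [← tendsto_sub_nhds_zero_iff]
  refine squeeze_zero_norm' ?_ herr
  filter_upwards [eventually_gt_atTop 0] with n hn
  have hn' : (0 : ℝ) < n := by exact_mod_cast hn
  have hp' : (0 : ℝ) < p + 1 := by positivity
  have hcard := card_exceptional_le (p := p) n
  have h1 := countingFn_basis_le (p := p) n
  have h2 := countingFn_residueOne_le (p := p) n
  rw [countingFn_residueOne] at h1 h2
  have h3 : (p + 1) * ((n + p) / (p + 1)) ≤ n + p := Nat.mul_div_le _ _
  have h4 : n ≤ (p + 1) * ((n + p) / (p + 1)) := by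
    have := Nat.div_add_mod (n + p) (p + 1)
    have := Nat.mod_lt (n + p) (show 0 < p + 1 by omega)
    omega
  set Q := (n + p) / (p + 1)
  set L := Nat.log 2 n + 2
  have h1' : (countingFn (basis p) n : ℝ) ≤ Q + (L + (L : ℝ) ^ (p + 1)) := by
    exact_mod_cast h1.trans (by omega)
  have h2' : (Q : ℝ) ≤ countingFn (basis p) n + (L + (L : ℝ) ^ (p + 1)) := by
    exact_mod_cast h2.trans (by omega)
  have h3' : ((p : ℝ) + 1) * Q ≤ n + p := by exact_mod_cast h3
  have h4' : (n : ℝ) ≤ (p + 1) * Q := by exact_mod_cast h4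
  have h5 : (Q : ℝ) ≤ n / (p + 1) + 1 := by
    rw [div_add_one hp'.ne', le_div_iff₀ hp']
    linarith
  have h6 : (n : ℝ) / (p + 1) ≤ Q := by
    rw [div_le_iff₀ hp']
    linarith
  have heq : (countingFn (basis p) n : ℝ) / n - 1 / ((p + 1 : ℕ) : ℝ) =
      (countingFn (basis p) n - n / (p + 1)) / n := by
    push_cast
    field_simp
  rw [heq, norm_div, Real.norm_natCast, Real.norm_eq_abs]
  gcongr
  rw [abs_le]
  constructor <;> linarith

end ErdosNathanson

theorem erdos_nathanson_minimal_basis_density_one_div_h (h : ℕ) (hh : 2 ≤ h) :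
    ∃ A : Set ℕ, IsMinimalAsymptoticBasisOfOrder A h ∧
      Tendsto (fun n : ℕ => (countingFn A n : ℝ) / (n : ℝ)) atTop
        (nhds (1 / (h : ℝ))) := by
  obtain ⟨p, rfl⟩ : ∃ p, h = p + 1 := ⟨h - 1, by omega⟩
  exact ⟨ErdosNathanson.basis p, ErdosNathanson.isMinimalAsymptoticBasisOfOrder_basis (by omega),
    ErdosNathanson.tendsto_countingFn_basis_div⟩
end

section
/- (Erdős–Nathanson) For every integer h ≥ 2 and every real number α with 0 < α < 1/(2h−2), there exists a minimal asymptotic basis A of order h whose asymptotic density exists and equals α, i.e., lim_{n→∞} A(n)/n = α. -/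
open Pointwise Filter

theorem sum_map_lt_of_forall_lt {e : ℕ → ℕ} {N : ℕ} (hmono : Monotone e)
    (hlac : ∀ i, N * e i < e (i + 1)) {C D : Multiset ℕ} {b : ℕ} (hC : C.card ≤ N)
    (hC0 : C ≠ 0) (hCb : ∀ a ∈ C, a < b) (hbD : b ∈ D) :
    (C.map e).sum < (D.map e).sum := by
  have hle : e b ≤ (D.map e).sum :=
    Multiset.single_le_sum (fun _ _ => Nat.zero_le _) _ (Multiset.mem_map_of_mem e hbD)
  obtain ⟨a₀, ha₀⟩ := Multiset.exists_mem_of_ne_zero hC0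
  obtain ⟨b, rfl⟩ := Nat.exists_eq_succ_of_ne_zero (Nat.ne_zero_of_lt (hCb a₀ ha₀))
  have h1 : (C.map e).sum ≤ (C.map e).card • e b := by
    refine Multiset.sum_le_card_nsmul _ _ fun x hx => ?_
    obtain ⟨a, ha, rfl⟩ := Multiset.mem_map.1 hx
    exact hmono (Nat.lt_succ_iff.1 (hCb a ha))
  rw [Multiset.card_map, smul_eq_mul] at h1
  calc _ ≤ C.card * e b := h1
    _ ≤ N * e b := Nat.mul_le_mul_right _ hC
    _ < e (b + 1) := hlac b
    _ ≤ _ := hle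

/-- A sequence growing by a factor larger than `N` has distinct sums over multisets of a common
size at most `N`. -/
theorem multiset_eq_of_sum_map_eq {e : ℕ → ℕ} {N : ℕ} (hmono : Monotone e)
    (hlac : ∀ i, N * e i < e (i + 1)) (C D : Multiset ℕ) (hC : C.card ≤ N)
    (hCD : C.card = D.card) (hsum : (C.map e).sum = (D.map e).sum) : C = D := by
  induction r : C.card generalizing C D with
  | zero => rw [Multiset.card_eq_zero.1 r, Multiset.card_eq_zero.1 (hCD.symm.trans r)]
  | succ r ih =>
    have hC0 : C ≠ 0 := by rintro rfl; simp at r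
    have hD0 : D ≠ 0 := by rintro rfl; simp [r] at hCD
    have hmax : ∀ M : Multiset ℕ, M ≠ 0 → ∃ b ∈ M, ∀ a ∈ M, a ≤ b := by
      intro M hM
      obtain ⟨b, hb, hb'⟩ := M.toFinset.exists_max_image id (by simpa using hM)
      exact ⟨b, Multiset.mem_toFinset.1 hb, fun a ha => hb' a (Multiset.mem_toFinset.2 ha)⟩
    obtain ⟨a, haC, ha⟩ := hmax C hC0
    obtain ⟨b, hbD, hb⟩ := hmax D hD0
    rcases lt_trichotomy a b with hab | rfl | hab
    · have := sum_map_lt_of_forall_lt hmono hlac hC hC0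
        (fun x hx => (ha x hx).trans_lt hab) hbD
      omega
    · obtain ⟨C, rfl⟩ := Multiset.exists_cons_of_mem haC
      obtain ⟨D, rfl⟩ := Multiset.exists_cons_of_mem hbD
      simp only [Multiset.card_cons, Multiset.map_cons, Multiset.sum_cons] at *
      rw [ih C D (by omega) (by omega) (by omega) (by omega)]
    · have := sum_map_lt_of_forall_lt hmono hlac (hCD ▸ hC) hD0
        (fun x hx => (hb x hx).trans_lt hab) haC
      omega

/-- Given stages `i` with removal sets `R i` lying beyond the keys `s j` of earlier stages, one
can carry out exactly those removals whose keys survive. -/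
theorem exists_set_surviving (S₀ : Set ℕ) (s : ℕ → ℕ) (R : ℕ → Set ℕ)
    (hself : ∀ i, s i ∉ R i) (hlater : ∀ i j, i < j → s i ∉ R j) :
    ∃ S : Set ℕ, ∀ x, x ∈ S ↔ x ∈ S₀ ∧ ∀ i, s i ∈ S → x ∉ R i := by
  classical
  let A : ℕ → Set ℕ := fun n =>
    Nat.rec (motive := fun _ => Set ℕ) S₀ (fun i B => if s i ∈ B then B \ R i else B) n
  have hA : ∀ i, A (i + 1) = if s i ∈ A i then A i \ R i else A i := fun i => rfl
  have hmem : ∀ i x, x ∈ A i ↔ x ∈ S₀ ∧ ∀ j < i, s j ∈ A j → x ∉ R j := by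
    intro i
    induction i with
    | zero => intro x; simp [A]
    | succ i ih =>
      intro x
      rw [hA]
      split_ifs with hi
      · simp only [Set.mem_sdiff, ih, Nat.lt_succ_iff_lt_or_eq]
        grind
      · simp only [ih, Nat.lt_succ_iff_lt_or_eq]
        grind
  refine ⟨{x | ∀ i, x ∈ A i}, fun x => ?_⟩
  have hkey : ∀ i, s i ∈ {x | ∀ i, x ∈ A i} ↔ s i ∈ A i := by
    refine fun i => ⟨fun hi => hi i, fun hi j => (hmem j _).2 ⟨((hmem i _).1 hi).1, ?_⟩⟩
    intro l _ hl
    rcases lt_trichotomy l i with hli | rfl | hli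
    · exact ((hmem i _).1 hi).2 l hli hl
    · exact hself l
    · exact hlater _ _ hli
  simp only [hkey]
  constructor
  · intro hx
    exact ⟨((hmem 0 x).1 (hx 0)).1, fun i hi => ((hmem (i + 1) x).1 (hx (i + 1))).2 i (by omega) hi⟩
  · rintro ⟨hx, hx'⟩ i
    exact (hmem i x).2 ⟨hx, fun j _ hj => hx' j hj⟩

/-- Between a set whose counting function is `δ y + O(1)` and the full set of natural numbers
there is a set whose counting function is `β y + O(1)`. -/
theorem exists_superset_count (P : ℕ → Prop) [DecidablePred P] (β δ C : ℝ)
    (hC : 0 ≤ C) (hδβ : δ ≤ β) (hβ1 : β ≤ 1)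
    (hP : ∀ y, |(Nat.count P y : ℝ) - δ * y| ≤ C) :
    ∃ (T : ℕ → Prop) (_ : DecidablePred T), (∀ y, P y → T y) ∧
      ∀ y, |(Nat.count T y : ℝ) - β * y| ≤ 2 * C + 1 := by
  classical
  obtain ⟨c, hc0, hc⟩ : ∃ c : ℕ → ℕ, c 0 = 0 ∧
      ∀ y, c (y + 1) = if P y ∨ (c y : ℝ) < β * y then c y + 1 else c y :=
    ⟨fun n => Nat.rec (motive := fun _ => ℕ) 0
      (fun y m => if P y ∨ (m : ℝ) < β * y then m + 1 else m) n, rfl, fun _ => rfl⟩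
  have hcount : ∀ y, Nat.count (fun y => P y ∨ (c y : ℝ) < β * y) y = c y := by
    intro y
    induction y with
    | zero => simp [hc0]
    | succ y ih => rw [Nat.count_succ, ih, hc]; split_ifs <;> simp
  refine ⟨fun y => P y ∨ (c y : ℝ) < β * y, inferInstance, fun y hy => Or.inl hy, fun y => ?_⟩
  rw [hcount]
  have hlow : ∀ y : ℕ, β * y - 1 ≤ c y := by
    intro y
    induction y with
    | zero => simp [hc0]
    | succ y ih =>
      rw [hc]
      split_ifs with h
      · push_cast; linarith
      · push_cast; push Not at h; linarith [h.2]
  have hup : ∀ y : ℕ, (c y : ℝ) ≤ Nat.count P y + (β - δ) * y + C + 1 := by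
    intro y
    induction y with
    | zero => simp [hc0]; linarith
    | succ y ih =>
      rw [hc, Nat.count_succ]
      by_cases hy : P y
      · simp only [hy, true_or, if_true]; push_cast; linarith
      · have := (abs_le.1 (hP y)).1
        simp only [hy, false_or, if_false]
        split_ifs with h <;> push_cast <;> linarith
  have := abs_le.1 (hP y)
  exact abs_le.2 ⟨by linarith [hlow y], by linarith [hup y]⟩

theorem abs_count_sub_le_of_periodic (P : ℕ → Prop) [DecidablePred P] (M : ℕ) (hM : 0 < M)
    (hP : ∀ y, P (M + y) ↔ P y) (y : ℕ) :
    |(Nat.count P y : ℝ) - (Nat.count P M / M : ℝ) * y| ≤ M := by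
  have hblock : ∀ q r, Nat.count P (M * q + r) = q * Nat.count P M + Nat.count P r := by
    intro q r
    induction q with
    | zero => simp
    | succ q ih =>
      rw [show M * (q + 1) + r = M + (M * q + r) by ring, Nat.count_add]
      simp only [hP, ih]
      ring
  have hlt := Nat.mod_lt y hM
  have h1 : Nat.count P y = (y / M) * Nat.count P M + Nat.count P (y % M) := by
    rw [← hblock, Nat.div_add_mod]
  have h2 : Nat.count P (y % M) ≤ y % M := Nat.count_le _
  have h3 : Nat.count P M ≤ M := Nat.count_le _
  have hMR : (0 : ℝ) < M := by exact_mod_cast hM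
  have h4 : (y : ℝ) = M * (y / M : ℕ) + (y % M : ℕ) := by exact_mod_cast (Nat.div_add_mod y M).symm
  have h5 : (Nat.count P y : ℝ) - (Nat.count P M / M : ℝ) * y
      = Nat.count P (y % M) - (Nat.count P M / M : ℝ) * (y % M : ℕ) := by
    have h6 : (Nat.count P M / M : ℝ) * M = Nat.count P M := div_mul_cancel₀ _ hMR.ne'
    rw [h1]
    push_cast
    linear_combination (-(Nat.count P M / M : ℝ)) * h4 - ((y / M : ℕ) : ℝ) * h6
  have h6 : (Nat.count P M / M : ℝ) ≤ 1 := by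
    rw [div_le_one hMR]; exact_mod_cast h3
  have h7 : (0 : ℝ) ≤ Nat.count P M / M := by positivity
  have h8 : ((y % M : ℕ) : ℝ) ≤ M := by exact_mod_cast hlt.le
  have h9 : (Nat.count P (y % M) : ℝ) ≤ (y % M : ℕ) := by exact_mod_cast h2
  have h10 : (0 : ℝ) ≤ (y % M : ℕ) := by positivity
  have h11 : (0 : ℝ) ≤ Nat.count P (y % M) := by positivity
  rw [h5, abs_le]
  constructor <;> nlinarith

/-- A set of density `β` containing all `y` with `Q ∣ y` or `y % Q ^ 2 < Q`. -/
theorem exists_superset_mod (β : ℝ) (hβ1 : β ≤ 1) (Q : ℕ) (hQ : 0 < Q) (hQβ : 2 / (Q : ℝ) ≤ β) :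
    ∃ (T : ℕ → Prop) (_ : DecidablePred T) (C : ℝ), (∀ y, Q ∣ y → T y) ∧
      (∀ y, y % Q ^ 2 < Q → T y) ∧ ∀ y, |(Nat.count T y : ℝ) - β * y| ≤ C := by
  set P : ℕ → Prop := fun y => Q ∣ y ∨ y % Q ^ 2 < Q with hPdef
  have hper : ∀ y, P (Q ^ 2 + y) ↔ P y := by
    intro y
    have : Q ∣ Q ^ 2 := Dvd.intro_left (Q ^ 1) rfl
    simp only [hPdef, Nat.add_mod_left, Nat.dvd_add_right this]
  have hQ2 : 0 < Q ^ 2 := by positivity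
  have hp : Nat.count P (Q ^ 2) ≤ 2 * Q := by
    rw [Nat.count_eq_card_filter_range]
    calc _ ≤ ((Finset.range Q).image (Q * ·) ∪ Finset.range Q).card := by
          refine Finset.card_le_card fun y hy => ?_
          simp only [Finset.mem_filter, Finset.mem_range, hPdef] at hy
          obtain ⟨hy, ⟨u, rfl⟩ | h⟩ := hy
          · refine Finset.mem_union_left _ (Finset.mem_image_of_mem _ (Finset.mem_range.2 ?_))
            rw [sq] at hy
            exact Nat.lt_of_mul_lt_mul_left hy
          · rw [Nat.mod_eq_of_lt hy] at h
            exact Finset.mem_union_right _ (Finset.mem_range.2 h)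
      _ ≤ ((Finset.range Q).image (Q * ·)).card + (Finset.range Q).card := Finset.card_union_le _ _
      _ ≤ Q + Q := by
          gcongr
          · simpa using Finset.card_image_le (s := Finset.range Q) (f := (Q * ·))
          · simp
      _ = 2 * Q := by ring
  have hδ : (Nat.count P (Q ^ 2) / (Q ^ 2 : ℕ) : ℝ) ≤ β := by
    refine le_trans ?_ hQβ
    have hQR : (0 : ℝ) < Q := by exact_mod_cast hQ
    have : (Nat.count P (Q ^ 2) : ℝ) ≤ 2 * Q := by exact_mod_cast hp
    rw [div_le_div_iff₀ (by positivity) hQR]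
    push_cast
    nlinarith
  obtain ⟨T, hT, hPT, hcount⟩ := exists_superset_count P β _ (Q ^ 2 : ℕ) (by positivity) hδ hβ1
    (abs_count_sub_le_of_periodic P (Q ^ 2) hQ2 hper)
  exact ⟨T, hT, _, fun y hy => hPT y (Or.inl hy), fun y hy => hPT y (Or.inr hy), hcount⟩

/-- A sparse sequence of multiples of `k + 1`, starting at `0`, whose quotients by `k + 1` run
through the residues modulo `Q`. -/
structure IsScale (k Q : ℕ) (e : ℕ → ℕ) : Prop where
  zero : e 0 = 0
  growth : ∀ i, 16 * (k + 1) * Q * (e i + 1) ≤ e (i + 1)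
  residue : ∀ i, ∃ g, e i = (k + 1) * g ∧ g % Q = i % Q

theorem exists_isScale (k Q : ℕ) (hQ : 0 < Q) : ∃ e, IsScale k Q e := by
  let g : ℕ → ℕ := fun n => Nat.rec (motive := fun _ => ℕ) 0
    (fun i m => Q * (16 * (k + 1) * Q * ((k + 1) * m + 1)) + (i + 1) % Q) n
  have hg : ∀ i, g (i + 1) = Q * (16 * (k + 1) * Q * ((k + 1) * g i + 1)) + (i + 1) % Q :=
    fun _ => rfl
  refine ⟨fun i => (k + 1) * g i, by simp [g], fun i => ?_, fun i => ⟨g i, rfl, ?_⟩⟩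
  · simp only [hg]
    set X := 16 * (k + 1) * Q * ((k + 1) * g i + 1)
    calc X ≤ Q * X := Nat.le_mul_of_pos_left _ hQ
      _ ≤ Q * X + (i + 1) % Q := Nat.le_add_right _ _
      _ ≤ _ := Nat.le_mul_of_pos_left _ (by omega)
  · cases i with
    | zero => simp [g]
    | succ i => rw [hg, Nat.mul_add_mod, Nat.mod_mod]

namespace IsScale

variable {k Q : ℕ} {e : ℕ → ℕ}

theorem sixteen_mul_le (he : IsScale k Q e) (hQ : 0 < Q) (i : ℕ) :
    16 * (e i + 1) ≤ e (i + 1) := by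
  refine le_trans ?_ (he.growth i)
  rw [mul_assoc 16]
  have : 0 < (k + 1) * Q := by positivity
  gcongr
  omega

theorem two_mul_mul_lt (he : IsScale k Q e) (hQ : 0 < Q) (i : ℕ) :
    2 * k * e i < e (i + 1) := by
  have h1 := he.growth i
  have h2 : 2 * k * e i ≤ 16 * (k + 1) * Q * e i := by
    refine Nat.mul_le_mul_right _ ?_
    nlinarith
  have h3 : 0 < 16 * (k + 1) * Q := by positivity
  rw [mul_add] at h1
  omega

theorem strictMono (he : IsScale k Q e) (hQ : 0 < Q) : StrictMono e :=
  strictMono_nat_of_lt_succ fun i => by have := he.sixteen_mul_le hQ i; omega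

theorem two_pow_le (he : IsScale k Q e) (hQ : 0 < Q) (i : ℕ) : 2 ^ (i + 1) ≤ e (i + 1) := by
  induction i with
  | zero => have := he.sixteen_mul_le hQ 0; omega
  | succ i ih =>
    have := he.sixteen_mul_le hQ (i + 1)
    rw [pow_succ]
    omega

theorem dvd (he : IsScale k Q e) (i : ℕ) : k + 1 ∣ e i :=
  let ⟨g, hg, _⟩ := he.residue i
  ⟨g, hg⟩

end IsScale

/-- The sums of `k` terms of the sequence `e`, with repetitions allowed. -/
def foldSums (e : ℕ → ℕ) (k : ℕ) : Set ℕ := {x | ∃ c : Fin k → ℕ, ∑ i, e (c i) = x}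

/-- The numbers `n - σ` with `σ ≠ τ` a sum of `k` terms of `e`. -/
def removed (e : ℕ → ℕ) (k n τ : ℕ) : Set ℕ := {x | ∃ σ ∈ foldSums e k, σ ≠ τ ∧ x + σ = n}

theorem mul_mem_foldSums (e : ℕ → ℕ) (k i : ℕ) : k * e i ∈ foldSums e k :=
  ⟨fun _ => i, by simp⟩

theorem mem_foldSums_of_zero {e : ℕ → ℕ} (h0 : e 0 = 0) {k : ℕ} (hk : 0 < k) (i : ℕ) :
    e i ∈ foldSums e k := by
  refine ⟨fun j => if j = ⟨0, hk⟩ then i else 0, ?_⟩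
  rw [Finset.sum_eq_single ⟨0, hk⟩] <;> simp +contextual [h0]

theorem sum_eq_multiset_sum (e : ℕ → ℕ) {k : ℕ} (c : Fin k → ℕ) :
    ((Finset.univ.val.map c).map e).sum = ∑ i, e (c i) := by
  rw [Multiset.map_map]; rfl

namespace IsScale

variable {k Q : ℕ} {e : ℕ → ℕ}

theorem dvd_of_mem_foldSums (he : IsScale k Q e) {σ : ℕ} (hσ : σ ∈ foldSums e k) : k + 1 ∣ σ := by
  obtain ⟨c, rfl⟩ := hσ
  exact Finset.dvd_sum fun i _ => he.dvd _

theorem index_le_of_sum_lt (he : IsScale k Q e) (hQ : 0 < Q) {c : Fin k → ℕ} {j : ℕ}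
    (h : ∑ i, e (c i) < e (j + 1)) (i : Fin k) : c i ≤ j := by
  have h1 : e (c i) ≤ ∑ i, e (c i) :=
    Finset.single_le_sum (f := fun i => e (c i)) (fun _ _ => Nat.zero_le _) (Finset.mem_univ i)
  exact Nat.lt_succ_iff.1 ((he.strictMono hQ).lt_iff_lt.1 (h1.trans_lt h))

theorem exists_eq_of_sum_eq (he : IsScale k Q e) (hQ : 0 < Q) (hk : 0 < k) {c : Fin k → ℕ} {b : ℕ}
    (h : ∑ i, e (c i) = e b) : ∃ i, c i = b := by
  by_contra! hne
  have hle : ∀ i, c i ≤ b := he.index_le_of_sum_lt hQ (h ▸ he.strictMono hQ (Nat.lt_succ_self b))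
  cases b with
  | zero => exact hne ⟨0, hk⟩ (Nat.le_zero.1 (hle _))
  | succ b =>
    have h1 := Finset.sum_le_card_nsmul Finset.univ (fun i => e (c i)) (e b) fun i _ =>
      (he.strictMono hQ).monotone (by have := hle i; have := hne i; omega)
    simp only [Finset.card_univ, Fintype.card_fin, smul_eq_mul, h] at h1
    have h2 := he.two_mul_mul_lt hQ b
    nlinarith

theorem eq_mul_of_add_eq (he : IsScale k Q e) (hQ : 0 < Q) {σ σ' p q : ℕ} (hpq : p ≠ q)
    (hσ : σ ∈ foldSums e k) (hσ' : σ' ∈ foldSums e k) (h : σ + k * e q = σ' + k * e p) :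
    σ = k * e p := by
  obtain ⟨c, rfl⟩ := hσ
  obtain ⟨c', rfl⟩ := hσ'
  have hmul := multiset_eq_of_sum_map_eq (he.strictMono hQ).monotone (he.two_mul_mul_lt hQ)
    (Finset.univ.val.map c + Multiset.replicate k q)
    (Finset.univ.val.map c' + Multiset.replicate k p) (by simp; omega) (by simp)
    (by
      rw [Multiset.map_add, Multiset.map_add, Multiset.sum_add, Multiset.sum_add,
        sum_eq_multiset_sum, sum_eq_multiset_sum]
      simpa using h)
  have hcount := congrArg (Multiset.count q) hmul
  rw [Multiset.count_add, Multiset.count_add, Multiset.count_replicate_self,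
    Multiset.count_replicate, if_neg hpq] at hcount
  have hcard : (Finset.univ.val.map c').card = k := by simp
  have hle := Multiset.count_le_card q (Finset.univ.val.map c')
  have hall : ∀ x ∈ Finset.univ.val.map c', x = q := fun x hx =>
    ((Multiset.count_eq_card.1 (by omega)) x hx).symm
  have : ∑ i, e (c' i) = k * e q := by
    rw [Finset.sum_congr rfl fun i _ => by
      rw [hall (c' i) (Multiset.mem_map_of_mem c' (Finset.mem_univ_val i))]]
    simp
  omega

theorem foldSum_le (he : IsScale k Q e) (hQ : 0 < Q) {σ j : ℕ} (hσ : σ ∈ foldSums e k)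
    (h : σ < e (j + 1)) : σ ≤ k * e j := by
  obtain ⟨c, rfl⟩ := hσ
  have := Finset.sum_le_card_nsmul Finset.univ (fun i => e (c i)) (e j) fun i _ =>
    (he.strictMono hQ).monotone (he.index_le_of_sum_lt hQ h i)
  simpa using this

theorem foldSum_add_le (he : IsScale k Q e) (hQ : 0 < Q) {σ j : ℕ} (hσ : σ ∈ foldSums e k)
    (h : σ < e (j + 2)) (hne : σ ≠ k * e (j + 1)) : σ + e (j + 1) ≤ k * e (j + 1) + e j := by
  obtain ⟨c, rfl⟩ := hσ
  have hle := he.index_le_of_sum_lt hQ h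
  obtain ⟨i, hi⟩ : ∃ i, c i ≠ j + 1 := by
    by_contra! hall
    exact hne (by simp [hall])
  have h1 := Finset.add_sum_erase Finset.univ (fun i => e (c i)) (Finset.mem_univ i)
  have h2 := Finset.sum_le_card_nsmul (Finset.univ.erase i) (fun i => e (c i)) (e (j + 1))
    fun i _ => (he.strictMono hQ).monotone (hle i)
  have h3 : e (c i) ≤ e j := (he.strictMono hQ).monotone (by have := hle i; omega)
  obtain ⟨k, rfl⟩ := Nat.exists_eq_succ_of_ne_zero (Nat.ne_zero_of_lt i.2)
  simp only [Finset.card_erase_of_mem (Finset.mem_univ i), Finset.card_univ, Fintype.card_fin,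
    Nat.succ_sub_one, smul_eq_mul] at h1 h2
  rw [Nat.succ_mul]
  omega

end IsScale

theorem exists_stages {k Q : ℕ} {e : ℕ → ℕ} (he : IsScale k Q e) (hQ : 0 < Q) (hk : 0 < k) :
    ∃ s τ : ℕ → ℕ, (∀ i, τ i ∈ foldSums e k) ∧ (∀ i, 8 * (s i + τ i) ≤ e (i + 2)) ∧
      (∀ i, ∀ x ∈ removed e k (s i + τ i) (τ i), e (i + 1) ≤ 2 * x) ∧
      (∀ i, e (i + 1) ≤ s i + τ i) ∧
      (∀ b N, ∃ i ≥ N, τ i = e b ∧ s i = 1 + (k + 1) * (Q * e (i + 1))) ∧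
      ∀ a ∉ Set.range e, ∀ N, ∃ i ≥ N, s i = a := by
  classical
  let a : ℕ → ℕ := fun i => (Nat.unpair i).1
  have ha : ∀ i, a i ≤ e (i + 1) := fun i =>
    ((Nat.unpair_left_le i).trans (he.strictMono hQ).le_apply).trans
      ((he.strictMono hQ) (Nat.lt_succ_self i)).le
  have hinf : ∀ b N, ∃ i ≥ N, a i = b := fun b N =>
    ⟨Nat.pair b N, Nat.right_le_pair b N, by simp [a]⟩
  have hkQ : k + 1 ≤ (k + 1) * Q := Nat.le_mul_of_pos_right _ hQ
  have hbig : ∀ i, 8 * (e (i + 1) + 1 + (k + 1) * Q * e (i + 1)) ≤ e (i + 2) := by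
    intro i
    have h1 := he.growth (i + 1)
    have h2 : e (i + 1) ≤ (k + 1) * Q * e (i + 1) := Nat.le_mul_of_pos_left _ (by positivity)
    rw [mul_assoc 16, mul_assoc 16, mul_add] at h1
    change _ ≤ e (i + 2) at h1
    omega
  refine ⟨fun i => if a i ∈ Set.range e then 1 + (k + 1) * (Q * e (i + 1)) else a i,
    fun i => if a i ∈ Set.range e then a i else k * e (i + 1), fun i => ?_, fun i => ?_,
    fun i x hx => ?_, fun i => ?_, fun b N => ?_, fun b hb N => ?_⟩
  · dsimp only
    split_ifs with h
    · obtain ⟨b, hb⟩ := h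
      exact hb ▸ mem_foldSums_of_zero he.zero hk b
    · exact mul_mem_foldSums e k _
  · dsimp only
    have := ha i
    have := hbig i
    have : k * e (i + 1) ≤ (k + 1) * Q * e (i + 1) := Nat.mul_le_mul_right _ (by omega)
    split_ifs with h
    · rw [← mul_assoc]
      omega
    · omega
  · obtain ⟨σ, hσ, hne, hx⟩ := hx
    dsimp only at hne hx
    have := ha i
    have h1 := hbig i
    have : k * e (i + 1) ≤ (k + 1) * Q * e (i + 1) := Nat.mul_le_mul_right _ (by omega)
    split_ifs at hx hne with h
    · rw [← mul_assoc] at hx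
      have h2 := he.foldSum_le hQ hσ (j := i + 1) (show σ < e (i + 2) by omega)
      have h3 : (k + 1) * e (i + 1) ≤ (k + 1) * Q * e (i + 1) := Nat.mul_le_mul_right _ hkQ
      rw [add_one_mul] at h3
      omega
    · have h2 := he.foldSum_add_le hQ hσ (j := i) (by omega) hne
      have h3 := he.sixteen_mul_le hQ i
      omega
  · dsimp only
    split_ifs with h
    · have : e (i + 1) ≤ (k + 1) * (Q * e (i + 1)) := by
        rw [← mul_assoc]
        exact Nat.le_mul_of_pos_left _ (by positivity)
      omega
    · have : e (i + 1) ≤ k * e (i + 1) := Nat.le_mul_of_pos_left _ hk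
      omega
  · obtain ⟨i, hi, hai⟩ := hinf (e b) N
    exact ⟨i, hi, by simp [hai], by simp [hai]⟩
  · obtain ⟨i, hi, hai⟩ := hinf b N
    exact ⟨i, hi, by simp only [hai, if_neg hb]⟩

theorem countingFn_le_card {A : Set ℕ} {n : ℕ} (F : Finset ℕ) (h : ∀ x ∈ A, x ≤ n → x ∈ F) :
    countingFn A n ≤ F.card := by
  rw [countingFn, ← Set.ncard_coe_finset]
  exact Set.ncard_le_ncard (fun x hx => h x hx.1 hx.2.2) F.finite_toSet

theorem countingFn_le_add {A B Z : Set ℕ} (h : A ⊆ B ∪ Z) (n : ℕ) :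
    countingFn A n ≤ countingFn B n + countingFn Z n := by
  refine le_trans (Set.ncard_le_ncard ?_ ?_) (Set.ncard_union_le _ _)
  · rw [← Set.union_inter_distrib_right]
    exact Set.inter_subset_inter_left _ h
  · exact ((Set.finite_Icc 1 n).inter_of_right _).union ((Set.finite_Icc 1 n).inter_of_right _)

theorem countingFn_sparse_le {k Q : ℕ} {e s τ : ℕ → ℕ} (he : IsScale k Q e) (hQ : 0 < Q)
    (hlt : ∀ i, s i + τ i < e (i + 2))
    (hmin : ∀ i, ∀ x ∈ removed e k (s i + τ i) (τ i), e (i + 1) ≤ 2 * x) (n : ℕ) :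
    countingFn (Set.range e ∪ ⋃ i, removed e k (s i + τ i) (τ i)) n
      ≤ 2 * (Nat.log 2 n + 2) ^ (k + 1) := by
  set L := Nat.log 2 n + 2 with hL
  have hlog : ∀ i, e (i + 1) ≤ 2 * n → i + 1 < L := by
    intro i hi
    have h1 : 2 ^ i ≤ n := by
      have := he.two_pow_le hQ i
      rw [pow_succ] at this
      omega
    have := Nat.le_log_of_pow_le one_lt_two h1
    omega
  have hcard : ((Finset.range L).image e ∪ (Finset.univ : Finset (Fin L × (Fin k → Fin L))).image
      fun p => s p.1 + τ p.1 - ∑ j, e (p.2 j)).card ≤ L + L ^ (k + 1) := by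
    refine (Finset.card_union_le _ _).trans (add_le_add ?_ ?_)
    · simpa using Finset.card_image_le (s := Finset.range L) (f := e)
    · refine Finset.card_image_le.trans ?_
      simp [pow_succ, mul_comm]
  refine (countingFn_le_card _ ?_).trans (hcard.trans ?_)
  · rintro x (⟨i, rfl⟩ | hx) hxn
    · refine Finset.mem_union_left _ (Finset.mem_image_of_mem _ (Finset.mem_range.2 ?_))
      cases i with
      | zero => omega
      | succ i => exact hlog i (by omega)
    · obtain ⟨i, hx⟩ := Set.mem_iUnion.1 hx
      have hi := hlog i (by have := hmin i x hx; omega)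
      obtain ⟨σ, ⟨c, rfl⟩, -, hsum⟩ := hx
      have hc := he.index_le_of_sum_lt hQ (c := c) (j := i + 1)
        (lt_of_le_of_lt (by omega) (hlt i))
      refine Finset.mem_union_right _ (Finset.mem_image.2
        ⟨(⟨i, by omega⟩, fun j => ⟨c j, (hc j).trans_lt hi⟩), Finset.mem_univ _, ?_⟩)
      dsimp only
      omega
  · have : L ≤ L ^ (k + 1) := Nat.le_self_pow (by omega) L
    omega

theorem tendsto_log_pow_div (k : ℕ) :
    Tendsto (fun n : ℕ => ((2 * (Nat.log 2 n + 2) ^ k : ℕ) : ℝ) / n) atTop (nhds 0) := by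
  have h1 : Tendsto (fun L : ℕ => 8 * (((L + 2 : ℕ) : ℝ) ^ k / 2 ^ (L + 2))) atTop (nhds 0) := by
    have := (tendsto_pow_const_div_const_pow_of_one_lt k (one_lt_two (α := ℝ))).comp
      (tendsto_add_atTop_nat 2)
    simpa using this.const_mul 8
  have hlog : Tendsto (Nat.log 2) atTop atTop :=
    tendsto_atTop_atTop.2 fun b => ⟨2 ^ b, fun n hn => Nat.le_log_of_pow_le one_lt_two hn⟩
  refine squeeze_zero' (.of_forall fun n => by positivity) ?_ (h1.comp hlog)
  filter_upwards [eventually_ge_atTop 1] with n hn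
  have h2 : (2 : ℝ) ^ Nat.log 2 n ≤ n := by exact_mod_cast Nat.pow_log_le_self 2 (by omega)
  have h3 : (0 : ℝ) < 2 ^ Nat.log 2 n := by positivity
  simp only [Function.comp]
  calc ((2 * (Nat.log 2 n + 2) ^ k : ℕ) : ℝ) / n
      ≤ ((2 * (Nat.log 2 n + 2) ^ k : ℕ) : ℝ) / 2 ^ Nat.log 2 n := by gcongr
    _ = _ := by
      push_cast
      field_simp
      ring

theorem exists_sum_eq_add_foldSum {A : Set ℕ} {k : ℕ} {e : ℕ → ℕ} (he : Set.range e ⊆ A)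
    {s σ : ℕ} (hs : s ∈ A) (hσ : σ ∈ foldSums e k) :
    ∃ c : Fin (k + 1) → ℕ, (∀ i, c i ∈ A) ∧ ∑ i, c i = s + σ := by
  obtain ⟨d, rfl⟩ := hσ
  refine ⟨Fin.cons s fun j => e (d j), fun i => ?_, by simp [Fin.sum_univ_succ]⟩
  cases i using Fin.cases with
  | zero => simpa
  | succ i => exact he ⟨d i, by simp⟩

theorem exists_sum_eq_add_add {A : Set ℕ} {k : ℕ} (h0 : 0 ∈ A) (h1 : 1 ∈ A)
    {a b r : ℕ} (ha : a ∈ A) (hb : b ∈ A) (hr : r ≤ k) :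
    ∃ c : Fin (k + 2) → ℕ, (∀ i, c i ∈ A) ∧ ∑ i, c i = a + b + r := by
  refine ⟨Fin.cons a (Fin.cons b fun j : Fin k => if (j : ℕ) < r then 1 else 0), fun i => ?_, ?_⟩
  · cases i using Fin.cases with
    | zero => simpa
    | succ i =>
      cases i using Fin.cases with
      | zero => simpa
      | succ i => simp only [Fin.cons_succ]; split_ifs <;> assumption
  · have : ∑ j : Fin k, (if (j : ℕ) < r then 1 else 0) = r := by
      rw [← Finset.card_filter, Fin.card_filter_val_lt, min_eq_right hr]
    simp [Fin.sum_univ_succ, this, add_assoc]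

/-- A sum congruent to `1` of `k + 1` elements, each congruent to `0` or `1` modulo `k + 1`, has
exactly one summand congruent to `1`. -/
theorem exists_split_of_sum_mod_eq_one {k : ℕ} (hk : 0 < k) {B S : Set ℕ} {e : ℕ → ℕ}
    (hB : B ⊆ S ∪ Set.range e) (hS : ∀ s ∈ S, s % (k + 1) = 1) (he : ∀ i, k + 1 ∣ e i)
    {c : Fin (k + 1) → ℕ} (hc : ∀ i, c i ∈ B) (hsum : (∑ i, c i) % (k + 1) = 1) :
    ∃ s ∈ S, s ∈ B ∧ ∃ d : Fin k → ℕ, (∀ j, e (d j) ∈ B) ∧ s + ∑ j, e (d j) = ∑ i, c i := by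
  classical
  set F := Finset.univ.filter fun i => c i ∈ S with hF
  have hE : ∀ i, c i ∉ S → c i ∈ Set.range e := fun i hi => (hB (hc i)).resolve_left hi
  have hmod : F.card ≡ 1 [MOD k + 1] := by
    have h1 : ∑ i, c i ≡ ∑ i, (if c i ∈ S then 1 else 0) [MOD k + 1] := by
      refine Nat.ModEq.sum fun i _ => ?_
      split_ifs with h
      · rw [Nat.ModEq, hS _ h, Nat.mod_eq_of_lt (by omega)]
      · obtain ⟨b, hb⟩ := hE i h
        exact hb ▸ (Nat.modEq_zero_iff_dvd.2 (he b))
    rw [← Finset.card_filter] at h1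
    refine h1.symm.trans ?_
    rw [Nat.ModEq, hsum, Nat.mod_eq_of_lt (by omega)]
  have hle : F.card ≤ k + 1 := by simpa using Finset.card_le_univ F
  have hone : F.card = 1 := by
    rw [Nat.ModEq, Nat.mod_eq_of_lt (show 1 < k + 1 by omega)] at hmod
    rcases hle.lt_or_eq with h | h
    · rwa [Nat.mod_eq_of_lt h] at hmod
    · rw [h, Nat.mod_self] at hmod
      omega
  obtain ⟨i₀, hi₀⟩ := Finset.card_eq_one.1 hone
  have hiff : ∀ i, c i ∈ S ↔ i = i₀ := fun i => by
    rw [← Finset.mem_singleton, ← hi₀, hF]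
    simp
  choose d hd using fun j => hE (i₀.succAbove j) fun h => i₀.succAbove_ne j ((hiff _).1 h)
  refine ⟨c i₀, (hiff _).2 rfl, hc i₀, d, fun j => hd j ▸ hc _, ?_⟩
  rw [Fin.sum_univ_succAbove c i₀]
  simp only [hd]

theorem exists_add_eq_of_sparse {k Q : ℕ} (hQ : 0 < Q) {T : ℕ → Prop} {S Z : Set ℕ}
    (hT₁ : ∀ y, Q ∣ y → T y) (hT₂ : ∀ y, y % Q ^ 2 < Q → T y)
    (hS : ∀ y, T y → 1 + (k + 1) * y ∉ Z → 1 + (k + 1) * y ∈ S)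
    (hZ : Tendsto (fun n : ℕ => (countingFn Z n : ℝ) / n) atTop (nhds 0)) :
    ∀ᶠ y in atTop, ∃ u v, u + v = y ∧ 1 + (k + 1) * u ∈ S ∧ 1 + (k + 1) * v ∈ S := by
  classical
  have hQ2 : 0 < Q ^ 2 := by positivity
  have hQR : (0 : ℝ) < Q := by exact_mod_cast hQ
  have hsparse : ∀ᶠ y : ℕ in atTop, 2 * countingFn Z (1 + (k + 1) * y) < y / Q ^ 2 := by
    have hlin : Tendsto (fun y : ℕ => 1 + (k + 1) * y) atTop atTop :=
      tendsto_atTop_mono (fun y => show y ≤ 1 + (k + 1) * y by nlinarith) tendsto_id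
    have hε : (0 : ℝ) < 1 / (4 * Q ^ 2 * (k + 2)) := by positivity
    filter_upwards [(hZ.comp hlin).eventually_lt_const hε, eventually_ge_atTop (2 * Q ^ 2 + 1)]
      with y hy hy'
    simp only [Function.comp] at hy
    have hy1 : (2 * Q ^ 2 + 1 : ℝ) ≤ y := by exact_mod_cast hy'
    rw [div_lt_div_iff₀ (by positivity) (by positivity)] at hy
    push_cast at hy
    have hpos : (1 : ℝ) ≤ y := by nlinarith [sq_nonneg (Q : ℝ)]
    have h2 : (countingFn Z (1 + (k + 1) * y) : ℝ) * (4 * Q ^ 2) < y := by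
      have hk : (0 : ℝ) < k + 2 := by positivity
      refine lt_of_mul_lt_mul_right ?_ hk.le
      nlinarith
    have h3 : countingFn Z (1 + (k + 1) * y) * (4 * Q ^ 2) < y := by exact_mod_cast h2
    rw [Nat.lt_iff_add_one_le, Nat.le_div_iff_mul_le hQ2]
    nlinarith
  filter_upwards [hsparse] with y hy
  by_contra! hno
  have hbound : ∀ l ∈ Finset.range (y / Q ^ 2), y % Q + Q ^ 2 * l ≤ y := by
    intro l hl
    have h1 : l + 1 ≤ y / Q ^ 2 := Finset.mem_range.1 hl
    rw [Nat.le_div_iff_mul_le hQ2] at h1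
    have h2 := Nat.mod_lt y hQ
    nlinarith
  have hcard : ∀ f : ℕ → ℕ, Set.InjOn f (Finset.range (y / Q ^ 2)) →
      (∀ l ∈ Finset.range (y / Q ^ 2), f l ≤ y) →
      ((Finset.range (y / Q ^ 2)).filter fun l => 1 + (k + 1) * f l ∈ Z).card
        ≤ countingFn Z (1 + (k + 1) * y) := by
    intro f hf hfy
    rw [← Set.ncard_coe_finset, countingFn]
    refine Set.ncard_le_ncard_of_injOn (fun l => 1 + (k + 1) * f l) ?_ ?_
      ((Set.finite_Icc _ _).inter_of_right _)
    · intro l hl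
      obtain ⟨hl, hlZ⟩ := Finset.mem_filter.1 (Finset.mem_coe.1 hl)
      exact ⟨hlZ, by simp, by have := hfy l hl; gcongr⟩
    · intro l hl l' hl' hll'
      have h1 := (Finset.mem_filter.1 (Finset.mem_coe.1 hl)).1
      have h2 := (Finset.mem_filter.1 (Finset.mem_coe.1 hl')).1
      refine hf h1 h2 (Nat.eq_of_mul_eq_mul_left (Nat.succ_pos k) ?_)
      simpa using hll'
  have hall : Finset.range (y / Q ^ 2) ⊆
      ((Finset.range (y / Q ^ 2)).filter fun l => 1 + (k + 1) * (y % Q + Q ^ 2 * l) ∈ Z) ∪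
      ((Finset.range (y / Q ^ 2)).filter fun l => 1 + (k + 1) * (y - (y % Q + Q ^ 2 * l)) ∈ Z) := by
    intro l hl
    by_contra hmem
    simp only [Finset.mem_union, Finset.mem_filter, hl, true_and, not_or] at hmem
    refine hno (y % Q + Q ^ 2 * l) (y - (y % Q + Q ^ 2 * l)) (by have := hbound l hl; omega)
      (hS _ (hT₂ _ ?_) hmem.1) (hS _ (hT₁ _ ?_) hmem.2)
    · rw [Nat.add_mul_mod_self_left]
      exact (Nat.mod_le _ _).trans_lt (Nat.mod_lt y hQ)
    · rw [← Nat.sub_sub]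
      exact Nat.dvd_sub (Nat.dvd_sub_mod y) (Dvd.intro_left _ (by ring : Q * l * Q = _))
  have h1 := (Finset.card_le_card hall).trans (Finset.card_union_le _ _)
  have h2 := hcard (fun l => y % Q + Q ^ 2 * l)
    (fun l _ l' _ hll' => by simpa [hQ.ne'] using hll') hbound
  have h3 := hcard (fun l => y - (y % Q + Q ^ 2 * l)) (fun l hl l' hl' hll' => by
    have h4 := hbound l (Finset.mem_coe.1 hl)
    have h5 := hbound l' (Finset.mem_coe.1 hl')
    dsimp only at hll'
    exact Nat.eq_of_mul_eq_mul_left hQ2 (by omega)) (fun l _ => Nat.sub_le _ _)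
  rw [Finset.card_range] at h1
  omega

theorem IsScale.exists_dvd_eq {k Q t : ℕ} {e : ℕ → ℕ} (he : IsScale k Q e) (hQ : Q = t * k + 1)
    {y p : ℕ} (hp : p ≡ t * (Q - 1) * y [MOD Q]) (hle : 2 * (k * e p) ≤ 1 + (k + 1) * y) :
    ∃ z, Q ∣ z ∧ 1 + (k + 1) * y = k * e p + (1 + (k + 1) * z) := by
  obtain ⟨g, hg, hgp⟩ := he.residue p
  have hgy : k * g ≤ y := by
    by_contra! hlt
    have : (k + 1) * (y + 1) ≤ (k + 1) * (k * g) := Nat.mul_le_mul_left _ hlt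
    rw [hg] at hle
    nlinarith
  refine ⟨y - k * g, ?_, ?_⟩
  · rw [← Nat.modEq_iff_dvd' hgy]
    have h1 : k * g ≡ k * (t * (Q - 1) * y) [MOD Q] :=
      Nat.ModEq.mul_left k (Nat.ModEq.trans hgp hp)
    refine h1.trans ?_
    subst hQ
    rw [Nat.add_sub_cancel]
    refine Nat.modEq_iff_dvd.2 ⟨(1 - t * k) * y, ?_⟩
    push_cast
    ring
  · obtain ⟨d, rfl⟩ := Nat.exists_eq_add_of_le hgy
    rw [hg, Nat.add_sub_cancel_left]
    ring

/-- The congruence class `1` modulo `k + 1` is covered by `S` and the sums of `k` terms of `e`. -/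
theorem IsScale.exists_add_foldSum_eq {k Q t : ℕ} {e s τ : ℕ → ℕ} (he : IsScale k Q e)
    (hQ : Q = t * k + 1) {T : ℕ → Prop} {S : Set ℕ} (hT : ∀ y, Q ∣ y → T y)
    (hτ : ∀ i, τ i ∈ foldSums e k) (hlt : ∀ i, 8 * (s i + τ i) ≤ e (i + 2))
    (hmin : ∀ i, ∀ x ∈ removed e k (s i + τ i) (τ i), e (i + 1) ≤ 2 * x)
    (hS : ∀ y, T y → 1 + (k + 1) * y ∉ S →
      ∃ i, s i ∈ S ∧ 1 + (k + 1) * y ∈ removed e k (s i + τ i) (τ i)) :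
    ∀ᶠ y in atTop, ∃ x ∈ S, ∃ σ ∈ foldSums e k, x + σ = 1 + (k + 1) * y := by
  have hQ0 : 0 < Q := by omega
  filter_upwards [eventually_ge_atTop (2 * (k * e (2 * Q)))] with y hy
  by_contra! hno
  have hyn : y ≤ 1 + (k + 1) * y := by nlinarith
  obtain ⟨n, hn⟩ : ∃ n, 1 + (k + 1) * y = n := ⟨_, rfl⟩
  have hstage : ∀ p ≤ 2 * Q, p ≡ t * (Q - 1) * y [MOD Q] →
      ∃ i, ∃ x ∈ removed e k (s i + τ i) (τ i), s i ∈ S ∧ n = k * e p + x ∧ n ≤ 2 * x := by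
    intro p hp hpm
    have hep : k * e p ≤ k * e (2 * Q) :=
      Nat.mul_le_mul_left _ ((he.strictMono hQ0).monotone hp)
    obtain ⟨z, hz, hyz⟩ := he.exists_dvd_eq hQ hpm (by omega)
    obtain ⟨i, hi, hx⟩ := hS z (hT z hz) fun hzS =>
      hno _ hzS _ (mul_mem_foldSums e k p) (by rw [hyz, add_comm])
    exact ⟨i, _, hx, hi, by omega, by omega⟩
  set p := t * (Q - 1) * y % Q with hp
  have hpQ : p < Q := Nat.mod_lt _ hQ0
  obtain ⟨i, x, hx, hi, hnx, hx2⟩ := hstage p (by omega) (Nat.mod_modEq _ _)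
  obtain ⟨i', x', hx', hi', hnx', hx2'⟩ := hstage (p + Q) (by omega)
    ((Nat.add_mod_right _ _).trans (Nat.mod_modEq _ _))
  have hsame : ∀ i i' x x', x ∈ removed e k (s i + τ i) (τ i) →
      x' ∈ removed e k (s i' + τ i') (τ i') → n ≤ 2 * x → x' ≤ n → ¬ i < i' := by
    intro i i' x x' hx hx' hnx hxn hii
    have h1 := hlt i
    have h2 := hmin i' x' hx'
    have h3 : e (i + 2) ≤ e (i' + 1) := (he.strictMono hQ0).monotone (by omega)
    obtain ⟨σ, -, -, hσ⟩ := hx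
    omega
  obtain rfl : i = i' := le_antisymm
    (not_lt.1 (hsame i' i x' x hx' hx hx2' (by omega)))
    (not_lt.1 (hsame i i' x x' hx hx' hx2 (by omega)))
  obtain ⟨σ, hσ, hne, hsum⟩ := hx
  obtain ⟨σ', hσ', -, hsum'⟩ := hx'
  have hσp := he.eq_mul_of_add_eq hQ0 (p := p) (q := p + Q) (by omega) hσ hσ' (by omega)
  exact hno _ hi _ (hτ i) (by omega)

theorem IsScale.isAsymptoticBasis {k Q t : ℕ} {e s τ : ℕ → ℕ} (he : IsScale k Q e) (hk : 0 < k)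
    (hQ : Q = t * k + 1) {T : ℕ → Prop} {S : Set ℕ} (hT₁ : ∀ y, Q ∣ y → T y)
    (hT₂ : ∀ y, y % Q ^ 2 < Q → T y)
    (hτ : ∀ i, τ i ∈ foldSums e k) (hlt : ∀ i, 8 * (s i + τ i) ≤ e (i + 2))
    (hmin : ∀ i, ∀ x ∈ removed e k (s i + τ i) (τ i), e (i + 1) ≤ 2 * x)
    (hS : ∀ y, T y → 1 + (k + 1) * y ∉ S →
      ∃ i, s i ∈ S ∧ 1 + (k + 1) * y ∈ removed e k (s i + τ i) (τ i))
    (hZ : Tendsto (fun n : ℕ => (countingFn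
      (Set.range e ∪ ⋃ i, removed e k (s i + τ i) (τ i)) n : ℝ) / n) atTop (nhds 0)) :
    IsAsymptoticBasisOfOrder (S ∪ Set.range e) (k + 1) := by
  have hQ0 : 0 < Q := by omega
  have h0 : 0 ∈ S ∪ Set.range e := Or.inr ⟨0, he.zero⟩
  have h1 : 1 ∈ S ∪ Set.range e := by
    refine Or.inl ?_
    by_contra h
    obtain ⟨i, -, hi⟩ := hS 0 (hT₁ 0 (dvd_zero _)) (by simpa using h)
    have h2 := hmin i _ hi
    have h3 := he.sixteen_mul_le hQ0 i
    omega
  obtain ⟨N₁, hN₁⟩ := eventually_atTop.1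
    (he.exists_add_foldSum_eq hQ hT₁ hτ hlt hmin hS)
  obtain ⟨N₂, hN₂⟩ := eventually_atTop.1 (exists_add_eq_of_sparse hQ0 hT₁ hT₂
    (fun y hy hyZ => by
      by_contra hyS
      obtain ⟨i, -, hi⟩ := hS y hy hyS
      exact hyZ (Or.inr (Set.mem_iUnion.2 ⟨i, hi⟩))) hZ)
  refine eventually_atTop.2 ⟨(k + 1) * (N₁ + N₂ + 1) + 2, fun n hn => ?_⟩
  obtain ⟨y, r, hr, hy, rfl⟩ : ∃ y r, r ≤ k ∧ N₁ + N₂ ≤ y ∧ n = 1 + (k + 1) * y + r := by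
    refine ⟨(n - 1) / (k + 1), (n - 1) % (k + 1),
      Nat.lt_succ_iff.1 (Nat.mod_lt _ (Nat.succ_pos k)), ?_, ?_⟩
    · rw [Nat.le_div_iff_mul_le (Nat.succ_pos k)]
      nlinarith [Nat.sub_add_cancel (show 1 ≤ n by omega)]
    · have := Nat.div_add_mod (n - 1) (k + 1)
      omega
  rcases Nat.eq_zero_or_pos r with rfl | hr0
  · obtain ⟨x, hx, σ, hσ, hsum⟩ := hN₁ y (by omega)
    rw [add_zero, ← hsum]
    exact exists_sum_eq_add_foldSum Set.subset_union_right (Or.inl hx) hσ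
  · obtain ⟨u, v, rfl, hu, hv⟩ := hN₂ y (by omega)
    obtain ⟨k, rfl⟩ := Nat.exists_eq_succ_of_ne_zero hk.ne'
    obtain ⟨r, rfl⟩ := Nat.exists_eq_succ_of_ne_zero hr0.ne'
    obtain ⟨c, hc, hsum⟩ := exists_sum_eq_add_add h0 h1 (Or.inl hu) (Or.inl hv)
      (show r ≤ k by omega)
    refine ⟨c, hc, hsum.trans ?_⟩
    rw [mul_add, Nat.succ_eq_add_one]
    omega

theorem IsScale.not_isAsymptoticBasis_of_ssubset {k Q : ℕ} {e s τ : ℕ → ℕ} (he : IsScale k Q e)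
    (hk : 0 < k) (hQ : 0 < Q) {T : ℕ → Prop} {S : Set ℕ} (hT : ∀ y, Q ∣ y → T y)
    (hlt : ∀ i, 8 * (s i + τ i) ≤ e (i + 2)) (hτ : ∀ i, τ i ∈ foldSums e k)
    (hlarge : ∀ i, e (i + 1) ≤ s i + τ i)
    (hmin : ∀ i, ∀ x ∈ removed e k (s i + τ i) (τ i), e (i + 1) ≤ 2 * x)
    (hSe : ∀ b N, ∃ i ≥ N, τ i = e b ∧ s i = 1 + (k + 1) * (Q * e (i + 1)))
    (hSs : ∀ a ∉ Set.range e, ∀ N, ∃ i ≥ N, s i = a)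
    (hS : ∀ x, x ∈ S ↔ x ∈ {x | ∃ y, T y ∧ x = 1 + (k + 1) * y} ∧
      ∀ i, s i ∈ S → x ∉ removed e k (s i + τ i) (τ i))
    {B : Set ℕ} (hB : B ⊂ S ∪ Set.range e) : ¬ IsAsymptoticBasisOfOrder B (k + 1) := by
  intro hbasis
  obtain ⟨N, hN⟩ := eventually_atTop.1 hbasis
  obtain ⟨a, haA, haB⟩ := Set.exists_of_ssubset hB
  have hmod : ∀ x ∈ S, x % (k + 1) = 1 := by
    intro x hx
    obtain ⟨y, -, rfl⟩ := ((hS x).1 hx).1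
    rw [Nat.add_mul_mod_self_left, Nat.mod_eq_of_lt (by omega)]
  have hforced : ∀ i, s i ∈ S → N ≤ i → s i ∈ B ∧ ∃ d : Fin k → ℕ,
      (∀ j, e (d j) ∈ B) ∧ ∑ j, e (d j) = τ i := by
    intro i hi hNi
    have h1 : i + 1 ≤ e (i + 1) := (he.strictMono hQ).le_apply
    have h2 := hlarge i
    obtain ⟨c, hc, hsum⟩ := hN (s i + τ i) (by omega)
    obtain ⟨x, hxS, hxB, d, hd, hxd⟩ := exists_split_of_sum_mod_eq_one hk hB.subset hmod he.dvd hc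
      (by
        obtain ⟨m, hm⟩ := he.dvd_of_mem_foldSums (hτ i)
        rw [hsum, hm, Nat.add_mul_mod_self_left, hmod _ hi])
    have hdτ : ∑ j, e (d j) = τ i := by
      by_contra hne
      exact ((hS x).1 hxS).2 i hi ⟨_, ⟨d, rfl⟩, hne, by rw [hxd, hsum]⟩
    obtain rfl : x = s i := by omega
    exact ⟨hxB, d, hd, hdτ⟩
  by_cases ha : a ∈ Set.range e
  · obtain ⟨b, rfl⟩ := ha
    obtain ⟨i, hi, hτi, hsi⟩ := hSe b N
    have hsS : s i ∈ S := by
      refine (hS _).2 ⟨⟨_, hT _ (dvd_mul_right _ _), hsi⟩, fun j _ hj => ?_⟩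
      rcases lt_trichotomy i j with hij | rfl | hij
      · have h1 := hlt i
        have h2 := hmin j _ hj
        have h3 : e (i + 2) ≤ e (j + 1) := (he.strictMono hQ).monotone (by omega)
        omega
      · obtain ⟨σ, -, hne, hσ⟩ := hj
        omega
      · have h1 := hlt j
        have h2 : e (j + 2) ≤ e (i + 1) := (he.strictMono hQ).monotone (by omega)
        have h3 : e (i + 1) ≤ (k + 1) * (Q * e (i + 1)) := by
          rw [← mul_assoc]
          exact Nat.le_mul_of_pos_left _ (by positivity)
        obtain ⟨σ, -, -, hσ⟩ := hj
        omega
    obtain ⟨-, d, hd, hdτ⟩ := hforced i hsS hi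
    obtain ⟨j, hj⟩ := he.exists_eq_of_sum_eq hQ hk (hdτ.trans hτi)
    exact haB (hj ▸ hd j)
  · obtain ⟨i, hi, rfl⟩ := hSs a ha N
    exact haB (hforced i (haA.resolve_right ha) hi).1

theorem countingFn_one_add_mul (T : ℕ → Prop) [DecidablePred T] (k n : ℕ) :
    countingFn {x | ∃ y, T y ∧ x = 1 + (k + 1) * y} n = Nat.count T ((n + k) / (k + 1)) := by
  rw [Nat.count_eq_card_filter_range, countingFn,
    ← Finset.card_image_of_injective (f := fun y => 1 + (k + 1) * y) _
      (fun y z hyz => by simpa using hyz), ← Set.ncard_coe_finset]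
  congr 1
  ext x
  have hiff : ∀ y, y < (n + k) / (k + 1) ↔ 1 + (k + 1) * y ≤ n := by
    intro y
    rw [Nat.lt_iff_add_one_le, Nat.le_div_iff_mul_le (Nat.succ_pos k)]
    constructor <;> intro h <;> nlinarith
  simp only [Set.mem_inter_iff, Set.mem_ofPred_eq, Set.mem_Icc, Finset.coe_image, Set.mem_image,
    Finset.coe_filter, Finset.mem_range, hiff]
  constructor
  · rintro ⟨⟨y, hy, rfl⟩, -, hn⟩
    exact ⟨y, ⟨hn, hy⟩, rfl⟩
  · rintro ⟨y, ⟨hn, hy⟩, rfl⟩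
    exact ⟨⟨y, hy, rfl⟩, by omega, hn⟩

theorem tendsto_countingFn_one_add_mul (T : ℕ → Prop) [DecidablePred T] (k : ℕ) {β C : ℝ}
    (hT : ∀ y, |(Nat.count T y : ℝ) - β * y| ≤ C) :
    Tendsto (fun n : ℕ => (countingFn {x | ∃ y, T y ∧ x = 1 + (k + 1) * y} n : ℝ) / n) atTop
      (nhds (β / (k + 1))) := by
  have hk : (0 : ℝ) < k + 1 := by positivity
  have hbound : Tendsto (fun n : ℕ => (C + |β|) / n) atTop (nhds 0) :=
    tendsto_const_div_atTop_nhds_zero_nat _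
  rw [tendsto_iff_dist_tendsto_zero]
  refine squeeze_zero' (.of_forall fun n => dist_nonneg) ?_ hbound
  filter_upwards [eventually_ge_atTop 1] with n hn
  have hn0 : (0 : ℝ) < n := by exact_mod_cast hn
  rw [countingFn_one_add_mul, Real.dist_eq]
  set z := (n + k) / (k + 1) with hz
  have h1 : z * (k + 1) ≤ n + k := Nat.div_mul_le_self _ _
  have h2 : n ≤ z * (k + 1) := by
    have := Nat.lt_div_mul_add (a := n + k) (Nat.succ_pos k)
    rw [Nat.succ_eq_add_one, ← hz] at this
    omega
  have h3 : |(z : ℝ) - n / (k + 1)| ≤ 1 := by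
    have h1' : (z : ℝ) * (k + 1) ≤ n + k := by exact_mod_cast h1
    have h2' : (n : ℝ) ≤ z * (k + 1) := by exact_mod_cast h2
    have h4 : (z : ℝ) - n / (k + 1) = (z * (k + 1) - n) / (k + 1) := by field_simp
    rw [h4, abs_of_nonneg (div_nonneg (by linarith) hk.le), div_le_one hk]
    linarith
  have h4 : (Nat.count T z : ℝ) / n - β / (k + 1)
      = (((Nat.count T z : ℝ) - β * z) + β * (z - n / (k + 1))) / n := by
    field_simp
    ring
  rw [h4, abs_div, abs_of_pos hn0]
  gcongr
  refine (abs_add_le _ _).trans (add_le_add (hT z) ?_)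
  rw [abs_mul]
  exact mul_le_of_le_one_right (abs_nonneg _) h3

theorem tendsto_countingFn_of_sparse {A B Z : Set ℕ} {α : ℝ} (hAB : A ⊆ B ∪ Z) (hBA : B ⊆ A ∪ Z)
    (hZ : Tendsto (fun n : ℕ => (countingFn Z n : ℝ) / n) atTop (nhds 0))
    (hB : Tendsto (fun n : ℕ => (countingFn B n : ℝ) / n) atTop (nhds α)) :
    Tendsto (fun n : ℕ => (countingFn A n : ℝ) / n) atTop (nhds α) := by
  refine tendsto_of_tendsto_of_tendsto_of_le_of_le (by simpa using hB.sub hZ)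
    (by simpa using hB.add hZ) (fun n => ?_) fun n => ?_
  · dsimp only
    rw [← sub_div]
    have : (countingFn B n : ℝ) ≤ countingFn A n + countingFn Z n := by
      exact_mod_cast countingFn_le_add hBA n
    gcongr
    linarith
  · dsimp only
    rw [← add_div]
    have : (countingFn A n : ℝ) ≤ countingFn B n + countingFn Z n := by
      exact_mod_cast countingFn_le_add hAB n
    gcongr

theorem erdos_nathanson_minimal_basis_density_alpha (h : ℕ) (hh : 2 ≤ h)
    (α : ℝ) (hα0 : 0 < α) (hα1 : α < 1 / (2 * (h : ℝ) - 2)) :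
    ∃ A : Set ℕ, IsMinimalAsymptoticBasisOfOrder A h ∧
      Tendsto (fun n : ℕ => (countingFn A n : ℝ) / (n : ℝ)) atTop (nhds α) := by
  obtain ⟨k, rfl⟩ : ∃ k, h = k + 1 := ⟨h - 1, by omega⟩
  have hk : 0 < k := by omega
  have hkR : (1 : ℝ) ≤ k := by exact_mod_cast hk
  have hβ0 : 0 < (k + 1) * α := by positivity
  have hβ1 : (k + 1) * α ≤ 1 := by
    push_cast at hα1
    rw [lt_div_iff₀ (by linarith)] at hα1
    nlinarith
  obtain ⟨t, ht⟩ := exists_nat_ge (2 / ((k + 1) * α))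
  obtain ⟨Q, hQ⟩ : ∃ Q, Q = t * k + 1 := ⟨_, rfl⟩
  have hQ0 : 0 < Q := by omega
  have hQβ : 2 / (Q : ℝ) ≤ (k + 1) * α := by
    have htQ : (t : ℝ) ≤ Q := by
      have : t ≤ Q := by nlinarith
      exact_mod_cast this
    rw [div_le_iff₀ hβ0] at ht
    rw [div_le_iff₀ (by exact_mod_cast hQ0)]
    nlinarith
  obtain ⟨T, _, C, hT₁, hT₂, hT⟩ := exists_superset_mod _ hβ1 Q hQ0 hQβ
  obtain ⟨e, he⟩ := exists_isScale k Q hQ0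
  obtain ⟨s, τ, hτ, hlt, hmin, hlarge, hSe, hSs⟩ := exists_stages he hQ0 hk
  have hpos : ∀ i, 0 < e (i + 1) := fun i => by have := he.sixteen_mul_le hQ0 i; omega
  obtain ⟨S, hS⟩ := exists_set_surviving {x | ∃ y, T y ∧ x = 1 + (k + 1) * y} s
    (fun i => removed e k (s i + τ i) (τ i))
    (fun i ⟨σ, _, hne, hσ⟩ => hne (by omega))
    (fun i j hij hj => by
      have h1 := hlt i
      have h2 := hmin j _ hj
      have h3 : e (i + 2) ≤ e (j + 1) := (he.strictMono hQ0).monotone (by omega)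
      have h4 := hpos j
      omega)
  have hremoved : ∀ y, T y → 1 + (k + 1) * y ∉ S →
      ∃ i, s i ∈ S ∧ 1 + (k + 1) * y ∈ removed e k (s i + τ i) (τ i) := by
    intro y hy hyS
    by_contra! hno
    exact hyS ((hS _).2 ⟨⟨y, hy, rfl⟩, hno⟩)
  have hZ : Tendsto (fun n : ℕ => (countingFn
      (Set.range e ∪ ⋃ i, removed e k (s i + τ i) (τ i)) n : ℝ) / n) atTop (nhds 0) := by
    refine squeeze_zero (fun n => by positivity) (fun n => ?_) (tendsto_log_pow_div (k + 1))
    have := countingFn_sparse_le he hQ0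
      (fun i => by have := hlt i; have : 0 < e (i + 2) := hpos (i + 1); omega) hmin n
    gcongr
  refine ⟨S ∪ Set.range e, ⟨he.isAsymptoticBasis hk hQ hT₁ hT₂ hτ hlt hmin hremoved hZ,
    fun B hB => he.not_isAsymptoticBasis_of_ssubset hk hQ0 hT₁ hlt hτ hlarge hmin hSe hSs hS hB⟩,
    tendsto_countingFn_of_sparse ?_ ?_ hZ
      (by simpa [mul_div_cancel_left₀ α (by positivity : (k + 1 : ℝ) ≠ 0)] using
        tendsto_countingFn_one_add_mul T k hT)⟩
  · rintro x (hx | hx)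
    · exact Or.inl ((hS x).1 hx).1
    · exact Or.inr (Or.inl hx)
  · rintro x ⟨y, hy, rfl⟩
    by_cases hyS : 1 + (k + 1) * y ∈ S
    · exact Or.inl (Or.inl hyS)
    · obtain ⟨i, -, hi⟩ := hremoved y hy hyS
      exact Or.inr (Or.inr (Set.mem_iUnion.2 ⟨i, hi⟩))
end
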